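/- arXiv:1802.09751 — 9 statements merged into one kernel-verified Lean document; each statement's English description precedes it below -/
import Mathlib

section
/- Let m ≥ 4 and let x_1, …, x_m be distinct points of ℝ² in strictly convex position, listed in cyclic order around their convex hull. Let X = {x_1, …, x_m} and let H be the set of functions f : X → {0,1} for which there exist w ∈ ℝ² and b ∈ ℝ with f(x) = 1[w·x + b > 0] for all x ∈ X, and such that (Σ_{x∈X} f(x))/m ∈ [1/4, 3/4]. Then the problem (H, X) is 3-split-neighborly. -/
/-!
The vertices are read as a sequence `y : ℕ → ℝ²` of period `m`. The supporting lines of the edges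
say that `D (y s) (y (s + 1)) (y t)` (twice a signed area) has the same sign for all `s` and all
other vertices `y t`; after normalising that sign to be positive, the Plücker relation upgrades this
to every triple in cyclic order (`orient_pos`). Hence an affine function cannot be `≤ 0`, `> 0`,
`≤ 0`, `> 0` at four vertices in cyclic order (`no_alternation`), so a linear classifier with value
`0` at `a` and `1` at `a + 1` has as positive set an arc that starts at `a + 1` and stops before `a`.

Such arcs are determined by their last vertex. If `V` is a set of `n ≥ 2` of them, the number of
members of `V` containing `a + t` falls from `n` at `t = 1` to `0` at `t = m`, by at most one at each
step, so at the first `t` where it is at most `2n/3` it is still at least `n/3` (`exists_split`).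
Thus every `a → a + 1` is an edge, and these edges form a directed cycle through all tests.
-/

/-- Dot product on `ℝ²`. -/
def dot2 (w v : Fin 2 → ℝ) : ℝ := w 0 * v 0 + w 1 * v 1

/-- Twice the signed area of the triangle `p q r`. -/
def D (p q r : Fin 2 → ℝ) : ℝ :=
  (q 0 - p 0) * (r 1 - p 1) - (q 1 - p 1) * (r 0 - p 0)

/-- If a line through `p ≠ q` has `r` and `s` strictly on one side, then the triangles `p q r` and
`p q s` have the same orientation. -/
lemma same_side {p q r s w : Fin 2 → ℝ} {b : ℝ}
    (hp : dot2 w p + b = 0) (hq : dot2 w q + b = 0)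
    (hr : dot2 w r + b < 0) (hs : dot2 w s + b < 0) (hpq : p ≠ q) :
    0 < D p q r * D p q s := by
  unfold dot2 at *
  set d0 := q 0 - p 0 with hd0
  set d1 := q 1 - p 1 with hd1
  have hd : 0 < d0 ^ 2 + d1 ^ 2 := by
    by_contra h
    have h0 : d0 = 0 := by nlinarith [sq_nonneg d0, sq_nonneg d1]
    have h1 : d1 = 0 := by nlinarith [sq_nonneg d0, sq_nonneg d1]
    apply hpq
    funext i
    fin_cases i
    · simp; linarith
    · simp; linarith
  have hwd : w 0 * d0 + w 1 * d1 = 0 := by rw [hd0, hd1]; linarith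
  -- `w` is normal to `q - p`, so `(w·v + b) |q - p|²` is a fixed multiple of `D p q v`.
  have key : ∀ v : Fin 2 → ℝ, (w 1 * d0 - w 0 * d1) * D p q v =
      (d0 ^ 2 + d1 ^ 2) * (w 0 * v 0 + w 1 * v 1 + b) := by
    intro v
    have hb : b = -(w 0 * p 0 + w 1 * p 1) := by linarith
    unfold D
    rw [← hd0, ← hd1, hb]
    linear_combination
      (-d0 * (v 0 - p 0) - d1 * (v 1 - p 1)) * hwd
  have hmul := mul_pos_of_neg_of_neg
    (by rw [key r]; exact mul_neg_of_pos_of_neg hd hr : (w 1 * d0 - w 0 * d1) * D p q r < 0)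
    (by rw [key s]; exact mul_neg_of_pos_of_neg hd hs : (w 1 * d0 - w 0 * d1) * D p q s < 0)
  have h2 : 0 < (w 1 * d0 - w 0 * d1) ^ 2 * (D p q r * D p q s) := by linarith
  exact pos_of_mul_pos_right h2 (sq_nonneg _)

/-- If all triples with two consecutive vertices have the orientation given by the sign of `σ`, then
so do all triples in cyclic order. -/
lemma orient_pos {m : ℕ} {y : ℕ → Fin 2 → ℝ} {σ : ℝ}
    (hE : ∀ s t, t % m ≠ s % m → t % m ≠ (s + 1) % m → 0 < σ * D (y s) (y (s + 1)) (y t))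
    {a j k : ℕ} (haj : a < j) (hjk : j < k) (hk : k < a + m) :
    0 < σ * D (y a) (y j) (y k) := by
  have hne : ∀ {u v : ℕ}, u < v → v < u + m → u % m ≠ v % m := by
    intro u v h1 h2 h
    have h3 : m ∣ v - u := (Nat.modEq_iff_dvd' h1.le).1 h
    have := Nat.le_of_dvd (by omega) h3
    omega
  have hbase : ∀ k, a + 1 < k → k < a + m → 0 < σ * D (y a) (y (a + 1)) (y k) := by
    intro k h1 h2
    exact hE a k (hne (by omega) (by omega)).symm (hne (by omega) (by omega)).symm
  have hedge : ∀ k, a < k → k + 1 < a + m → 0 < σ * D (y a) (y k) (y (k + 1)) := by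
    intro k h1 h2
    have h := hE k a (hne (by omega) (by omega)) (hne (by omega) (by omega))
    have e : D (y k) (y (k + 1)) (y a) = D (y a) (y k) (y (k + 1)) := by unfold D; ring
    rwa [e] at h
  obtain rfl | hj := (Nat.succ_le_of_lt haj).eq_or_lt
  · exact hbase k (by omega) hk
  induction k, (Nat.succ_le_of_lt hjk) using Nat.le_induction with
  | base => exact hedge j haj hk
  | succ k hjk' ih =>
    have ih' := ih (by omega) (by omega)
    have h1 := hbase j hj (by omega)
    have h2 := hbase k (by omega) (by omega)
    have h3 := hbase (k + 1) (by omega) hk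
    have h4 := hedge k (by omega) hk
    -- Plücker relation for the vectors from `y a` to the other four points.
    have pl : (σ * D (y a) (y (a + 1)) (y k)) * (σ * D (y a) (y j) (y (k + 1))) =
        (σ * D (y a) (y (a + 1)) (y j)) * (σ * D (y a) (y k) (y (k + 1))) +
        (σ * D (y a) (y (a + 1)) (y (k + 1))) * (σ * D (y a) (y j) (y k)) := by
      unfold D; ring
    have := add_pos (mul_pos h1 h4) (mul_pos h3 ih')
    rw [← pl] at this
    exact pos_of_mul_pos_right this h2.le

/-- An affine function cannot alternate in sign along four vertices in cyclic order. -/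
lemma no_alternation {m : ℕ} {y : ℕ → Fin 2 → ℝ} {σ : ℝ}
    (hE : ∀ s t, t % m ≠ s % m → t % m ≠ (s + 1) % m → 0 < σ * D (y s) (y (s + 1)) (y t))
    {a i j k : ℕ} (hai : a < i) (hij : i < j) (hjk : j < k) (hk : k < a + m)
    (w : Fin 2 → ℝ) (b : ℝ)
    (h0 : dot2 w (y a) + b ≤ 0) (h1 : 0 < dot2 w (y i) + b)
    (h2 : dot2 w (y j) + b ≤ 0) : dot2 w (y k) + b ≤ 0 := by
  by_contra h3
  push Not at h3
  have d0 := orient_pos hE hij hjk (by omega)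
  have d1 := orient_pos hE (hai.trans hij) hjk hk
  have d2 := orient_pos hE hai (hij.trans hjk) hk
  have d3 := orient_pos hE hai hij (by omega)
  have key : (σ * D (y i) (y j) (y k)) * (dot2 w (y a) + b)
      - (σ * D (y a) (y j) (y k)) * (dot2 w (y i) + b)
      + (σ * D (y a) (y i) (y k)) * (dot2 w (y j) + b)
      - (σ * D (y a) (y i) (y j)) * (dot2 w (y k) + b) = 0 := by
    unfold D dot2; ring
  have e0 := mul_nonpos_of_nonneg_of_nonpos d0.le h0
  have e1 := mul_pos d1 h1
  have e2 := mul_nonpos_of_nonneg_of_nonpos d2.le h2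
  have e3 := mul_pos d3 h3
  linarith

/-- Let `z 1, …, z m` enumerate the tests. A family `V` of at least two hypotheses whose positive
sets are nonempty initial segments of `z 1, …, z (m - 1)` is split by some test into two parts,
each holding at least a third of `V`. -/
lemma exists_split {α : Type*} [Finite α] {m : ℕ} (z : ℕ → α)
    (hz : ∀ i, ∃ t, 1 ≤ t ∧ t ≤ m ∧ z t = i) (V : Set (α → Bool))
    (hfirst : ∀ f ∈ V, f (z 1) = true) (hlast : ∀ f ∈ V, f (z m) = false)
    (hmono : ∀ f ∈ V, ∀ s t, 1 ≤ s → s ≤ t → t ≤ m → f (z t) = true → f (z s) = true)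
    (hm : 1 ≤ m) (hV : 2 ≤ V.ncard) :
    ∃ c, V.ncard ≤ 3 * {f ∈ V | f c = true}.ncard ∧
      3 * {f ∈ V | f c = true}.ncard ≤ 2 * V.ncard := by
  classical
  let N : ℕ → ℕ := fun t => {f ∈ V | f (z t) = true}.ncard
  have hN1 : N 1 = V.ncard := by
    have : {f ∈ V | f (z 1) = true} = V := by
      ext f; exact ⟨fun h => h.1, fun h => ⟨h, hfirst f h⟩⟩
    simp only [N, this]
  have hNm : N m = 0 := by
    have : {f ∈ V | f (z m) = true} = ∅ := by
      ext f
      simp only [Set.mem_ofPred_eq, Set.mem_empty_iff_false, iff_false, not_and]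
      intro h; simp [hlast f h]
    simp only [N, this, Set.ncard_empty]
  have hex : ∃ t, 1 ≤ t ∧ 3 * N t ≤ 2 * V.ncard := ⟨m, hm, by omega⟩
  obtain ⟨ht1, ht2⟩ := Nat.find_spec hex
  have htm : Nat.find hex ≤ m := Nat.find_min' hex ⟨hm, by omega⟩
  have hmin := fun s => Nat.find_min (m := s) hex
  generalize Nat.find hex = t at *
  have hne : t ≠ 1 := by rintro rfl; omega
  obtain ⟨s, rfl⟩ : ∃ s, t = s + 1 := ⟨t - 1, by omega⟩
  have hs := hmin s (by omega)
  -- Only one member of `V` can contain `z s` but not `z (s + 1)`.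
  have hstep : N s ≤ N (s + 1) + 1 := by
    have hsub : {f ∈ V | f (z s) = true} ⊆ {f ∈ V | f (z (s + 1)) = true} ∪
        {f ∈ V | f (z s) = true ∧ f (z (s + 1)) = false} := by
      intro f hf
      cases h : f (z (s + 1))
      · exact Or.inr ⟨hf.1, hf.2, h⟩
      · exact Or.inl ⟨hf.1, h⟩
    have hone : {f ∈ V | f (z s) = true ∧ f (z (s + 1)) = false}.ncard ≤ 1 := by
      rw [Set.ncard_le_one (Set.toFinite _)]
      have hval : ∀ f ∈ V, f (z s) = true → f (z (s + 1)) = false →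
          ∀ t, 1 ≤ t → t ≤ m → f (z t) = decide (t ≤ s) := by
        intro f hf h1 h2 t h3 h4
        by_cases hts : t ≤ s
        · simp [hts, hmono f hf t s h3 hts (by omega) h1]
        · simp only [hts, decide_false]
          by_contra h
          have := hmono f hf (s + 1) t (by omega) (by omega) h4 (by simpa using h)
          simp [this] at h2
      rintro f ⟨hf, hf1, hf2⟩ g ⟨hg, hg1, hg2⟩
      funext i
      obtain ⟨t, h1, h2, rfl⟩ := hz i
      rw [hval f hf hf1 hf2 t h1 h2, hval g hg hg1 hg2 t h1 h2]
    calc N s ≤ _ := Set.ncard_le_ncard hsub (Set.toFinite _)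
      _ ≤ _ := Set.ncard_union_le _ _
      _ ≤ N (s + 1) + 1 := by simp only [N]; omega
  exact ⟨z (s + 1), by change V.ncard ≤ 3 * N (s + 1); omega, ht2⟩

/-- Let `m ≥ 4` and let `x 0, …, x (m-1)` be distinct points of `ℝ²`
in strictly convex position, listed in cyclic order around their convex hull (each
consecutive pair `x i, x (i+1)` spans an edge of the hull, i.e. lies on a line having all
the other points strictly on one side).  Let `X = {x 0, …, x (m-1)}` (tests indexed by
`Fin m`) and let `H` be the set of functions `f : X → {0,1}` realizable by a linear
classifier `f(x) = 1[w·x + b > 0]` whose fraction of `1`-labels lies in `[1/4, 3/4]`.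
Then the problem `(H, X)` is `3`-split-neighborly: the directed graph on tests with an
edge from `a` to `b` whenever every `V ⊆ Δ(a,b)` with `|V| ≥ 2` can be split with split
constant `1/3` is strongly connected. -/
theorem convex_polygon_linear_classifiers_three_split_neighborly
    (m : ℕ) [NeZero m] (hm : 4 ≤ m) (x : Fin m → (Fin 2 → ℝ))
    (hinj : Function.Injective x)
    (hstrictconvex : ∀ i, x i ∈ Set.extremePoints ℝ (convexHull ℝ (Set.range x)))
    (hcyclic : ∀ i : Fin m, ∃ (w : Fin 2 → ℝ) (b : ℝ),
      dot2 w (x i) + b = 0 ∧ dot2 w (x (i + 1)) + b = 0 ∧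
      ∀ j : Fin m, j ≠ i → j ≠ i + 1 → dot2 w (x j) + b < 0) :
    let H : Set (Fin m → Bool) :=
      {f | (∃ (w : Fin 2 → ℝ) (b : ℝ), ∀ i, f i = decide (0 < dot2 w (x i) + b)) ∧
        (1 : ℝ) / 4 ≤ ((Finset.univ.filter fun i => f i = true).card : ℝ) / m ∧
        ((Finset.univ.filter fun i => f i = true).card : ℝ) / m ≤ 3 / 4}
    let Delta : Fin m → Fin m → Set (Fin m → Bool) := fun a b =>
      {f ∈ H | f a = false ∧ f b = true}
    let edge : Fin m → Fin m → Prop := fun a b =>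
      ∀ V : Set (Fin m → Bool), V ⊆ Delta a b → 2 ≤ V.ncard →
        ∃ c : Fin m,
          (1 : ℝ) / 3 ≤ ({f ∈ V | f c = true}.ncard : ℝ) / V.ncard ∧
          ({f ∈ V | f c = true}.ncard : ℝ) / V.ncard ≤ 1 - 1 / 3
    ∀ a b : Fin m, Relation.ReflTransGen edge a b := by
  intro H Delta edge
  let y : ℕ → Fin m := fun n => Fin.ofNat m n
  have hysucc : ∀ n, y (n + 1) = y n + 1 := by
    intro n
    apply Fin.ext
    simp [y, Fin.val_add]
  have hyval : ∀ i : Fin m, y i.val = i := by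
    intro i; apply Fin.ext; simp [y]
  have hyper : ∀ n, y (n + m) = y n := by
    intro n; apply Fin.ext; simp [y]
  have hyne : ∀ {s t : ℕ}, y s = y t ↔ s % m = t % m := by
    intro s t; simp [y, Fin.ext_iff]
  have hcons : ∀ s, s % m ≠ (s + 1) % m := by
    intro s h
    have := Nat.le_of_dvd (by omega) ((Nat.modEq_iff_dvd' (by omega)).1 h)
    omega
  have hcons2 : ∀ s, s % m ≠ (s + 2) % m := by
    intro s h
    have := Nat.le_of_dvd (by omega) ((Nat.modEq_iff_dvd' (by omega)).1 h)
    omega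
  have hside : ∀ s t u, t % m ≠ s % m → t % m ≠ (s + 1) % m → u % m ≠ s % m →
      u % m ≠ (s + 1) % m →
      0 < D (x (y s)) (x (y (s + 1))) (x (y t)) * D (x (y s)) (x (y (s + 1))) (x (y u)) := by
    intro s t u h1 h2 h3 h4
    obtain ⟨w, b, e1, e2, e3⟩ := hcyclic (y s)
    rw [← hysucc] at e2 e3
    exact same_side e1 e2 (e3 _ (hyne.not.2 h1) (hyne.not.2 h2))
      (e3 _ (hyne.not.2 h3) (hyne.not.2 h4))
      (fun h => hcons s (hyne.1 (hinj h)))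
  -- The orientation of consecutive triples propagates around the polygon.
  have hconsec : ∀ s, 0 < D (x (y 0)) (x (y 1)) (x (y 2)) *
      D (x (y s)) (x (y (s + 1))) (x (y (s + 2))) := by
    intro s
    induction s with
    | zero => exact hside 0 2 2 (hcons2 0).symm (hcons 1).symm (hcons2 0).symm (hcons 1).symm
    | succ s ih =>
      have h := hside (s + 1) s (s + 3) (hcons s) (hcons2 s) (hcons2 (s + 1)).symm
        (hcons (s + 2)).symm
      have e : D (x (y (s + 1))) (x (y (s + 1 + 1))) (x (y s)) =
          D (x (y s)) (x (y (s + 1))) (x (y (s + 2))) := by unfold D; ring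
      rw [e] at h
      have h' := mul_pos ih h
      have hsq := sq_nonneg (D (x (y s)) (x (y (s + 1))) (x (y (s + 2))))
      refine pos_of_mul_pos_right (lt_of_lt_of_eq h' ?_) hsq
      ring
  have hE : ∀ s t, t % m ≠ s % m → t % m ≠ (s + 1) % m →
      0 < D (x (y 0)) (x (y 1)) (x (y 2)) * D (x (y s)) (x (y (s + 1))) (x (y t)) := by
    intro s t h1 h2
    have h := hside s (s + 2) t (hcons2 s).symm (hcons (s + 1)).symm h1 h2
    have h' := mul_pos (hconsec s) h
    have hsq := sq_nonneg (D (x (y s)) (x (y (s + 1))) (x (y (s + 2))))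
    refine pos_of_mul_pos_right (lt_of_lt_of_eq h' ?_) hsq
    ring
  have hedge : ∀ n : ℕ, edge (y n) (y (n + 1)) := by
    intro n V hV hcard
    have hcover : ∀ i, ∃ t, 1 ≤ t ∧ t ≤ m ∧ y (n + t) = i := by
      intro i
      -- `t ≡ i - n` modulo `m`, with representative in `1, …, m`.
      have hlt := Nat.mod_lt (i.val + (m - 1) * (n + 1)) (by omega : 0 < m)
      refine ⟨(i.val + (m - 1) * (n + 1)) % m + 1, by omega, by omega, ?_⟩
      refine (hyne.2 ?_).trans (hyval i)
      have e : n + (i.val + (m - 1) * (n + 1) + 1) = i.val + m * (n + 1) := by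
        obtain ⟨k, rfl⟩ : ∃ k, m = k + 1 := ⟨m - 1, by omega⟩
        simp only [Nat.add_sub_cancel]
        ring
      calc (n + ((i.val + (m - 1) * (n + 1)) % m + 1)) % m
          = (n + (i.val + (m - 1) * (n + 1) + 1)) % m := by
            simp [Nat.add_mod]
        _ = i.val % m := by rw [e]; simp
    have hfirst : ∀ f ∈ V, f (y (n + 1)) = true := by
      intro f hf; exact (hV hf).2.2
    have hlast : ∀ f ∈ V, f (y (n + m)) = false := by
      intro f hf
      rw [hyper]; exact (hV hf).2.1
    have hmono : ∀ f ∈ V, ∀ s t, 1 ≤ s → s ≤ t → t ≤ m →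
        f (y (n + t)) = true → f (y (n + s)) = true := by
      intro f hf s t hs hst htm hft
      obtain ⟨⟨⟨w, b, hwb⟩, -⟩, hf0, hf1⟩ := hV hf
      have htm' : t ≠ m := by
        rintro rfl
        simp [hyper, hf0] at hft
      by_contra hfs
      have hs1 : s ≠ 1 := by rintro rfl; exact hfs hf1
      have hst' : s ≠ t := by rintro rfl; exact hfs hft
      simp only [hwb, decide_eq_true_eq, decide_eq_false_iff_not, not_lt] at hf0 hf1 hft hfs
      have := no_alternation (y := fun n => x (y n)) hE (a := n) (i := n + 1) (j := n + s)
        (k := n + t) (by omega) (by omega) (by omega) (by omega) w b hf0 hf1 hfs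
      exact absurd hft (not_lt.2 this)
    obtain ⟨c, hc1, hc2⟩ :=
      exists_split (m := m) (fun t => y (n + t)) hcover V hfirst hlast hmono (by omega) hcard
    refine ⟨c, ?_, ?_⟩
    · have hpos : (0 : ℝ) < V.ncard := by exact_mod_cast (by omega : 0 < V.ncard)
      rw [le_div_iff₀ hpos]
      have : (V.ncard : ℝ) ≤ 3 * ({f ∈ V | f c = true}.ncard : ℝ) := by exact_mod_cast hc1
      linarith
    · have hpos : (0 : ℝ) < V.ncard := by exact_mod_cast (by omega : 0 < V.ncard)
      rw [div_le_iff₀ hpos]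
      have : 3 * ({f ∈ V | f c = true}.ncard : ℝ) ≤ 2 * (V.ncard : ℝ) := by exact_mod_cast hc2
      linarith
  have hpath : ∀ n k, Relation.ReflTransGen edge (y n) (y (n + k)) := by
    intro n k
    induction k with
    | zero => exact Relation.ReflTransGen.refl
    | succ k ih => exact ih.tail (hedge (n + k))
  intro a b
  have h := hpath a.val (b.val + m - a.val)
  have ha := a.isLt
  rw [show a.val + (b.val + m - a.val) = b.val + m by omega, hyper, hyval, hyval] at h
  exact h
end

section
/- Let m ≥ 4 and let x_1, …, x_m be distinct points of ℝ² in strictly convex position, listed in cyclic order around their convex hull. Let X = {x_1, …, x_m} and let H be the set of functions f : X → {0,1} for which there exist w ∈ ℝ² and b ∈ ℝ with f(x) = 1[w·x + b > 0] for all x ∈ X, and such that (Σ_{x∈X} f(x))/m ∈ [1/4, 3/4]. Then: (i) |H| = m·(m − 2⌈m/4⌉ + 1); (ii) for any two consecutive vertices x, x' of the polygon, |Δ(x,x')| = m − 2⌈m/4⌉ + 1; and consequently (iii) |Δ(x,x')| ≥ √|H| / 2. -/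
/-- Twice the signed area of the triangle `p q r`. -/
def orient (p q r : Fin 2 → ℝ) : ℝ :=
  (q 0 - p 0) * (r 1 - p 1) - (q 1 - p 1) * (r 0 - p 0)

/-- Every pair of cyclically consecutive points spans an edge of the convex hull: some line
contains the two points and has all the others strictly on one side. -/
def IsCyclicHull {m : ℕ} [NeZero m] (x : Fin m → (Fin 2 → ℝ)) : Prop :=
  ∀ i : Fin m, ∃ (w : Fin 2 → ℝ) (b : ℝ),
      dot2 w (x i) + b = 0 ∧ dot2 w (x (i + 1)) + b = 0 ∧
      ∀ j : Fin m, j ≠ i → j ≠ i + 1 → dot2 w (x j) + b < 0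

/-- The labelling `f` is induced by an affine function on the plane. -/
def IsLinearLabel {m : ℕ} (x : Fin m → (Fin 2 → ℝ)) (f : Fin m → Bool) : Prop :=
  ∃ (w : Fin 2 → ℝ) (b : ℝ), ∀ i, f i = decide (0 < dot2 w (x i) + b)

/-- The indicator of the cyclic arc `s, s + 1, …, s + k - 1` (for `k ≤ m`). -/
def arc {m : ℕ} (s : Fin m) (k : ℕ) : Fin m → Bool :=
  fun i => decide ((i - s).val < k)

section

variable {m : ℕ} [NeZero m] {x : Fin m → (Fin 2 → ℝ)}

/-! ### Orientation of triples -/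

lemma IsCyclicHull.rotate (h : IsCyclicHull x) (s : Fin m) :
    IsCyclicHull (fun j => x (s + j)) := by
  intro i
  obtain ⟨w, b, h1, h2, h3⟩ := h (s + i)
  refine ⟨w, b, h1, by
    simpa only [← add_assoc] using h2, fun j hj hj' => h3 _ ?_ ?_⟩
  · simpa using hj
  · rw [add_assoc]; simpa using hj'

lemma fin_mk_add_one {n : ℕ} (hn : n + 1 < m) :
    (⟨n, by omega⟩ : Fin m) + 1 = ⟨n + 1, hn⟩ := by
  ext
  simp only [Fin.val_add, Fin.val_one']
  rw [Nat.mod_eq_of_lt (a := 1) (by omega), Nat.mod_eq_of_lt hn]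

/-- All vertices off an edge have the same orientation with respect to that edge; the sign may
still depend on the edge. -/
lemma IsCyclicHull.exists_edge_sign (hm : 4 ≤ m) (hinj : Function.Injective x)
    (h : IsCyclicHull x) (i : Fin m) :
    ∃ t : ℝ, ∀ j, j ≠ i → j ≠ i + 1 → 0 < t * orient (x i) (x (i + 1)) (x j) := by
  obtain ⟨w, b, h1, h2, h3⟩ := h i
  have hne : x (i + 1) ≠ x i := by
    intro hc
    have := hinj hc
    simp only [add_eq_left] at this
    have := congrArg Fin.val this
    rw [Fin.val_one', Fin.val_zero, Nat.mod_eq_of_lt (by omega)] at this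
    omega
  have hu : 0 < (x (i + 1) 0 - x i 0) ^ 2 + (x (i + 1) 1 - x i 1) ^ 2 := by
    by_contra hc
    apply hne
    ext l
    fin_cases l
    · simp only [Fin.zero_eta]
      nlinarith [sq_nonneg (x (i + 1) 0 - x i 0), sq_nonneg (x (i + 1) 1 - x i 1)]
    · simp only [Fin.mk_one]
      nlinarith [sq_nonneg (x (i + 1) 0 - x i 0), sq_nonneg (x (i + 1) 1 - x i 1)]
  -- The normal `w` of the edge line is orthogonal to the edge, so `t = w × edge` is its sign.
  refine ⟨w 0 * (x (i + 1) 1 - x i 1) - w 1 * (x (i + 1) 0 - x i 0), fun j hj hj' => ?_⟩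
  have h4 := h3 j hj hj'
  unfold orient
  unfold dot2 at *
  generalize hu0 : x (i + 1) 0 - x i 0 = u0 at *
  generalize hu1 : x (i + 1) 1 - x i 1 = u1 at *
  generalize hv0 : x j 0 - x i 0 = v0 at *
  generalize hv1 : x j 1 - x i 1 = v1 at *
  have e1 : w 0 * u0 + w 1 * u1 = 0 := by rw [← hu0, ← hu1]; linarith
  have e2 : w 0 * v0 + w 1 * v1 < 0 := by rw [← hv0, ← hv1]; linarith
  have key : (w 0 * u1 - w 1 * u0) * (u0 * v1 - u1 * v0)
      = -(w 0 * v0 + w 1 * v1) * (u0 ^ 2 + u1 ^ 2)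
        + (w 0 * u0 + w 1 * u1) * (u0 * v0 + u1 * v1) := by ring
  rw [key, e1]
  have := mul_pos (neg_pos.2 e2) hu
  linarith

/-- Adjacent edges share the triangle `i, i + 1, i + 2`, which makes the signs of all edges
agree. -/
lemma IsCyclicHull.exists_sign (hm : 4 ≤ m) (hinj : Function.Injective x) (h : IsCyclicHull x) :
    ∃ t : ℝ, ∀ n (hn : n + 1 < m), ∀ j : Fin m, j.val ≠ n → j.val ≠ n + 1 →
      0 < t * orient (x ⟨n, by omega⟩) (x ⟨n + 1, hn⟩) (x j) := by
  have hedge : ∀ n (hn : n + 1 < m), ∃ t : ℝ, ∀ j : Fin m, j.val ≠ n → j.val ≠ n + 1 →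
      0 < t * orient (x ⟨n, by omega⟩) (x ⟨n + 1, hn⟩) (x j) := by
    intro n hn
    obtain ⟨t, ht⟩ := h.exists_edge_sign hm hinj ⟨n, by omega⟩
    have hs : (⟨n, by omega⟩ : Fin m) + 1 = ⟨n + 1, hn⟩ := fin_mk_add_one hn
    rw [hs] at ht
    refine ⟨t, fun j h1 h2 => ht j ?_ ?_⟩ <;> simpa [Fin.ext_iff]
  obtain ⟨t, ht⟩ := hedge 0 (by omega)
  refine ⟨t, fun n => ?_⟩
  induction n with
  | zero => intro hn; exact ht
  | succ n ih =>
    intro hn j h1 h2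
    obtain ⟨t', ht'⟩ := hedge (n + 1) hn
    have a := ih (by omega) ⟨n + 2, hn⟩ (by simp) (by simp)
    have b := ht' ⟨n, by omega⟩ (by simp) (by simp; omega)
    have c := ht' j h1 h2
    have e : orient (x ⟨n, by omega⟩) (x ⟨n + 1, by omega⟩) (x ⟨n + 2, hn⟩)
        = orient (x ⟨n + 1, by omega⟩) (x ⟨n + 2, hn⟩) (x ⟨n, by omega⟩) := by
      unfold orient; ring
    rw [e] at a
    have htt : 0 < t * t' := by
      by_contra hc
      nlinarith [mul_pos a b, sq_nonneg
        (orient (x ⟨n + 1, by omega⟩) (x ⟨n + 2, hn⟩) (x ⟨n, by omega⟩))]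
    have ht0 : 0 < t' ^ 2 := by
      have : t' ≠ 0 := by rintro rfl; simp at htt
      positivity
    by_contra hc
    nlinarith [mul_pos htt c]

/-- All increasing triples of vertices have the same orientation: around `x i`, the later
vertices lie in a half-plane bounded by the edge to `x (i + 1)`, where turning left is a
transitive relation. -/
lemma IsCyclicHull.exists_orient_pos (hm : 4 ≤ m) (hinj : Function.Injective x)
    (h : IsCyclicHull x) :
    ∃ t : ℝ, ∀ i j k : Fin m, i < j → j < k → 0 < t * orient (x i) (x j) (x k) := by
  obtain ⟨t, ht⟩ := h.exists_sign hm hinj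
  refine ⟨t, ?_⟩
  rintro ⟨i, hi⟩ ⟨j, hj⟩ ⟨k, hk⟩ hij hjk
  simp only [Fin.mk_lt_mk] at hij hjk
  induction k, hjk using Nat.le_induction with
  | base =>
    have a := ht j hk ⟨i, hi⟩ (by simp; omega) (by simp; omega)
    have e : orient (x ⟨j, hj⟩) (x ⟨j + 1, hk⟩) (x ⟨i, hi⟩)
      = orient (x ⟨i, hi⟩) (x ⟨j, hj⟩) (x ⟨j + 1, hk⟩) := by unfold orient; ring
    rwa [e] at a
  | succ k hjk ih =>
    have hjk' : j < k := hjk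
    have hk' : k < m := by omega
    have a := ih hk'
    have b := ht k hk ⟨i, hi⟩ (by simp; omega) (by simp; omega)
    have hk1 := ht i (by omega) ⟨k, hk'⟩ (by simp; omega) (by simp; omega)
    have hk2 := ht i (by omega) ⟨k + 1, hk⟩ (by simp; omega) (by simp; omega)
    have hj1 : 0 ≤ t * orient (x ⟨i, hi⟩) (x ⟨i + 1, by omega⟩) (x ⟨j, hj⟩) := by
      rcases eq_or_ne j (i + 1) with rfl | hne
      · apply le_of_eq; unfold orient; ring
      · exact (ht i (by omega) ⟨j, hj⟩ (by simp; omega) (by simpa using hne)).le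
    have e : orient (x ⟨k, hk'⟩) (x ⟨k + 1, hk⟩) (x ⟨i, hi⟩)
      = orient (x ⟨i, hi⟩) (x ⟨k, hk'⟩) (x ⟨k + 1, hk⟩) := by unfold orient; ring
    rw [e] at b
    -- The Plücker relation for the four directions from `x i`.
    have key : (t * orient (x ⟨i, hi⟩) (x ⟨i + 1, by omega⟩) (x ⟨k, hk'⟩)) *
          (t * orient (x ⟨i, hi⟩) (x ⟨j, hj⟩) (x ⟨k + 1, hk⟩))
        = (t * orient (x ⟨i, hi⟩) (x ⟨i + 1, by omega⟩) (x ⟨j, hj⟩)) *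
          (t * orient (x ⟨i, hi⟩) (x ⟨k, hk'⟩) (x ⟨k + 1, hk⟩))
        + (t * orient (x ⟨i, hi⟩) (x ⟨i + 1, by omega⟩) (x ⟨k + 1, hk⟩)) *
          (t * orient (x ⟨i, hi⟩) (x ⟨j, hj⟩) (x ⟨k, hk'⟩)) := by
      unfold orient; ring
    have hp := mul_pos hk2 a
    have hq := mul_nonneg hj1 b.le
    exact (mul_pos_iff_of_pos_left hk1).1 (by rw [key]; linarith)

/-! ### Linear labellings are arcs -/

lemma IsCyclicHull.not_alternating (hm : 4 ≤ m) (hinj : Function.Injective x)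
    (h : IsCyclicHull x) {f : Fin m → Bool} (hf : IsLinearLabel x f) {i j k l : Fin m}
    (hij : i < j) (hjk : j < k) (hkl : k < l)
    (fi : f i = true) (fj : f j = false) (fk : f k = true) (fl : f l = false) : False := by
  obtain ⟨t, ht⟩ := h.exists_orient_pos hm hinj
  obtain ⟨w, b, hw⟩ := hf
  rw [hw] at fi fj fk fl
  simp only [decide_eq_true_eq, decide_eq_false_iff_not, not_lt] at fi fj fk fl
  have d1 := mul_pos (ht j k l hjk hkl) fi
  have d2 := mul_pos (ht i j l hij (hjk.trans hkl)) fk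
  have d3 := mul_nonpos_of_nonneg_of_nonpos (ht i k l (hij.trans hjk) hkl).le fj
  have d4 := mul_nonpos_of_nonneg_of_nonpos (ht i j k hij hjk).le fl
  have key : t * orient (x j) (x k) (x l) * (dot2 w (x i) + b)
      + t * orient (x i) (x j) (x l) * (dot2 w (x k) + b)
      = t * orient (x i) (x k) (x l) * (dot2 w (x j) + b)
      + t * orient (x i) (x j) (x k) * (dot2 w (x l) + b) := by
    unfold orient dot2; ring
  linarith

/-- The case of `IsCyclicHull.eq_arc` in which the arc starts at the vertex `0`. -/
lemma IsCyclicHull.eq_initial (hm : 4 ≤ m) (hinj : Function.Injective x)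
    (h : IsCyclicHull x) {f : Fin m → Bool} (hf : IsLinearLabel x f)
    (h0 : f ⟨0, by omega⟩ = true) (hl : f ⟨m - 1, by omega⟩ = false) :
    ∃ k, 1 ≤ k ∧ k < m ∧ ∀ j, f j = decide (j.val < k) := by
  classical
  have hex : ∃ n, ∃ hn : n < m, f ⟨n, hn⟩ = false := ⟨m - 1, by omega, hl⟩
  obtain ⟨hk, hfk⟩ := Nat.find_spec hex
  have hmin := fun n (hn : n < Nat.find hex) => Nat.find_min hex hn
  generalize Nat.find hex = k at hk hfk hmin
  have hk0 : k ≠ 0 := by rintro rfl; rw [h0] at hfk; simp at hfk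
  refine ⟨k, by omega, hk, fun j => ?_⟩
  by_cases hj : j.val < k
  · have := hmin _ hj
    simp only [not_exists, Bool.not_eq_false] at this
    simpa [hj] using this j.2
  · simp only [hj, decide_false]
    by_contra hc
    simp only [Bool.not_eq_false] at hc
    have hjk : j.val ≠ k := by rintro rfl; simp [hc] at hfk
    have hjm : j.val ≠ m - 1 := by
      intro he
      have : j = ⟨m - 1, by omega⟩ := Fin.ext he
      rw [this, hl] at hc
      simp at hc
    have := j.2
    exact h.not_alternating hm hinj hf (i := ⟨0, by omega⟩) (j := ⟨k, hk⟩) (k := j)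
      (l := ⟨m - 1, by omega⟩) (Fin.mk_lt_mk.2 (by omega)) (Fin.lt_def.2 (by simp; omega))
      (Fin.lt_def.2 (by simp; omega)) h0 hfk hc hl

lemma fin_neg_one_eq (hm : 4 ≤ m) : (-1 : Fin m) = ⟨m - 1, by omega⟩ := by
  rw [neg_eq_iff_add_eq_zero]
  ext
  simp only [Fin.val_add, Fin.val_one', Fin.val_zero]
  rw [Nat.mod_eq_of_lt (a := 1) (by omega), show 1 + (m - 1) = m by omega, Nat.mod_self]

/-- A linear labelling with a change from `false` to `true` between `i` and `i + 1` is the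
indicator of an arc starting at `i + 1`. -/
lemma IsCyclicHull.eq_arc (hm : 4 ≤ m) (hinj : Function.Injective x)
    (h : IsCyclicHull x) {f : Fin m → Bool} (hf : IsLinearLabel x f) (i : Fin m)
    (h0 : f i = false) (h1 : f (i + 1) = true) :
    ∃ k, 1 ≤ k ∧ k < m ∧ f = arc (i + 1) k := by
  obtain ⟨w, b, hw⟩ := hf
  obtain ⟨k, hk1, hk2, hk⟩ := (h.rotate (i + 1)).eq_initial hm
    (hinj.comp (add_right_injective _)) (f := fun j => f (i + 1 + j)) ⟨w, b, fun j => hw _⟩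
    (by change f (i + 1 + 0) = true; simpa using h1)
    (by rw [← fin_neg_one_eq hm]; simpa using h0)
  refine ⟨k, hk1, hk2, funext fun j => ?_⟩
  have := hk (j - (i + 1))
  rw [add_sub_cancel] at this
  exact this

/-- A nonconstant labelling changes from `false` to `true` somewhere along the cycle. -/
lemma exists_rise {f : Fin m → Bool} {a b : Fin m} (ha : f a = false) (hb : f b = true) :
    ∃ i, f i = false ∧ f (i + 1) = true := by
  by_contra hc
  simp only [not_exists, not_and, Bool.not_eq_true] at hc
  have hall : ∀ n (hn : n < m), f (a + ⟨n, hn⟩) = false := by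
    intro n
    induction n with
    | zero => intro hn; change f (a + 0) = false; simpa using ha
    | succ n ih =>
      intro hn
      rw [← fin_mk_add_one hn, ← add_assoc]
      exact hc _ (ih _)
  have := hall (b - a).val (b - a).2
  rw [Fin.eta, add_sub_cancel, hb] at this
  simp at this

/-! ### Arcs are linear labellings -/

lemma exists_affine_orient (p q : Fin 2 → ℝ) (t : ℝ) :
    ∃ (w : Fin 2 → ℝ) (b : ℝ), ∀ v, dot2 w v + b = t * orient p q v := by
  refine ⟨![-t * (q 1 - p 1), t * (q 0 - p 0)],
    t * (-(q 0 - p 0) * p 1 + (q 1 - p 1) * p 0), fun v => ?_⟩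
  simp only [dot2, orient, Matrix.cons_val_zero, Matrix.cons_val_one]
  ring

/-- The case of `IsCyclicHull.arc_linear` in which the arc starts at the vertex `0`. -/
lemma IsCyclicHull.initial_linear (hm : 4 ≤ m) (hinj : Function.Injective x)
    (h : IsCyclicHull x) {k : ℕ} (hk1 : 1 ≤ k) (hk2 : k < m) :
    IsLinearLabel x (fun j => decide (j.val < k)) := by
  obtain ⟨t, ht⟩ := h.exists_orient_pos hm hinj
  have cyc : ∀ p q r, orient p q r = orient q r p := by intro p q r; unfold orient; ring
  have swap : ∀ p q r, orient p q r = - orient p r q := by intro p q r; unfold orient; ring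
  have deg : ∀ p q, orient p q p = 0 := by intro p q; unfold orient; ring
  have deg' : ∀ p q, orient p q q = 0 := by intro p q; unfold orient; ring
  by_cases hkm : k = m - 1
  · subst hkm
    -- Only the last vertex is excluded: add the affine functions of its two edges.
    obtain ⟨w, b, hw⟩ := exists_affine_orient (x ⟨m - 2, by omega⟩) (x ⟨m - 1, by omega⟩) t
    obtain ⟨w', b', hw'⟩ := exists_affine_orient (x ⟨m - 1, by omega⟩) (x ⟨0, by omega⟩) t
    refine ⟨w + w', b + b', fun j => ?_⟩
    have e : dot2 (w + w') (x j) + (b + b')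
        = (dot2 w (x j) + b) + (dot2 w' (x j) + b') := by
      simp only [dot2, Pi.add_apply]; ring
    rw [e, hw, hw']
    rw [decide_eq_decide]
    have hj := j.2
    constructor
    · intro hjk
      have a : 0 ≤ t * orient (x ⟨m - 2, by omega⟩) (x ⟨m - 1, by omega⟩) (x j) := by
        rcases eq_or_ne j ⟨m - 2, by omega⟩ with he | hne
        · rw [he, deg]; simp
        · rw [← cyc]
          refine (ht _ _ _ (Fin.lt_def.2 ?_) (Fin.lt_def.2 (by simp; omega))).le
          simp only [ne_eq, Fin.ext_iff] at hne ⊢; omega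
      have a' : 0 ≤ t * orient (x ⟨m - 1, by omega⟩) (x ⟨0, by omega⟩) (x j) := by
        rcases eq_or_ne j ⟨0, by omega⟩ with he | hne
        · rw [he, deg']; simp
        · rw [cyc]
          refine (ht _ _ _ (Fin.lt_def.2 ?_) (Fin.lt_def.2 (by simp; omega))).le
          simp only [ne_eq, Fin.ext_iff] at hne ⊢; omega
      rcases eq_or_ne j ⟨0, by omega⟩ with he | hne
      · rw [he] at a' ⊢
        have : 0 < t * orient (x ⟨m - 2, by omega⟩) (x ⟨m - 1, by omega⟩) (x ⟨0, by omega⟩) := by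
          rw [← cyc]
          exact ht _ _ _ (Fin.lt_def.2 (by simp; omega)) (Fin.lt_def.2 (by simp; omega))
        linarith
      · have : 0 < t * orient (x ⟨m - 1, by omega⟩) (x ⟨0, by omega⟩) (x j) := by
          rw [cyc]
          refine (ht _ _ _ (Fin.lt_def.2 ?_) (Fin.lt_def.2 (by simp; omega)))
          simp only [ne_eq, Fin.ext_iff] at hne ⊢; omega
        linarith
    · intro hp
      by_contra hc
      have : j = ⟨m - 1, by omega⟩ := Fin.ext (by simp; omega)
      rw [this, deg, deg'] at hp
      simp at hp
  · -- The line through the vertices `k` and `m - 1` separates.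
    obtain ⟨w, b, hw⟩ := exists_affine_orient (x ⟨k, hk2⟩) (x ⟨m - 1, by omega⟩) t
    refine ⟨w, b, fun j => ?_⟩
    rw [hw]
    rw [decide_eq_decide]
    have hj := j.2
    constructor
    · intro hjk
      rw [← cyc]
      exact ht _ _ _ (Fin.lt_def.2 hjk) (Fin.lt_def.2 (by simp; omega))
    · intro hp
      by_contra hc
      rcases eq_or_ne j ⟨k, hk2⟩ with rfl | hne
      · rw [deg] at hp; simp at hp
      rcases eq_or_ne j ⟨m - 1, by omega⟩ with he | hne'
      · rw [he, deg'] at hp; simp at hp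
      simp only [ne_eq, Fin.ext_iff] at hne hne'
      have := ht ⟨k, hk2⟩ j ⟨m - 1, by omega⟩ (Fin.lt_def.2 (by simp; omega))
        (Fin.lt_def.2 (by simp; omega))
      rw [swap] at hp
      linarith

lemma IsCyclicHull.arc_linear (hm : 4 ≤ m) (hinj : Function.Injective x)
    (h : IsCyclicHull x) (s : Fin m) {k : ℕ} (hk1 : 1 ≤ k) (hk2 : k < m) :
    IsLinearLabel x (arc s k) := by
  obtain ⟨w, b, hw⟩ := (h.rotate s).initial_linear hm (hinj.comp (add_right_injective _)) hk1 hk2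
  refine ⟨w, b, fun j => ?_⟩
  simpa only [arc, Function.comp_apply, add_sub_cancel] using hw (j - s)

/-! ### Counting arcs -/

lemma card_arc (s : Fin m) {k : ℕ} (hk : k ≤ m) :
    (Finset.univ.filter fun i => arc s k i = true).card = k := by
  have e : (Finset.univ.filter fun i => arc s k i = true)
      = (Finset.univ.filter fun i : Fin m => i.val < k).map (Equiv.addRight s).toEmbedding := by
    ext i
    simp [arc, Finset.mem_map_equiv, sub_eq_add_neg]
  rw [e, Finset.card_map, Fin.card_filter_val_lt, min_eq_right hk]

lemma arc_start {s : Fin m} {k : ℕ} (hk : 1 ≤ k) : arc s k s = true := by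
  simp [arc]; omega

lemma arc_pred_start (hm : 4 ≤ m) {s : Fin m} {k : ℕ} (hk : k < m) :
    arc s k (s - 1) = false := by
  have : s - 1 - s = (-1 : Fin m) := by abel
  simp only [arc, this, fin_neg_one_eq hm, decide_eq_false_iff_not]
  omega

lemma arc_rise_unique {s i : Fin m} {k : ℕ}
    (h0 : arc s k (i - 1) = false) (h1 : arc s k i = true) : i = s := by
  simp only [arc, decide_eq_false_iff_not, decide_eq_true_eq] at h0 h1
  rw [sub_right_comm] at h0
  rw [← sub_eq_zero]
  by_contra hc
  generalize i - s = d at *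
  have hd : d.val ≠ 0 := fun h => hc (Fin.ext h)
  have : (d - 1).val = d.val - 1 := by
    rw [Fin.val_sub_one_of_ne_zero hc]
  omega

lemma arc_injective (hm : 4 ≤ m) {s s' : Fin m} {k k' : ℕ} (hk1 : 1 ≤ k) (hk : k < m)
    (hk' : k' < m) (h : arc s k = arc s' k') : s = s' ∧ k = k' := by
  constructor
  · exact arc_rise_unique (k := k') (by rw [← h]; exact arc_pred_start hm hk)
      (by rw [← h]; exact arc_start hk1)
  · rw [← card_arc s hk.le, h, card_arc s' hk'.le]

end

lemma ceil_quarter (m : ℕ) : ⌈(m : ℚ) / 4⌉₊ = (m + 3) / 4 := by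
  apply le_antisymm
  · rw [Nat.ceil_le, div_le_iff₀ (by norm_num)]
    have : m ≤ (m + 3) / 4 * 4 := by omega
    exact_mod_cast this
  · have h := Nat.le_ceil ((m : ℚ) / 4)
    rw [div_le_iff₀ (by norm_num)] at h
    have : m ≤ ⌈(m : ℚ) / 4⌉₊ * 4 := by exact_mod_cast h
    omega

lemma balanced_iff {m k : ℕ} (hm : 4 ≤ m) :
    ((1 : ℝ) / 4 ≤ (k : ℝ) / m ∧ (k : ℝ) / m ≤ 3 / 4) ↔
      (m + 3) / 4 ≤ k ∧ k ≤ m - (m + 3) / 4 := by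
  have hp : (0 : ℝ) < m := by exact_mod_cast (by omega : 0 < m)
  rw [div_le_div_iff₀ (by norm_num) hp, div_le_div_iff₀ hp (by norm_num)]
  have : ((1 : ℝ) * m ≤ k * 4 ∧ (k : ℝ) * 4 ≤ 3 * m) ↔ (1 * m ≤ k * 4 ∧ k * 4 ≤ 3 * m) := by
    norm_cast
  rw [this]
  omega

/-- Let `m ≥ 4` and let `x 0, …, x (m-1)` be distinct points of `ℝ²`
in strictly convex position, listed in cyclic order around their convex hull (each
consecutive pair `x i, x (i+1)` spans an edge of the hull).  With `H` the set of
balanced linear classifiers on these points (fraction of `1`-labels in `[1/4, 3/4]`):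
(i) `|H| = m·(m − 2⌈m/4⌉ + 1)`;
(ii) for consecutive vertices `x i, x (i+1)`, `|Δ(x i, x (i+1))| = m − 2⌈m/4⌉ + 1`;
(iii) consequently `|Δ(x i, x (i+1))| ≥ √|H| / 2`. -/
theorem convex_polygon_linear_classifiers_k_neighborly_bad
    (m : ℕ) [NeZero m] (hm : 4 ≤ m) (x : Fin m → (Fin 2 → ℝ))
    (hinj : Function.Injective x)
    (hstrictconvex : ∀ i, x i ∈ Set.extremePoints ℝ (convexHull ℝ (Set.range x)))
    (hcyclic : ∀ i : Fin m, ∃ (w : Fin 2 → ℝ) (b : ℝ),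
      dot2 w (x i) + b = 0 ∧ dot2 w (x (i + 1)) + b = 0 ∧
      ∀ j : Fin m, j ≠ i → j ≠ i + 1 → dot2 w (x j) + b < 0) :
    let H : Set (Fin m → Bool) :=
      {f | (∃ (w : Fin 2 → ℝ) (b : ℝ), ∀ i, f i = decide (0 < dot2 w (x i) + b)) ∧
        (1 : ℝ) / 4 ≤ ((Finset.univ.filter fun i => f i = true).card : ℝ) / m ∧
        ((Finset.univ.filter fun i => f i = true).card : ℝ) / m ≤ 3 / 4}
    let Delta : Fin m → Fin m → Set (Fin m → Bool) := fun a b =>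
      {f ∈ H | f a = false ∧ f b = true}
    H.ncard = m * (m - 2 * ⌈(m : ℚ) / 4⌉₊ + 1) ∧
    (∀ i : Fin m, (Delta i (i + 1)).ncard = m - 2 * ⌈(m : ℚ) / 4⌉₊ + 1) ∧
    (∀ i : Fin m, Real.sqrt H.ncard / 2 ≤ ((Delta i (i + 1)).ncard : ℝ)) := by
  intro H Delta
  have hcyc : IsCyclicHull x := hcyclic
  rw [ceil_quarter]
  set c := (m + 3) / 4 with hc
  have hc1 : 1 ≤ c := by omega
  have hc2 : 2 * c ≤ m := by omega
  have hmem : ∀ s : Fin m, ∀ k, 1 ≤ k → k < m → (arc s k ∈ H ↔ k ∈ Finset.Icc c (m - c)) := by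
    intro s k hk1 hk2
    have hlin := hcyc.arc_linear hm hinj s hk1 hk2
    change (IsLinearLabel x (arc s k) ∧ _) ↔ _
    rw [card_arc s hk2.le, balanced_iff hm, Finset.mem_Icc]
    exact and_iff_right hlin
  have hDelta : ∀ i, Delta i (i + 1) = (arc (i + 1)) '' (Finset.Icc c (m - c) : Set ℕ) := by
    intro i
    ext f
    constructor
    · rintro ⟨hf, h0, h1⟩
      obtain ⟨k, hk1, hk2, rfl⟩ := hcyc.eq_arc hm hinj hf.1 i h0 h1
      exact ⟨k, (hmem _ k hk1 hk2).1 hf, rfl⟩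
    · rintro ⟨k, hk, rfl⟩
      have hk' := Finset.mem_Icc.1 (Finset.mem_coe.1 hk)
      refine ⟨(hmem _ k (by omega) (by omega)).2 hk, ?_, arc_start (by omega)⟩
      have := arc_pred_start hm (s := i + 1) (k := k) (by omega)
      rwa [add_sub_cancel_right] at this
  have hH : H = (fun p : Fin m × ℕ => arc p.1 p.2) ''
      ((Finset.univ ×ˢ Finset.Icc c (m - c) : Finset (Fin m × ℕ)) : Set (Fin m × ℕ)) := by
    ext f
    constructor
    · intro hf
      have hcard := (balanced_iff hm).1 hf.2
      obtain ⟨b, hb⟩ := Finset.card_pos.1 (by omega :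
        0 < (Finset.univ.filter fun i => f i = true).card)
      have hne : (Finset.univ.filter fun i => f i = true) ≠ Finset.univ := by
        intro he
        rw [he, Finset.card_univ, Fintype.card_fin] at hcard
        omega
      obtain ⟨a, ha⟩ : ∃ a, f a = false := by
        by_contra hcon
        simp only [not_exists, Bool.not_eq_false] at hcon
        exact hne (Finset.filter_true_of_mem fun i _ => hcon i)
      obtain ⟨i, h0, h1⟩ := exists_rise ha (Finset.mem_filter.1 hb).2
      obtain ⟨k, hk1, hk2, rfl⟩ := hcyc.eq_arc hm hinj hf.1 i h0 h1
      exact ⟨(i + 1, k), by simpa using (hmem _ k hk1 hk2).1 hf, rfl⟩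
    · rintro ⟨⟨s, k⟩, hk, rfl⟩
      have hk' : k ∈ Finset.Icc c (m - c) := by simpa using hk
      have hk'' := Finset.mem_Icc.1 hk'
      exact (hmem s k (by omega) (by omega)).2 hk'
  have hHcard : H.ncard = m * (m - 2 * c + 1) := by
    rw [hH, Set.InjOn.ncard_image, Set.ncard_coe_finset, Finset.card_product,
      Finset.card_univ, Fintype.card_fin, Nat.card_Icc]
    · congr 1; omega
    · rintro ⟨s, k⟩ hk ⟨s', k'⟩ hk' heq
      simp only [Finset.coe_product, Finset.coe_univ, Set.mem_prod, Set.mem_univ, true_and,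
        Finset.coe_Icc, Set.mem_Icc] at hk hk'
      obtain ⟨h1, h2⟩ := arc_injective hm (by omega) (by omega) (by omega) heq
      exact Prod.ext h1 h2
  have hDcard : ∀ i, (Delta i (i + 1)).ncard = m - 2 * c + 1 := by
    intro i
    rw [hDelta, Set.InjOn.ncard_image, Set.ncard_coe_finset, Nat.card_Icc]
    · omega
    · intro k hk k' hk' heq
      simp only [Finset.coe_Icc, Set.mem_Icc] at hk hk'
      exact (arc_injective hm (by omega) (by omega) (by omega) heq).2
  refine ⟨hHcard, hDcard, fun i => ?_⟩
  rw [hDcard, hHcard, div_le_iff₀ (by norm_num)]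
  apply Real.sqrt_le_iff.2
  refine ⟨by positivity, ?_⟩
  have h4 : m * (m - 2 * c + 1) ≤ ((m - 2 * c + 1) * 2) ^ 2 := by
    have : m ≤ 4 * (m - 2 * c + 1) := by omega
    calc m * (m - 2 * c + 1) ≤ 4 * (m - 2 * c + 1) * (m - 2 * c + 1) :=
          Nat.mul_le_mul_right _ this
      _ = _ := by ring
  exact_mod_cast h4
end

section
/- Fix integers d ≥ 1 and m with 1 ≤ m ≤ d. Let X = {0,1}^d, and for each nonempty S ⊆ {1,…,d} with |S| ≤ m let h_S : X → {0,1} be defined by h_S(x) = 1 if and only if x_i = 1 for some i ∈ S. Let H = {h_S : S nonempty, |S| ≤ m}. Then the problem (H, X) is (m+1)-split-neighborly. -/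
/-!
Every test `x` has an edge to the all-zero test, since `Δ(x, 0)` is empty, so it suffices to
reach any test from `0` by switching on one bit at a time. If `x'` is `x` with bit `i` switched
on, then every `h_S` in `Δ(x, x')` has `i ∈ S`, and the whole content is the combinatorial lemma
`exists_balanced_test`: a family `W` of `n ≥ 2` sets of size at most `m`, all containing `i`, has
a set `T` such that at least `n / (m + 1)` members meet `T` and at least `n / (m + 1)` avoid it.

For the lemma, suppose no `T` works; then each `T` is *small* (fewer than `n / (m + 1)` members
meet it) or *big* (fewer than `n / (m + 1)` members avoid it). For `m ≥ 2` a union of two small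
sets is not big, hence small; so the set `L` of all `j` with `{j}` small is itself small. Let `A`
be the complement of `L`; it contains `i`. If `A \ {i}` has at least `m` elements, then every
member avoids one of `m` fixed elements of `A \ {i}`, whence `n ≤ m · n / (m + 1)`, which is
absurd. Otherwise every member other than `A` itself meets `L` or avoids one of the at most
`m - 1` elements of `A \ {i}`, whence `n ≤ 1 + m (n - 1) / (m + 1)`, contradicting `n ≥ 2`.
-/

/-- The monotone disjunction over the variables in `S`, evaluated at a bit assignment:
`h_S(y) = 1` iff `y i = 1` for some `i ∈ S`. -/
def disjEval {d : ℕ} (S : Finset (Fin d)) (y : Fin d → Bool) : Bool :=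
  decide (∃ i ∈ S, y i = true)

open Finset in
/-- A family of at least two sets of size at most `m` with a common element `i` is split by some
`T` so that both parts hold at least a fraction `1 / (m + 1)` of the family. -/
lemma exists_balanced_test {α : Type*} [Fintype α] [DecidableEq α] (m : ℕ) (i : α)
    (W : Finset (Finset α)) (hi : ∀ S ∈ W, i ∈ S) (hm : ∀ S ∈ W, #S ≤ m) (hW : 2 ≤ #W) :
    ∃ T : Finset α, #W ≤ (m + 1) * #{S ∈ W | ¬ Disjoint S T} ∧
      #W ≤ (m + 1) * #{S ∈ W | Disjoint S T} := by
  by_contra! hcon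
  have hsum (T : Finset α) : #{S ∈ W | Disjoint S T} + #{S ∈ W | ¬ Disjoint S T} = #W :=
    card_filter_add_card_filter_not _
  have hm2 : 2 ≤ m := by
    obtain ⟨S, hS, R, hR, hne⟩ := one_lt_card.1 (show 1 < #W by omega)
    by_contra! hlt
    have hsing (Q : Finset α) (hQ : Q ∈ W) : {i} = Q :=
      eq_of_subset_of_card_le (singleton_subset_iff.2 (hi Q hQ)) <| by
        rw [card_singleton]
        exact (hm Q hQ).trans (by omega)
    exact hne ((hsing _ hS).symm.trans (hsing _ hR))
  -- Small sets are closed under unions.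
  have hunion (T T' : Finset α) (hT : (m + 1) * #{S ∈ W | ¬ Disjoint S T} < #W)
      (hT' : (m + 1) * #{S ∈ W | ¬ Disjoint S T'} < #W) :
      (m + 1) * #{S ∈ W | ¬ Disjoint S (T ∪ T')} < #W := by
    by_contra! hge
    have h1 := hcon _ hge
    have h2 : #{S ∈ W | ¬ Disjoint S (T ∪ T')} ≤
        #{S ∈ W | ¬ Disjoint S T} + #{S ∈ W | ¬ Disjoint S T'} := by
      refine (card_le_card ?_).trans (card_union_le _ _)
      intro S
      simp only [mem_filter, mem_union, disjoint_union_right]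
      tauto
    have h3 := hsum (T ∪ T')
    nlinarith
  have hsmall (L : Finset α) :
      (∀ j ∈ L, (m + 1) * #{S ∈ W | ¬ Disjoint S {j}} < #W) →
        (m + 1) * #{S ∈ W | ¬ Disjoint S L} < #W := by
    induction L using Finset.induction_on with
    | empty =>
      intro _
      simpa using card_pos.1 (show 0 < #W by omega)
    | insert a s _ ih =>
      intro h
      rw [insert_eq]
      exact hunion _ _ (h a (mem_insert_self _ _)) (ih fun j hj => h j (mem_insert_of_mem hj))
  set A : Finset α := {j | #W ≤ (m + 1) * #{S ∈ W | ¬ Disjoint S {j}}} with hA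
  have hL := hsmall Aᶜ (fun j hj => by simpa [hA] using hj)
  have hbig (j : α) (hj : j ∈ A) : (m + 1) * #{S ∈ W | Disjoint S {j}} ≤ #W - 1 := by
    have := hcon {j} (by simpa [hA] using hj)
    omega
  have hbigsum (B : Finset α) (hB : B ⊆ A) :
      (m + 1) * ∑ j ∈ B, #{S ∈ W | Disjoint S {j}} ≤ #B * (#W - 1) := by
    rw [mul_sum, ← smul_eq_mul]
    exact sum_le_card_nsmul _ _ _ fun j hj => hbig j (hB hj)
  obtain ⟨n, hn⟩ : ∃ n, #W = n + 1 := ⟨#W - 1, by omega⟩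
  by_cases hc : m ≤ #(A.erase i)
  · obtain ⟨B, hBA, hBm⟩ := exists_subset_card_eq hc
    have h1 : #W ≤ ∑ j ∈ B, #{S ∈ W | Disjoint S {j}} := by
      refine (card_le_card ?_).trans card_biUnion_le
      intro S hS
      by_contra hno
      have hsub : B ⊆ S.erase i := by
        intro j hj
        refine mem_erase.2 ⟨(mem_erase.1 (hBA hj)).1, ?_⟩
        by_contra hjS
        exact hno (mem_biUnion.2 ⟨j, hj, by simp [hS, hjS]⟩)
      have h2 := card_le_card hsub
      rw [card_erase_of_mem (hi S hS)] at h2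
      have := hm S hS
      omega
    have h2 := hbigsum B (hBA.trans (erase_subset _ _))
    rw [hBm, hn] at h2
    rw [hn] at h1
    simp only [Nat.add_sub_cancel] at h2
    nlinarith
  · have h1 : #W ≤ #({A} ∪ ({S ∈ W | ¬ Disjoint S Aᶜ} ∪
        (A.erase i).biUnion fun j => {S ∈ W | Disjoint S {j}})) := by
      refine card_le_card fun S hS => ?_
      by_contra hno
      simp only [mem_union, mem_singleton, mem_filter, mem_biUnion, not_or, not_exists, not_and,
        not_not, hS, true_and, disjoint_singleton_right] at hno
      obtain ⟨hne, hd, hall⟩ := hno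
      refine hne (Subset.antisymm ?_ ?_)
      · intro a ha
        by_contra haA
        exact disjoint_left.1 hd ha (mem_compl.2 haA)
      · intro a ha
        by_cases hai : a = i
        · exact hai ▸ hi S hS
        · exact hall a (mem_erase.2 ⟨hai, ha⟩)
    have h2 := h1.trans ((card_union_le _ _).trans
      (Nat.add_le_add_left ((card_union_le _ _).trans
        (Nat.add_le_add_left card_biUnion_le _)) _))
    have h3 := hbigsum (A.erase i) (erase_subset _ _)
    rw [card_singleton] at h2
    obtain ⟨k, hk⟩ : ∃ k, m = k + 1 := ⟨m - 1, by omega⟩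
    have h4 : #(A.erase i) * (#W - 1) ≤ k * (#W - 1) := Nat.mul_le_mul_right _ (by omega)
    rw [hn] at h2 h3 h4 hL
    simp only [Nat.add_sub_cancel] at h3 h4
    subst hk
    nlinarith

lemma disjEval_eq_true {d : ℕ} (S : Finset (Fin d)) (y : Fin d → Bool) :
    disjEval S y = true ↔ ∃ i ∈ S, y i = true := by
  simp [disjEval]

lemma disjEval_injective {d : ℕ} : Function.Injective (disjEval (d := d)) := by
  intro S R h
  ext i
  -- The test with a single one in position `i` reads off membership of `i`.
  have := congrFun h (fun j => decide (j = i))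
  rw [Bool.eq_iff_iff] at this
  simpa [disjEval_eq_true] using this

/-- Fix `d ≥ 1` and `1 ≤ m ≤ d`.  Let `X = {0,1}^d` and let `H` be the
monotone disjunctions `h_S` for nonempty `S ⊆ {1,…,d}` with `|S| ≤ m`.  Then the problem
`(H, X)` is `(m+1)`-split-neighborly: the directed graph on `X` with an edge from `x` to
`x'` whenever every `V ⊆ Δ(x,x')` with `|V| ≥ 2` admits a test splitting it with split
constant `1/(m+1)` is strongly connected. -/
theorem disjunction_split_neighborly (d m : ℕ) (hd : 1 ≤ d) (hm1 : 1 ≤ m) (hmd : m ≤ d) :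
    let H : Set ((Fin d → Bool) → Bool) :=
      {h | ∃ S : Finset (Fin d), S.Nonempty ∧ S.card ≤ m ∧ h = disjEval S}
    let Delta : (Fin d → Bool) → (Fin d → Bool) → Set ((Fin d → Bool) → Bool) :=
      fun x x' => {h ∈ H | h x = false ∧ h x' = true}
    let edge : (Fin d → Bool) → (Fin d → Bool) → Prop := fun x x' =>
      ∀ V : Set ((Fin d → Bool) → Bool), V ⊆ Delta x x' → 2 ≤ V.ncard →
        ∃ x'' : Fin d → Bool,
          (1 : ℝ) / (m + 1) ≤ ({h ∈ V | h x'' = true}.ncard : ℝ) / V.ncard ∧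
          ({h ∈ V | h x'' = true}.ncard : ℝ) / V.ncard ≤ 1 - 1 / (m + 1)
    ∀ x x' : Fin d → Bool, Relation.ReflTransGen edge x x' := by
  intro H Delta edge
  have hdown (x : Fin d → Bool) : edge x (fun _ => false) := by
    intro V hV h2
    obtain ⟨h, hh⟩ := Set.nonempty_of_ncard_ne_zero (show V.ncard ≠ 0 by omega)
    obtain ⟨⟨S, -, -, rfl⟩, -, h1⟩ := hV hh
    simp [disjEval_eq_true] at h1
  have hup (s : Finset (Fin d)) (i : Fin d) :
      edge (fun j => decide (j ∈ s)) (fun j => decide (j ∈ insert i s)) := by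
    intro V hV h2
    classical
    let W : Finset (Finset (Fin d)) := {S | S.card ≤ m ∧ disjEval S ∈ V}
    have hVW : V = disjEval '' (W : Set (Finset (Fin d))) := by
      ext h
      constructor
      · intro hh
        obtain ⟨⟨S, -, hS, rfl⟩, -⟩ := hV hh
        exact ⟨S, by simp [W, hS, hh], rfl⟩
      · rintro ⟨S, hS, rfl⟩
        simp [W] at hS
        exact hS.2
    have hcard : V.ncard = W.card := by
      rw [hVW, Set.ncard_image_of_injective _ disjEval_injective, Set.ncard_coe_finset]
    have hi : ∀ S ∈ W, i ∈ S := by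
      intro S hS
      simp only [W, Finset.mem_filter, Finset.mem_univ, true_and] at hS
      obtain ⟨-, h0, h1⟩ := hV hS.2
      rw [← Bool.not_eq_true, disjEval_eq_true] at h0
      obtain ⟨j, hj, hj'⟩ := (disjEval_eq_true _ _).1 h1
      simp only [Finset.mem_insert, decide_eq_true_eq] at hj'
      rcases hj' with rfl | hj'
      · exact hj
      · exact absurd ⟨j, hj, by simpa using hj'⟩ h0
    obtain ⟨T, hT1, hT2⟩ := exists_balanced_test m i W hi
      (fun S hS => (Finset.mem_filter.1 hS).2.1) (hcard ▸ h2)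
    have hhit : {h ∈ V | h (fun j => decide (j ∈ T)) = true}.ncard =
        (W.filter fun S => ¬ Disjoint S T).card := by
      rw [← Set.ncard_coe_finset, ← Set.ncard_image_of_injective _ disjEval_injective]
      congr 1
      rw [hVW]
      ext h
      simp only [Set.mem_ofPred_eq, Set.mem_image, Finset.coe_filter, Finset.not_disjoint_iff,
        Finset.mem_coe]
      constructor
      · rintro ⟨⟨S, hS, rfl⟩, h1⟩
        exact ⟨S, ⟨hS, by simpa [disjEval_eq_true] using h1⟩, rfl⟩
      · rintro ⟨S, ⟨hS, h1⟩, rfl⟩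
        exact ⟨⟨S, hS, rfl⟩, by simpa [disjEval_eq_true] using h1⟩
    refine ⟨fun j => decide (j ∈ T), ?_⟩
    have hsum : (W.filter fun S => Disjoint S T).card +
        (W.filter fun S => ¬ Disjoint S T).card = W.card :=
      Finset.card_filter_add_card_filter_not _
    have hpos : (0 : ℝ) < W.card := by
      have : 0 < W.card := by omega
      exact_mod_cast this
    have hm0 : (0 : ℝ) < m + 1 := by positivity
    rw [hhit, hcard]
    generalize (W.filter fun S => ¬ Disjoint S T).card = c at *
    generalize (W.filter fun S => Disjoint S T).card = c' at *
    have hT1' : (W.card : ℝ) ≤ (m + 1) * c := by exact_mod_cast hT1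
    have hT2' : (W.card : ℝ) ≤ (m + 1) * c' := by exact_mod_cast hT2
    have hsum' : (c' : ℝ) + c = W.card := by exact_mod_cast hsum
    constructor
    · rw [div_le_div_iff₀ hm0 hpos]
      linarith
    · rw [show (1 : ℝ) - 1 / (m + 1) = m / (m + 1) by field_simp; ring,
        div_le_div_iff₀ hpos hm0]
      nlinarith
  have hreach (s : Finset (Fin d)) :
      Relation.ReflTransGen edge (fun _ => false) (fun j => decide (j ∈ s)) := by
    induction s using Finset.induction_on with
    | empty => simpa using Relation.ReflTransGen.refl
    | insert i s _ ih => exact ih.tail (hup s i)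
  intro x x'
  refine Relation.ReflTransGen.head (hdown x) ?_
  simpa using hreach (Finset.univ.filter fun j => x' j = true)
end

section
/- Fix integers d ≥ 1 and m with 1 ≤ m ≤ d. Let x, x' ∈ {0,1}^d differ in exactly one coordinate j, with x_j = 0 and x'_j = 1. Let V be any set of nonempty subsets S ⊆ {1,…,d} with |S| ≤ m such that every S ∈ V satisfies h_S(x) = 0 and h_S(x') = 1, where h_S(y) = 1 iff y_i = 1 for some i ∈ S. If |V| ≥ 2, then there exists x'' ∈ {0,1}^d such that 1/(m+1) ≤ |{S ∈ V : h_S(x'') = 1}|/|V| ≤ m/(m+1). -/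
open Finset

/-- The number of members of `V` that meet `T`. -/
def hit {α : Type*} [DecidableEq α] (V : Finset (Finset α)) (T : Finset α) : ℕ :=
  #{S ∈ V | ∃ i ∈ T, i ∈ S}

/-- The number of members of `V` that do not contain all of `T`. -/
def missSome {α : Type*} [DecidableEq α] (V : Finset (Finset α)) (T : Finset α) : ℕ :=
  #{S ∈ V | ∃ i ∈ T, i ∉ S}

lemma hit_insert_le {α : Type*} [DecidableEq α] (V : Finset (Finset α)) (a : α) (L : Finset α) :
    hit V (insert a L) ≤ hit V {a} + hit V L := by
  unfold hit
  refine le_trans (card_le_card ?_) (card_union_le _ _)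
  intro S
  simp only [mem_filter, mem_union, mem_insert, mem_singleton]
  grind

lemma missSome_insert_le {α : Type*} [DecidableEq α] (V : Finset (Finset α)) (a : α)
    (L : Finset α) : missSome V (insert a L) ≤ missSome V {a} + missSome V L := by
  unfold missSome
  refine le_trans (card_le_card ?_) (card_union_le _ _)
  intro S
  simp only [mem_filter, mem_union, mem_insert, mem_singleton]
  grind

lemma hit_add_missSome_singleton {α : Type*} [DecidableEq α] (V : Finset (Finset α)) (a : α) :
    hit V {a} + missSome V {a} = #V := by
  simp only [hit, missSome, mem_singleton, exists_eq_left]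
  exact card_filter_add_card_filter_not _

lemma missSome_le_of_heavy {α : Type*} [DecidableEq α] (V : Finset (Finset α)) (m : ℕ)
    (H : Finset α) (hH : ∀ i ∈ H, (m + 1) * missSome V {i} ≤ #V) :
    (m + 1) * missSome V H ≤ #H * #V := by
  induction H using Finset.induction_on with
  | empty => simp [missSome]
  | insert a L ha ih =>
    have h1 := ih fun i hi => hH i (mem_insert_of_mem hi)
    have h2 := hH a (mem_insert_self _ _)
    have h3 := missSome_insert_le V a L
    rw [card_insert_of_notMem ha]
    nlinarith

/-- If each variable in `L` is light but `L` as a whole meets at least `n/(m+1)` members, then some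
subset of `L` meets between `n/(m+1)` and `2n/(m+1)` members. -/
lemma exists_hit_window {α : Type*} [DecidableEq α] (V : Finset (Finset α)) (m : ℕ)
    (hpos : 0 < #V) (L : Finset α) (hL : ∀ i ∈ L, (m + 1) * hit V {i} < #V)
    (hc : #V ≤ (m + 1) * hit V L) :
    ∃ T, #V ≤ (m + 1) * hit V T ∧ (m + 1) * hit V T ≤ 2 * #V := by
  induction L using Finset.induction_on with
  | empty => simp [hit] at hc; simp [hc] at hpos
  | insert a L ha ih =>
    by_cases h : #V ≤ (m + 1) * hit V L
    · exact ih (fun i hi => hL i (mem_insert_of_mem hi)) h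
    · have h2 := hL a (mem_insert_self _ _)
      have h3 := hit_insert_le V a L
      exact ⟨_, hc, by nlinarith⟩

/-- The combinatorial core: a family of at least two sets of size at most `m` through a common
point `j` is split by some `T` with split constant `1/(m+1)`. -/
lemma exists_split_s4 {α : Type*} [Fintype α] [DecidableEq α] (V : Finset (Finset α)) (m : ℕ) (j : α)
    (hj : ∀ S ∈ V, j ∈ S) (hcard : ∀ S ∈ V, #S ≤ m) (h2 : 2 ≤ #V) :
    ∃ T, #V ≤ (m + 1) * hit V T ∧ (m + 1) * hit V T ≤ m * #V := by
  by_contra! hno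
  -- A variable `i` separating two members of `V`.
  obtain ⟨A, hA, B, hB, i, hiA, hiB⟩ : ∃ A ∈ V, ∃ B ∈ V, ∃ i, i ∈ A ∧ i ∉ B := by
    obtain ⟨A, hA, B, hB, hne⟩ := one_lt_card.1 h2
    by_contra! h
    exact hne (Subset.antisymm (fun i hi => h A hA B hB i hi) (fun i hi => h B hB A hA i hi))
  have hij : i ≠ j := fun h => hiB (h ▸ hj B hB)
  have hm : 2 ≤ m := (one_lt_card.2 ⟨i, hiA, j, hj A hA, hij⟩).trans_le (hcard A hA)
  have hdich : ∀ a, (m + 1) * hit V {a} < #V ∨ (m + 1) * missSome V {a} < #V := by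
    intro a
    by_contra! h
    have h1 := hno {a} h.1
    have h3 := hit_add_missSome_singleton V a
    nlinarith [h.2]
  by_cases hn : #V ≤ m
  · have hpos : 0 < hit V {i} := card_pos.2 ⟨A, by simp [hA, hiA]⟩
    have hpos' : 0 < missSome V {i} := card_pos.2 ⟨B, by simp [hB, hiB]⟩
    rcases hdich i with h | h <;> nlinarith
  push Not at hn
  let H : Finset α := {a | a ≠ j ∧ (m + 1) * missSome V {a} < #V}
  let L : Finset α := {a | a ≠ j ∧ (m + 1) * hit V {a} < #V}
  have hHm : #H < m := by
    by_contra! h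
    obtain ⟨K, hKH, hK⟩ := exists_subset_card_eq h
    have h1 := missSome_le_of_heavy V m K fun a ha => (mem_filter.1 (hKH ha)).2.2.le
    have h3 : missSome V K = #V := by
      unfold missSome
      congr 1
      refine filter_true_of_mem fun S hS => ?_
      by_contra! hall
      have hjK : j ∉ K := fun hjK => (mem_filter.1 (hKH hjK)).2.1 rfl
      have h4 : #(insert j K) ≤ #S := card_le_card (insert_subset (hj S hS) hall)
      rw [card_insert_of_notMem hjK] at h4
      have := hcard S hS
      omega
    rw [h3, hK] at h1
    nlinarith
  have hmissH := missSome_le_of_heavy V m H fun a ha => (mem_filter.1 ha).2.2.le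
  -- The only set meeting no light variable and containing all heavy ones is `insert j H`.
  have hcover : #V ≤ 1 + missSome V H + hit V L := by
    have hsub : V ⊆ ({insert j H} ∪ {S ∈ V | ∃ i ∈ H, i ∉ S}) ∪ {S ∈ V | ∃ i ∈ L, i ∈ S} := by
      intro S hS
      simp only [mem_union, mem_singleton, mem_filter, hS, true_and]
      by_contra! h
      obtain ⟨⟨hne, hall⟩, hnone⟩ := h
      refine hne (Subset.antisymm (fun a ha => ?_) (insert_subset (hj S hS) hall))
      by_cases haj : a = j
      · simp [haj]
      · rcases hdich a with h | h
        · exact absurd ha (hnone a (by simp [L, haj, h]))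
        · exact mem_insert_of_mem (by simp [H, haj, h])
    refine (card_le_card hsub).trans ((card_union_le _ _).trans ?_)
    exact Nat.add_le_add_right ((card_union_le _ _).trans (by simp [missSome])) _
  have hL : #V ≤ (m + 1) * hit V L := by
    have h5 : (#H + 1) * #V ≤ m * #V := Nat.mul_le_mul_right _ hHm
    nlinarith
  obtain ⟨T, hT1, hT2⟩ := exists_hit_window V m (by omega) L (fun a ha => (mem_filter.1 ha).2.2) hL
  have h6 := hno T hT1
  nlinarith

/-- Fix `d ≥ 1`, `1 ≤ m ≤ d`.  Let the tests `x, x' ∈ {0,1}^d` differ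
exactly in coordinate `j`, with `x j = 0` and `x' j = 1`.  Let `V` be a set of nonempty
subsets `S ⊆ {1,…,d}` of size at most `m` such that every `S ∈ V` satisfies
`h_S(x) = 0` and `h_S(x') = 1`.  If `|V| ≥ 2`, then there is a test `x''` with
`1/(m+1) ≤ |{S ∈ V : h_S(x'') = 1}|/|V| ≤ m/(m+1)`. -/
theorem disjunction_adjacent_tests_split (d m : ℕ) (hd : 1 ≤ d) (hm1 : 1 ≤ m)
    (hmd : m ≤ d) (x x' : Fin d → Bool) (j : Fin d)
    (hxj : x j = false) (hx'j : x' j = true) (hagree : ∀ i : Fin d, i ≠ j → x i = x' i)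
    (V : Set (Finset (Fin d)))
    (hV : ∀ S ∈ V, S.Nonempty ∧ S.card ≤ m ∧ disjEval S x = false ∧ disjEval S x' = true)
    (h2 : 2 ≤ V.ncard) :
    ∃ x'' : Fin d → Bool,
      (1 : ℝ) / (m + 1) ≤ ({S ∈ V | disjEval S x'' = true}.ncard : ℝ) / V.ncard ∧
      ({S ∈ V | disjEval S x'' = true}.ncard : ℝ) / V.ncard ≤ m / (m + 1) := by
  classical
  have hjS : ∀ S ∈ V, j ∈ S := by
    intro S hS
    obtain ⟨-, -, h0, h1⟩ := hV S hS
    simp only [disjEval, decide_eq_false_iff_not, decide_eq_true_eq] at h0 h1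
    obtain ⟨i, hi, hix⟩ := h1
    by_cases hij : i = j
    · exact hij ▸ hi
    · exact absurd ⟨i, hi, (hagree i hij).trans hix⟩ h0
  have hVn : V.ncard = #V.toFinset := Set.ncard_eq_toFinset_card' V
  obtain ⟨T, hT1, hT2⟩ := exists_split_s4 V.toFinset m j
    (fun S hS => hjS S (by simpa using hS)) (fun S hS => (hV S (by simpa using hS)).2.1)
    (hVn ▸ h2)
  refine ⟨fun i => decide (i ∈ T), ?_⟩
  have hc : {S ∈ V | disjEval S (fun i => decide (i ∈ T)) = true}.ncard = hit V.toFinset T := by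
    rw [hit, ← Set.ncard_coe_finset]
    congr 1
    ext S
    simp [disjEval, and_comm]
  rw [hc]
  rw [← hVn] at hT1 hT2
  have hn : (0 : ℝ) < V.ncard := by exact_mod_cast (by omega : 0 < V.ncard)
  have hm : (0 : ℝ) < (m : ℝ) + 1 := by positivity
  have hT1' : (V.ncard : ℝ) ≤ (m + 1) * hit V.toFinset T := by exact_mod_cast hT1
  have hT2' : ((m : ℝ) + 1) * hit V.toFinset T ≤ m * V.ncard := by exact_mod_cast hT2
  constructor
  · rw [div_le_div_iff₀ hm hn]; linarith
  · rw [div_le_div_iff₀ hn hm]; linarith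
end

section
/- Fix an integer d ≥ 1 and a real q with 0 < q < 1. Let V be a finite nonempty collection of subsets S ⊆ {1,…,d}, let i₀ ∈ {1,…,d} be an index with i₀ ∈ S for every S ∈ V, let x' ∈ {0,1}^d satisfy x'_{i₀} = 0, and let Z' ⊆ {j ≠ i₀ : x'_j = 0}. For j ∈ Z', let x^{(j)} denote x' with its j-th bit changed to 1. Suppose |{S ∈ V : h_S(x') = 1}| < q·|V| and, for every j ∈ Z', |{S ∈ V : h_S(x^{(j)}) = 1}| > (1 − q)·|V|, where h_S(y) = 1 iff y_i = 1 for some i ∈ S. Then |{S ∈ V : Z' ∪ {i₀} ⊆ S}| > (1 − (|Z'| + 1)·q)·|V|. -/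
/-- Fix `d ≥ 1` and `0 < q < 1`.  Let `V` be a finite nonempty
collection of subsets `S ⊆ {1,…,d}`, all containing a fixed index `i₀`, let
`x' ∈ {0,1}^d` have `x' i₀ = 0`, and let `Z'` be a set of indices `j ≠ i₀` with
`x' j = 0`.  Writing `x⁽ʲ⁾` for `x'` with its `j`-th bit flipped to `1`, if
`|{S ∈ V : h_S(x') = 1}| < q·|V|` and for every `j ∈ Z'`,
`|{S ∈ V : h_S(x⁽ʲ⁾) = 1}| > (1 − q)·|V|`, then
`|{S ∈ V : Z' ∪ {i₀} ⊆ S}| > (1 − (|Z'| + 1)·q)·|V|`. -/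
theorem disjunction_union_bound (d : ℕ) (hd : 1 ≤ d) (q : ℝ) (hq0 : 0 < q) (hq1 : q < 1)
    (V : Finset (Finset (Fin d))) (hVne : V.Nonempty)
    (i₀ : Fin d) (hi₀ : ∀ S ∈ V, i₀ ∈ S)
    (x' : Fin d → Bool) (hx'i₀ : x' i₀ = false)
    (Z' : Finset (Fin d)) (hZ' : ∀ j ∈ Z', j ≠ i₀ ∧ x' j = false)
    (hlow : ((V.filter fun S => disjEval S x' = true).card : ℝ) < q * V.card)
    (hhigh : ∀ j ∈ Z', (1 - q) * (V.card : ℝ) <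
      ((V.filter fun S => disjEval S (Function.update x' j true) = true).card : ℝ)) :
    (1 - (Z'.card + 1) * q) * (V.card : ℝ) <
      ((V.filter fun S => Z' ∪ {i₀} ⊆ S).card : ℝ) := by
  classical
  set A := V.filter fun S => disjEval S x' = true with hA
  set B : Fin d → Finset (Finset (Fin d)) := fun j =>
    V.filter fun S => ¬ disjEval S (Function.update x' j true) = true with hB
  set G := V.filter fun S => Z' ∪ {i₀} ⊆ S with hG
  have hcover : V ⊆ A ∪ Z'.biUnion B ∪ G := by
    intro S hS
    by_contra hn
    simp only [hA, hB, hG, Finset.mem_union, Finset.mem_biUnion, Finset.mem_filter, hS,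
      true_and, not_or, not_exists, not_and, not_not] at hn
    obtain ⟨⟨h0, h1⟩, h2⟩ := hn
    apply h2
    intro j hj
    rcases Finset.mem_union.1 hj with hj | hj
    -- The witness in `S` for `h_S(x⁽ʲ⁾) = 1` must be `j`: any other would give `h_S(x') = 1`.
    · obtain ⟨i, hiS, hi⟩ := of_decide_eq_true (h1 j hj)
      by_cases hij : i = j
      · exact hij ▸ hiS
      · rw [Function.update_of_ne hij] at hi
        exact absurd (decide_eq_true ⟨i, hiS, hi⟩) h0
    · rw [Finset.mem_singleton.1 hj]
      exact hi₀ S hS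
  have hB_le : ∀ j ∈ Z', ((B j).card : ℝ) ≤ q * V.card := by
    intro j hj
    have hsplit : ((V.filter fun S => disjEval S (Function.update x' j true) = true).card : ℝ)
        + (B j).card = V.card := by
      exact_mod_cast Finset.card_filter_add_card_filter_not (s := V)
        (fun S => disjEval S (Function.update x' j true) = true)
    linarith [hhigh j hj]
  have hcard : (V.card : ℝ) ≤ A.card + ∑ j ∈ Z', ((B j).card : ℝ) + G.card := by
    have h1 := Finset.card_le_card hcover
    have h2 := Finset.card_union_le (A ∪ Z'.biUnion B) G
    have h3 := Finset.card_union_le A (Z'.biUnion B)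
    have h4 := Finset.card_biUnion_le (s := Z') (t := B)
    exact_mod_cast (by omega : V.card ≤ A.card + ∑ j ∈ Z', (B j).card + G.card)
  have hsum := Finset.sum_le_card_nsmul Z' (fun j => ((B j).card : ℝ)) _ hB_le
  rw [nsmul_eq_mul] at hsum
  linarith
end

section
/- Fix integers d ≥ 1, m ≥ 1 and ℓ ≥ 1. Let X = {0,1}^d and let H be the set of all functions h : X → {0,1} of the form h(x) = ∧_{j=1}^{ℓ} (∨_{i ∈ S_j} x_i), where S_1, …, S_ℓ are pairwise disjoint nonempty subsets of {1,…,d} each of size at most m (assume d ≥ ℓ·m so that such families exist). Then the problem (H, X) is (m + 1 + 3(ℓ − 1))-split-neighborly. -/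
/-!
Suppose a set `V` of at least two hypotheses admits no test with split constant `1/K`. Then at every
test `y` some value `g y` is taken by more than a fraction `1 - 1/K` of `V`. By the union bound, for
any `K` tests some `h ∈ V` agrees with `g` on all of them, and for any `K - 1` tests two distinct
members of `V` do (`exists_majority`). A contradiction follows once `K - 1` tests are found on which agreement with `g`
determines the hypothesis.

Such tests are read off from the clauses of `g`, that is, the minimal sets `C` such that `g` is false
on the complement of `C`. A clause has at most `m` elements (`clause_card_le`).

For `ℓ ≥ 2` the clauses of `g` are pairwise disjoint and there are exactly `ℓ` of them, each of these
facts being forced by agreement on few tests. The `ℓ` complements of clauses together with `m`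
transversals of the clauses covering all their elements then determine `h`: agreement on the former
places one clause of `h` inside each clause of `g`, agreement on the latter makes these inclusions
equalities. Since `ℓ + m ≤ K - 1`, every ordered pair of tests is an edge (`not_indivisible`).

For `ℓ = 1` one has `K = m + 1` and the edges used are those adding a single variable `i`: every
hypothesis in `Δ(x, x + i)` contains `i`, so that only the complement of the clause `C` of `g` and
the sets obtained by deleting an element other than `i` from `C` are needed, at most `m` tests in
all (`not_indivisible_one`). Pairs `x' ≤ x` are always edges, by monotonicity.
-/

/-- The monotone CNF formula `∧_{j=1}^{ℓ} (∨_{i ∈ S j} x i)` evaluated at a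
bit assignment `y ∈ {0,1}^d`. -/
def cnfEval {d l : ℕ} (S : Fin l → Finset (Fin d)) (y : Fin d → Bool) : Bool :=
  decide (∀ j : Fin l, ∃ i ∈ S j, y i = true)

/-- The test whose set of zero coordinates is `C`. -/
def offTest {d : ℕ} (C : Finset (Fin d)) : Fin d → Bool := fun i => decide (i ∉ C)

/-- The side conditions on the clauses of a hypothesis: nonempty, of size at most `m`, pairwise
disjoint. -/
def IsClauseFamily {d l : ℕ} (m : ℕ) (S : Fin l → Finset (Fin d)) : Prop :=
  (∀ j, (S j).Nonempty) ∧ (∀ j, (S j).card ≤ m) ∧ ∀ j j', j ≠ j' → Disjoint (S j) (S j')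

theorem cnfEval_offTest {d l : ℕ} (S : Fin l → Finset (Fin d)) (C : Finset (Fin d)) :
    cnfEval S (offTest C) = false ↔ ∃ j, S j ⊆ C := by
  simp [cnfEval, offTest, Finset.subset_iff]

theorem cnfEval_mono {d l : ℕ} (S : Fin l → Finset (Fin d)) {x y : Fin d → Bool}
    (hxy : ∀ i, x i = true → y i = true) (hx : cnfEval S x = true) : cnfEval S y = true := by
  simp only [cnfEval, decide_eq_true_eq] at hx ⊢
  intro j
  obtain ⟨i, hi, h⟩ := hx j
  exact ⟨i, hi, hxy i h⟩

/-! ### The majority function of an unsplit set -/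

/-- If no test splits `V` with constant `1/K`, there is a function `g` such that any `K` tests leave
a member of `V` agreeing with `g`, and any `K - 1` tests leave two distinct ones. -/
theorem exists_majority {α : Type*} (V : Finset (α → Bool)) (K : ℕ)
    (hV : 2 ≤ V.card)
    (hns : ∀ y, (V.filter fun h => h y = true).card * K < V.card ∨
      (V.filter fun h => h y = false).card * K < V.card) :
    ∃ g : α → Bool,
      (∀ Y : Finset α, Y.card ≤ K → ∃ h ∈ V, ∀ y ∈ Y, h y = g y) ∧
      (∀ Y : Finset α, Y.card < K →
        ∃ h ∈ V, ∃ h' ∈ V, h ≠ h' ∧ (∀ y ∈ Y, h y = g y) ∧ ∀ y ∈ Y, h' y = g y) := by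
  classical
  have hg : ∀ y, ∃ b : Bool, (V.filter fun h => h y ≠ b).card * K < V.card := by
    intro y
    rcases hns y with h | h
    · exact ⟨false, by simpa using h⟩
    · exact ⟨true, by simpa using h⟩
  choose g hg using hg
  refine ⟨g, ?_⟩
  have key : ∀ Y : Finset α,
      (V.filter fun h => ¬ ∀ y ∈ Y, h y = g y).card * K ≤ Y.card * (V.card - 1) := by
    intro Y
    have h1 : (V.filter fun h => ¬ ∀ y ∈ Y, h y = g y) ⊆
        Y.biUnion fun y => V.filter fun h => h y ≠ g y := by
      intro h hh
      simp only [Finset.mem_filter, not_forall, Finset.mem_biUnion] at hh ⊢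
      obtain ⟨hv, y, hy, hne⟩ := hh
      exact ⟨y, hy, hv, hne⟩
    calc _ ≤ (∑ y ∈ Y, (V.filter fun h => h y ≠ g y).card) * K :=
          Nat.mul_le_mul_right _ ((Finset.card_le_card h1).trans Finset.card_biUnion_le)
      _ = ∑ y ∈ Y, (V.filter fun h => h y ≠ g y).card * K := Finset.sum_mul _ _ _
      _ ≤ ∑ y ∈ Y, (V.card - 1) := Finset.sum_le_sum fun y _ => Nat.le_sub_one_of_lt (hg y)
      _ = Y.card * (V.card - 1) := by simp
  have hsplit : ∀ Y : Finset α, (V.filter fun h => ∀ y ∈ Y, h y = g y).card +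
      (V.filter fun h => ¬ ∀ y ∈ Y, h y = g y).card = V.card := fun Y =>
    Finset.card_filter_add_card_filter_not _
  constructor
  · intro Y hY
    by_contra hcon
    push Not at hcon
    have h0 : (V.filter fun h => ∀ y ∈ Y, h y = g y) = ∅ := by
      apply Finset.filter_eq_empty_iff.2
      intro h hh hall
      obtain ⟨y, hy, hne⟩ := hcon h hh
      exact hne (hall y hy)
    have h1 := hsplit Y
    have h2 := key Y
    rw [h0, Finset.card_empty, zero_add] at h1
    rw [h1] at h2
    rcases Nat.eq_zero_or_pos K with hK | hK
    · -- for `K = 0` the family `Y` is empty, and every member of `V` agrees with `g` on it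
      have : Y = ∅ := Finset.card_eq_zero.1 (by omega)
      subst this
      simp at h1
      omega
    · have h3 : Y.card * (V.card - 1) ≤ K * (V.card - 1) := Nat.mul_le_mul_right _ hY
      have h4 : K * (V.card - 1) < K * V.card := Nat.mul_lt_mul_of_pos_left (by omega) hK
      rw [mul_comm] at h2
      omega
  · intro Y hY
    have h1 := hsplit Y
    have h2 := key Y
    have h3 : 1 < (V.filter fun h => ∀ y ∈ Y, h y = g y).card := by
      by_contra hle
      have h4 : (V.card - 1) * K ≤ Y.card * (V.card - 1) :=
        (Nat.mul_le_mul_right K (by omega)).trans h2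
      rw [mul_comm] at h4
      have := Nat.le_of_mul_le_mul_right h4 (by omega)
      omega
    obtain ⟨h, hh, h', hh', hne⟩ := Finset.one_lt_card.1 h3
    rw [Finset.mem_filter] at hh hh'
    exact ⟨h, hh.1, h', hh'.1, hne, hh.2, hh'.2⟩

/-- The data produced by `exists_majority` for a set of CNF hypotheses given by their clause families,
with tests written as `offTest C`: `G C` says that the majority value at `offTest C` is false. -/
structure Indivisible {d : ℕ} (l K : ℕ) (P : (Fin l → Finset (Fin d)) → Prop)
    (G : Finset (Fin d) → Prop) : Prop where
  one : ∀ Y : Finset (Finset (Fin d)), Y.card ≤ K →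
    ∃ S, P S ∧ ∀ C ∈ Y, (G C ↔ ∃ j, S j ⊆ C)
  two : ∀ Y : Finset (Finset (Fin d)), Y.card < K →
    ∃ S S', P S ∧ P S' ∧ cnfEval S ≠ cnfEval S' ∧
      (∀ C ∈ Y, (G C ↔ ∃ j, S j ⊆ C)) ∧ ∀ C ∈ Y, (G C ↔ ∃ j, S' j ⊆ C)

theorem exists_indivisible {d l K : ℕ} (P : (Fin l → Finset (Fin d)) → Prop)
    (V : Finset ((Fin d → Bool) → Bool)) (hV : 2 ≤ V.card)
    (hP : ∀ h ∈ V, ∃ S, P S ∧ h = cnfEval S)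
    (hns : ∀ y, (V.filter fun h => h y = true).card * K < V.card ∨
      (V.filter fun h => h y = false).card * K < V.card) :
    ∃ G : Finset (Fin d) → Prop, Indivisible l K P G := by
  classical
  obtain ⟨g, h1, h2⟩ := exists_majority V K hV hns
  have tr : ∀ (S : Fin l → Finset (Fin d)) (Y : Finset (Finset (Fin d))),
      (∀ y ∈ Y.image offTest, cnfEval S y = g y) →
      ∀ C ∈ Y, (g (offTest C) = false ↔ ∃ j, S j ⊆ C) := by
    intro S Y h C hC
    rw [← h _ (Finset.mem_image_of_mem _ hC), cnfEval_offTest]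
  refine ⟨fun C => g (offTest C) = false, ⟨?_, ?_⟩⟩
  · intro Y hY
    obtain ⟨h, hh, ha⟩ := h1 (Y.image offTest) (Finset.card_image_le.trans hY)
    obtain ⟨S, hS, rfl⟩ := hP h hh
    exact ⟨S, hS, tr S Y ha⟩
  · intro Y hY
    obtain ⟨h, hh, h', hh', hne, ha, ha'⟩ :=
      h2 (Y.image offTest) (Finset.card_image_le.trans_lt hY)
    obtain ⟨S, hS, rfl⟩ := hP h hh
    obtain ⟨S', hS', rfl⟩ := hP h' hh'
    exact ⟨S, S', hS, hS', hne, tr S Y ha, tr S' Y ha'⟩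

/-! ### Clauses of the majority function -/

/-- When `G` is the family of sets on whose complement a function is false, its minimal members are
the clauses of that function. -/
theorem exists_clause {d : ℕ} {G : Finset (Fin d) → Prop} {A : Finset (Fin d)} (hA : G A) :
    ∃ C ⊆ A, Minimal G C := by
  obtain ⟨C, hC, hmin⟩ := exists_minimal_le_of_wellFoundedLT G A hA
  exact ⟨C, hC, hmin⟩

theorem not_erase_of_minimal {d : ℕ} {G : Finset (Fin d) → Prop} {C : Finset (Fin d)}
    (hC : Minimal G C) {t : Fin d} (ht : t ∈ C) : ¬ G (C.erase t) := fun h =>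
  absurd (hC.2 h (Finset.erase_subset t C) ht) (Finset.notMem_erase t C)

/-- A clause `S j ⊆ C` of a hypothesis none of whose clauses lies in `C.erase t` contains `t`. -/
theorem mem_of_not_subset_erase {d l : ℕ} {S : Fin l → Finset (Fin d)} {C : Finset (Fin d)}
    {t : Fin d} (h : ¬ ∃ j, S j ⊆ C.erase t) {j : Fin l} (hj : S j ⊆ C) : t ∈ S j := by
  by_contra ht
  exact h ⟨j, Finset.subset_erase.2 ⟨hj, ht⟩⟩

/-! ### A single clause -/

/-- For `ℓ = 1`, hypotheses sharing a common variable `i` are always split with constant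
`1/(m + 1)`. -/
theorem not_indivisible_one {d m : ℕ} (i : Fin d) (G : Finset (Fin d) → Prop) :
    ¬ Indivisible 1 (m + 1) (fun S => IsClauseFamily m S ∧ i ∈ S 0) G := by
  classical
  intro hG
  have huniv : G Finset.univ := by
    obtain ⟨S, _, hS⟩ := hG.one {Finset.univ} (by simp)
    exact (hS _ (by simp)).2 ⟨0, Finset.subset_univ _⟩
  obtain ⟨C, -, hC⟩ := exists_clause huniv
  -- on these tests, agreement with `G` forces the clause to contain `T` and lie in `C`
  have agree : ∀ (T : Finset (Fin d)), T ⊆ C → ∀ S : Fin 1 → Finset (Fin d), i ∈ S 0 →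
      (∀ D ∈ insert C (T.image fun t => C.erase t), (G D ↔ ∃ j, S j ⊆ D)) →
      insert i T ⊆ S 0 ∧ S 0 ⊆ C := by
    intro T hT S hi hS
    obtain ⟨j, hj⟩ := (hS C (by simp)).1 hC.1
    obtain rfl : j = 0 := Subsingleton.elim _ _
    refine ⟨Finset.insert_subset hi fun t ht => ?_, hj⟩
    have := (hS (C.erase t)
      (Finset.mem_insert_of_mem (Finset.mem_image_of_mem _ ht))).not.1
        (not_erase_of_minimal hC (hT ht))
    exact mem_of_not_subset_erase this hj
  have hcard : ∀ T : Finset (Fin d),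
      (insert C (T.image fun t => C.erase t)).card ≤ T.card + 1 := fun T =>
    (Finset.card_insert_le _ _).trans (Nat.succ_le_succ Finset.card_image_le)
  have hiC : i ∈ C := by
    obtain ⟨S, hS, ha⟩ := hG.one _ ((hcard ∅).trans (by simp))
    exact (agree ∅ (by simp) S hS.2 ha).2 hS.2
  have hle : (C.erase i).card < m := by
    by_contra hcon
    obtain ⟨T, hT, hTc⟩ := Finset.exists_subset_card_eq (not_lt.1 hcon)
    obtain ⟨S, hS, ha⟩ := hG.one _ ((hcard T).trans (by omega))
    have h1 := (agree T (hT.trans (Finset.erase_subset _ _)) S hS.2 ha).1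
    have h2 := Finset.card_le_card h1
    have hiT : i ∉ T := fun h => Finset.notMem_erase i C (hT h)
    rw [Finset.card_insert_of_notMem hiT] at h2
    have := hS.1.2.1 0
    omega
  obtain ⟨S, S', hS, hS', hne, ha, ha'⟩ := hG.two _ (lt_of_le_of_lt (hcard (C.erase i)) (by omega))
  apply hne
  have e : ∀ S : Fin 1 → Finset (Fin d), i ∈ S 0 →
      (∀ D ∈ insert C ((C.erase i).image fun t => C.erase t), (G D ↔ ∃ j, S j ⊆ D)) →
      S = fun _ => C := by
    intro S hi ha
    obtain ⟨h1, h2⟩ := agree _ (Finset.erase_subset _ _) S hi ha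
    rw [Finset.insert_erase hiC] at h1
    funext j
    obtain rfl : j = 0 := Subsingleton.elim _ _
    exact h2.antisymm h1
  rw [e S hS.2 ha, e S' hS'.2 ha']

/-! ### Several clauses -/

section
variable {d l m K : ℕ} {G : Finset (Fin d) → Prop}

theorem clause_card_le (hG : Indivisible l K (IsClauseFamily m) G) (hK : m + 2 ≤ K)
    {C : Finset (Fin d)} (hC : Minimal G C) : C.card ≤ m := by
  classical
  by_contra hcon
  obtain ⟨T, hT, hTc⟩ := Finset.exists_subset_card_eq (Nat.succ_le_of_lt (not_le.1 hcon))
  obtain ⟨S, hS, ha⟩ := hG.one (insert C (T.image fun t => C.erase t))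
    ((Finset.card_insert_le _ _).trans
      ((Nat.succ_le_succ Finset.card_image_le).trans (by omega)))
  obtain ⟨j, hj⟩ := (ha C (by simp)).1 hC.1
  have hsub : T ⊆ S j := fun t ht =>
    mem_of_not_subset_erase ((ha (C.erase t)
      (Finset.mem_insert_of_mem (Finset.mem_image_of_mem _ ht))).not.1
        (not_erase_of_minimal hC (hT ht))) hj
  have h1 := Finset.card_le_card hsub
  have h2 := hS.2.1 j
  omega

theorem clause_nonempty (hG : Indivisible l K (IsClauseFamily m) G) (hK : 1 ≤ K)
    {C : Finset (Fin d)} (hC : G C) : C.Nonempty := by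
  obtain ⟨S, hS, ha⟩ := hG.one {C} (by simpa using hK)
  obtain ⟨j, hj⟩ := (ha C (by simp)).1 hC
  exact (hS.1 j).mono hj

/-- If two distinct clauses `C`, `C'` of the majority function shared an element `t`, a hypothesis
agreeing with it on five tests would have clauses inside `C` and `C'` both containing `t`, hence one
and the same clause inside `C ∩ C'`, against the minimality of `C`. -/
theorem clause_disjoint (hG : Indivisible l K (IsClauseFamily m) G) (hK : 5 ≤ K)
    {C C' : Finset (Fin d)} (hC : Minimal G C) (hC' : Minimal G C') (hne : C ≠ C') :
    Disjoint C C' := by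
  classical
  rw [Finset.disjoint_left]
  intro t ht ht'
  obtain ⟨s, hs, hs'⟩ : ∃ s ∈ C, s ∉ C' := by
    by_contra hcon
    push Not at hcon
    exact hne (Finset.Subset.antisymm hcon (hC'.2 hC.1 hcon))
  obtain ⟨S, hS, ha⟩ := hG.one {C, C', C.erase t, C'.erase t, C.erase s}
    (Finset.card_le_five.trans hK)
  obtain ⟨j, hj⟩ := (ha C (by simp)).1 hC.1
  obtain ⟨j', hj'⟩ := (ha C' (by simp)).1 hC'.1
  have h1 := mem_of_not_subset_erase
    ((ha (C.erase t) (by simp)).not.1 (not_erase_of_minimal hC ht)) hj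
  have h2 := mem_of_not_subset_erase
    ((ha (C'.erase t) (by simp)).not.1 (not_erase_of_minimal hC' ht')) hj'
  have h3 := mem_of_not_subset_erase
    ((ha (C.erase s) (by simp)).not.1 (not_erase_of_minimal hC hs)) hj
  have hjj : j = j' := by
    by_contra hjj
    exact Finset.disjoint_left.1 (hS.2.2 j j' hjj) h1 h2
  subst hjj
  exact hs' (hj' h3)

/-- A set meeting every clause of the majority function is a test on which it is true. -/
theorem not_compl_of_transversal {T : Finset (Fin d)}
    (hT : ∀ C, Minimal G C → ∃ t ∈ T, t ∈ C) : ¬ G Tᶜ := by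
  intro h
  obtain ⟨C, hCT, hC⟩ := exists_clause h
  obtain ⟨t, ht, htC⟩ := hT C hC
  exact Finset.mem_compl.1 (hCT htC) ht

/-- For `ℓ ≥ 2` and `K ≥ max (m + ℓ + 1) 5`, every set of at least two hypotheses is split with
constant `1/K`. -/
theorem not_indivisible (hl : 2 ≤ l) (hm : 1 ≤ m) (hK5 : 5 ≤ K) (hK : m + l + 1 ≤ K) :
    ¬ Indivisible l K (IsClauseFamily m) G := by
  classical
  intro hG
  set 𝒞 : Finset (Finset (Fin d)) := Finset.univ.filter fun C => Minimal G C with h𝒞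
  have mem𝒞 : ∀ {C}, C ∈ 𝒞 ↔ Minimal G C := by simp [h𝒞]
  have hdisj : ∀ C ∈ 𝒞, ∀ C' ∈ 𝒞, ∀ t, t ∈ C → t ∈ C' → C = C' := by
    intro C hC C' hC' t ht ht'
    by_contra hne
    exact Finset.disjoint_left.1
      (clause_disjoint hG hK5 (mem𝒞.1 hC) (mem𝒞.1 hC') hne) ht ht'
  -- distinct clauses of the majority function contain distinct clauses of a hypothesis
  have hinj : ∀ 𝒟 ⊆ 𝒞, ∀ S : Fin l → Finset (Fin d), IsClauseFamily m S →
      ∀ f : Finset (Fin d) → Fin l, (∀ C ∈ 𝒟, S (f C) ⊆ C) → Set.InjOn f 𝒟 := by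
    intro 𝒟 h𝒟 S hS f hf C hC C' hC' hCC'
    obtain ⟨t, ht⟩ := hS.1 (f C)
    exact hdisj C (h𝒟 hC) C' (h𝒟 hC') t (hf C hC ht) (hf C' hC' (hCC' ▸ ht))
  have hle : 𝒞.card ≤ l := by
    by_contra hcon
    obtain ⟨𝒟, h𝒟, h𝒟c⟩ := Finset.exists_subset_card_eq (Nat.succ_le_of_lt (not_le.1 hcon))
    obtain ⟨S, hS, ha⟩ := hG.one 𝒟 (by omega)
    have : ∀ C, ∃ j, C ∈ 𝒟 → S j ⊆ C := by
      intro C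
      by_cases hC : C ∈ 𝒟
      · obtain ⟨j, hj⟩ := (ha C hC).1 (mem𝒞.1 (h𝒟 hC)).1
        exact ⟨j, fun _ => hj⟩
      · exact ⟨⟨0, by omega⟩, fun h => absurd h hC⟩
    choose f hf using this
    have h1 := Finset.card_le_card_of_injOn f (t := Finset.univ) (by simp)
      (hinj 𝒟 h𝒟 S hS f hf)
    simp at h1
    omega
  -- an enumeration, with repetitions, of each clause by `Fin m`
  have henum : ∀ C, ∃ e : Fin m → Fin d, C ∈ 𝒞 → (∀ r, e r ∈ C) ∧ ∀ t ∈ C, ∃ r, e r = t := by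
    intro C
    by_cases hC : C ∈ 𝒞
    · have hne := clause_nonempty hG (by omega) (mem𝒞.1 hC).1
      have hcard := clause_card_le hG (by omega) (mem𝒞.1 hC)
      obtain ⟨t0, ht0⟩ := hne
      have : Nonempty C := ⟨⟨t0, ht0⟩⟩
      obtain ⟨φ⟩ : Nonempty (C ↪ Fin m) :=
        Function.Embedding.nonempty_of_card_le (by simpa using hcard)
      refine ⟨fun r => (Function.invFun φ r : C), fun _ => ⟨fun r => Subtype.coe_prop _, ?_⟩⟩
      intro t ht
      exact ⟨φ ⟨t, ht⟩, congrArg Subtype.val (Function.leftInverse_invFun φ.injective ⟨t, ht⟩)⟩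
    · obtain ⟨S, hS, -⟩ := hG.one ∅ (by simp)
      obtain ⟨t, -⟩ := hS.1 ⟨0, by omega⟩
      exact ⟨fun _ => t, fun h => absurd h hC⟩
  choose e he using henum
  set T : Fin m → Finset (Fin d) := fun r => 𝒞.image fun C => e C r with hT
  have hTG : ∀ r, ¬ G (T r)ᶜ := fun r => not_compl_of_transversal fun C hC =>
    ⟨e C r, Finset.mem_image_of_mem _ (mem𝒞.2 hC), (he C (mem𝒞.2 hC)).1 r⟩
  -- agreement on a transversal makes every clause of the hypothesis meet it
  have hmeet : ∀ r, ∀ S : Fin l → Finset (Fin d), (G (T r)ᶜ ↔ ∃ j, S j ⊆ (T r)ᶜ) →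
      ∀ j, ∃ C ∈ 𝒞, e C r ∈ S j := by
    intro r S ha j
    have h1 := ha.not.1 (hTG r)
    push Not at h1
    obtain ⟨t, ht, htT⟩ := Finset.not_subset.1 (h1 j)
    obtain ⟨C, hC, rfl⟩ := Finset.mem_image.1 (by simpa using htT : t ∈ T r)
    exact ⟨C, hC, ht⟩
  have hge : l ≤ 𝒞.card := by
    obtain ⟨S, hS, ha⟩ := hG.one {(T ⟨0, hm⟩)ᶜ} (by simp; omega)
    choose f hf hfS using hmeet ⟨0, hm⟩ S (ha _ (by simp))
    have h1 := Finset.card_le_card_of_injOn f (s := Finset.univ) (t := 𝒞) (fun j _ => hf j) (by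
      intro j _ j' _ hjj
      by_contra hne
      exact Finset.disjoint_left.1 (hS.2.2 j j' hne) (hfS j) (hjj ▸ hfS j'))
    simpa using h1
  -- agreement on the clauses and the transversals determines the hypothesis
  have hdet : ∀ S : Fin l → Finset (Fin d), IsClauseFamily m S →
      (∀ D ∈ 𝒞 ∪ Finset.univ.image (fun r => (T r)ᶜ), (G D ↔ ∃ j, S j ⊆ D)) →
      Finset.univ.image S = 𝒞 := by
    intro S hS ha
    have hsub : 𝒞 ⊆ Finset.univ.image S := by
      intro C hC
      obtain ⟨j, hj⟩ := (ha C (Finset.mem_union_left _ hC)).1 (mem𝒞.1 hC).1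
      refine Finset.mem_image.2 ⟨j, Finset.mem_univ _, hj.antisymm fun t ht => ?_⟩
      obtain ⟨r, rfl⟩ := (he C hC).2 t ht
      obtain ⟨C', hC', hmem⟩ := hmeet r S (ha _ (Finset.mem_union_right _
        (Finset.mem_image_of_mem _ (Finset.mem_univ r)))) j
      obtain rfl := hdisj C hC C' hC' _ (hj hmem) ((he C' hC').1 r)
      exact hmem
    refine (Finset.eq_of_subset_of_card_le hsub ?_).symm
    exact Finset.card_image_le.trans (by simpa using hge)
  obtain ⟨S, S', hS, hS', hne, ha, ha'⟩ :=
    hG.two (𝒞 ∪ Finset.univ.image fun r => (T r)ᶜ) (by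
      have h1 := Finset.card_union_le 𝒞 (Finset.univ.image fun r => (T r)ᶜ)
      have h2 : (Finset.univ.image fun r => (T r)ᶜ).card ≤ m := by
        simpa using (Finset.card_image_le (s := (Finset.univ : Finset (Fin m)))
          (f := fun r => (T r)ᶜ))
      omega)
  apply hne
  have hev : ∀ S : Fin l → Finset (Fin d), Finset.univ.image S = 𝒞 →
      cnfEval S = fun y => decide (∀ C ∈ 𝒞, ∃ i ∈ C, y i = true) := by
    intro S h
    funext y
    simp [cnfEval, ← h]
  rw [hev S (hdet S hS ha), hev S' (hdet S' hS' ha')]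

end

/-! ### Edges and strong connectivity -/

/-- A set of at least two hypotheses that cannot be indivisible is split by some test; this is the
passage from the counting form of the argument to the ratios in the edge relation. -/
theorem exists_split_s8 {d l : ℕ} (K : ℕ) (hK : 1 ≤ K) (P : (Fin l → Finset (Fin d)) → Prop)
    (hno : ∀ G, ¬ Indivisible l K P G)
    (V : Set ((Fin d → Bool) → Bool)) (hP : ∀ h ∈ V, ∃ S, P S ∧ h = cnfEval S)
    (hV : 2 ≤ V.ncard) :
    ∃ y : Fin d → Bool,
      1 / (K : ℝ) ≤ ({h ∈ V | h y = true}.ncard : ℝ) / V.ncard ∧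
      ({h ∈ V | h y = true}.ncard : ℝ) / V.ncard ≤ 1 - 1 / (K : ℝ) := by
  classical
  by_contra hcon
  push Not at hcon
  obtain ⟨W, rfl⟩ : ∃ W : Finset ((Fin d → Bool) → Bool), (W : Set _) = V :=
    ⟨V.toFinite.toFinset, by simp⟩
  rw [Set.ncard_coe_finset] at hV hcon
  obtain ⟨G, hG⟩ := exists_indivisible (K := K) P W hV (fun h hh => hP h hh) (by
    intro y
    by_contra hy
    push Not at hy
    have hc := hcon y
    have hs : {h | h ∈ (W : Set _) ∧ h y = true} =
        ((W.filter fun h => h y = true : Finset _) : Set ((Fin d → Bool) → Bool)) := by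
      ext h; simp
    rw [hs, Set.ncard_coe_finset] at hc
    have hadd : (W.filter fun h => h y = true).card + (W.filter fun h => h y = false).card
        = W.card := by
      simpa using Finset.card_filter_add_card_filter_not (s := W) (fun h => h y = true)
    set a := (W.filter fun h => h y = true).card
    set b := (W.filter fun h => h y = false).card
    have hK' : (0 : ℝ) < K := by exact_mod_cast hK
    have hW : (0 : ℝ) < W.card := by exact_mod_cast (by omega : 0 < W.card)
    have h1 : (W.card : ℝ) ≤ a * K := by exact_mod_cast hy.1
    have h2 : (W.card : ℝ) ≤ b * K := by exact_mod_cast hy.2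
    have h3 : (a : ℝ) + b = W.card := by exact_mod_cast hadd
    refine absurd (hc ((div_le_div_iff₀ hK' hW).2 (by linarith))) (not_lt.2 ?_)
    have h4 : 1 / (K : ℝ) ≤ b / W.card := (div_le_div_iff₀ hK' hW).2 (by linarith)
    have h5 : (a : ℝ) / W.card + b / W.card = 1 := by
      rw [← add_div, h3, div_self hW.ne']
    linarith)
  exact hno G hG

/-- Fix `d, m, ℓ ≥ 1` with `d ≥ ℓ·m`.  Let `X = {0,1}^d` and let `H`
consist of all conjunctions of `ℓ` pairwise variable-disjoint nonempty monotone
disjunctions over `d` variables, each of size at most `m`.  Then the problem `(H, X)`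
is `(m + 1 + 3(ℓ − 1))`-split-neighborly: the directed graph on `X` with an edge from
`x` to `x'` whenever every `V ⊆ Δ(x,x')` with `|V| ≥ 2` admits a test splitting it with
split constant `1/(m + 1 + 3(ℓ − 1))` is strongly connected. -/
theorem cnf_split_neighborly (d m l : ℕ) (hd : 1 ≤ d) (hm : 1 ≤ m) (hl : 1 ≤ l)
    (hdml : l * m ≤ d) :
    let H : Set ((Fin d → Bool) → Bool) :=
      {h | ∃ S : Fin l → Finset (Fin d),
        (∀ j, (S j).Nonempty) ∧ (∀ j, (S j).card ≤ m) ∧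
        (∀ j j', j ≠ j' → Disjoint (S j) (S j')) ∧ h = cnfEval S}
    let K : ℝ := (m : ℝ) + 1 + 3 * ((l : ℝ) - 1)
    let Delta : (Fin d → Bool) → (Fin d → Bool) → Set ((Fin d → Bool) → Bool) :=
      fun x x' => {h ∈ H | h x = false ∧ h x' = true}
    let edge : (Fin d → Bool) → (Fin d → Bool) → Prop := fun x x' =>
      ∀ V : Set ((Fin d → Bool) → Bool), V ⊆ Delta x x' → 2 ≤ V.ncard →
        ∃ x'' : Fin d → Bool,
          1 / K ≤ ({h ∈ V | h x'' = true}.ncard : ℝ) / V.ncard ∧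
          ({h ∈ V | h x'' = true}.ncard : ℝ) / V.ncard ≤ 1 - 1 / K
    ∀ x x' : Fin d → Bool, Relation.ReflTransGen edge x x' := by
  intro H K Delta edge x x'
  rcases Nat.lt_or_ge 1 l with hl2 | hl1
  · apply Relation.ReflTransGen.single
    intro V hV hcard
    have hKc : K = ((m + 1 + 3 * (l - 1) : ℕ) : ℝ) := by
      simp only [K]; push_cast [Nat.cast_sub hl]; ring
    rw [hKc]
    refine exists_split_s8 _ (by omega) (IsClauseFamily m)
      (fun G => not_indivisible hl2 hm (by omega) (by omega)) V ?_ hcard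
    intro h hh
    obtain ⟨⟨S, h1, h2, h3, h4⟩, -⟩ := hV hh
    exact ⟨S, ⟨h1, h2, h3⟩, h4⟩
  · obtain rfl : l = 1 := by omega
    have hKc : K = ((m + 1 : ℕ) : ℝ) := by
      simp [K]
    have hdown : ∀ a b : Fin d → Bool, (∀ i, b i = true → a i = true) → edge a b := by
      intro a b hab V hV hcard
      obtain ⟨h, hh⟩ : V.Nonempty := Set.nonempty_of_ncard_ne_zero (by omega)
      obtain ⟨⟨S, -, -, -, rfl⟩, ha, hb⟩ := hV hh
      rw [cnfEval_mono S hab hb] at ha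
      exact absurd ha (by decide)
    have hup : ∀ (a : Fin d → Bool) (i : Fin d), edge a (Function.update a i true) := by
      intro a i V hV hcard
      rw [hKc]
      refine exists_split_s8 _ (by omega) (fun S => IsClauseFamily m S ∧ i ∈ S 0)
        (fun G => not_indivisible_one i G) V ?_ hcard
      intro h hh
      obtain ⟨⟨S, h1, h2, h3, rfl⟩, ha, hb⟩ := hV hh
      refine ⟨S, ⟨⟨h1, h2, h3⟩, ?_⟩, rfl⟩
      by_contra hi
      simp only [cnfEval, decide_eq_true_eq, decide_eq_false_iff_not] at ha hb
      apply ha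
      intro j
      obtain ⟨k, hk, hk'⟩ := hb j
      obtain rfl : j = 0 := Subsingleton.elim _ _
      have hki : k ≠ i := fun h => hi (h ▸ hk)
      exact ⟨k, hk, by rwa [Function.update_of_ne hki] at hk'⟩
    -- from `x`, all coordinates can be raised one at a time
    have hraise : ∀ A : Finset (Fin d),
        Relation.ReflTransGen edge x (fun i => if i ∈ A then true else x i) := by
      intro A
      induction A using Finset.induction_on with
      | empty => simpa using Relation.ReflTransGen.refl
      | insert i A _ ih =>
        refine ih.tail ?_
        convert hup _ i using 1
        funext k
        by_cases hk : k = i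
        · subst hk; simp
        · simp [hk]
    exact (hraise Finset.univ).tail (hdown _ _ (by simp))
end

section
/- Fix d ≥ 1 and a_1, …, a_d ∈ ℕ, and let S = {z ∈ ℤ^d : |z_i| ≤ a_i for all i} be an axis-symmetric box. Let X = ℤ^d, for z ∈ ℤ^d define h_z : X → {0,1} by h_z(x) = 1 iff x − z ∈ S, and let H be any finite nonempty subset of {h_z : z ∈ ℤ^d}. Then the problem (H, X) is 4-split-neighborly. -/
/-!
Every ordered pair `(x, x')` is an edge, so strong connectivity is immediate. If `V ⊆ Δ(x, x')`,
all locations of hypotheses in `V` lie in the box of radii `a` around `x'`. On that box, a test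
moved up (down) in some coordinates cuts out an upper (lower) orthant, constraining exactly those
coordinates. Let `n = |V| ≥ 2` and suppose no test selects between `n/4` and `3n/4` elements.

In each coordinate `i` the number of locations with `z i ≥ t` jumps, as `t` grows, from above `3n/4`
to below `n/4` at some value `v i` (`exists_heavy_value`). Hence fewer than `n/4` locations violate
`z i ≥ v i`, and fewer than `n/4` violate `z i ≤ v i`. Imposing the constraints `z i ≥ v i` one
coordinate at a time loses fewer than `n/4` elements per step, so the count can never jump over the
forbidden interval and stays above `3n/4` (`card_filter_forall_gt`); the same holds for `z i ≤ v i`.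
The two resulting orthants intersect in more than `n/2 ≥ 1` elements, all located at `v`,
contradicting that distinct hypotheses have distinct locations.
-/

/-- If each `P i` fails for fewer than a quarter of `T`, and no conjunction of the `P i` holds for
between a quarter and three quarters of `T`, then every conjunction holds for more than three
quarters: adding one conjunct cannot jump over the gap. -/
lemma card_filter_forall_gt {α ι : Type*} (T : Finset α) (hT : 0 < T.card)
    (P : ι → α → Prop) [∀ i, DecidablePred (P i)]
    [∀ s : Finset ι, DecidablePred (fun h => ∀ i ∈ s, P i h)]
    (hP : ∀ i, 4 * (T.filter (fun h => ¬ P i h)).card < T.card)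
    (hgap : ∀ s : Finset ι, T.card ≤ 4 * (T.filter (fun h => ∀ i ∈ s, P i h)).card →
      3 * T.card < 4 * (T.filter (fun h => ∀ i ∈ s, P i h)).card) (s : Finset ι) :
    3 * T.card < 4 * (T.filter (fun h => ∀ i ∈ s, P i h)).card := by
  classical
  induction s using Finset.induction_on with
  | empty => simp; omega
  | insert j s _ ih =>
    apply hgap
    have hsub : T.filter (fun h => ∀ i ∈ s, P i h) ⊆
        T.filter (fun h => ∀ i ∈ insert j s, P i h) ∪ T.filter (fun h => ¬ P j h) := by
      intro h hh
      simp only [Finset.mem_filter, Finset.mem_union, Finset.mem_insert, forall_eq_or_imp] at hh ⊢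
      tauto
    have h1 := (Finset.card_le_card hsub).trans (Finset.card_union_le _ _)
    have h2 := hP j
    omega

/-- One-dimensional jump: a family of integers in `[c - r, c + r]` none of whose upper
half-lines `{u ≥ t}`, `t ≥ c - r`, captures between a quarter and three quarters of it has a value
`v` such that fewer than a quarter lie strictly on either side of it. -/
lemma exists_heavy_value {α : Type*} (T : Finset α) (hT : 0 < T.card) (u : α → ℤ) (c r : ℤ)
    (hbox : ∀ h ∈ T, |c - u h| ≤ r)
    (hgap : ∀ t : ℤ, c - r ≤ t → T.card ≤ 4 * (T.filter (fun h => t ≤ u h)).card →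
      3 * T.card < 4 * (T.filter (fun h => t ≤ u h)).card) :
    ∃ v : ℤ, c - r ≤ v ∧ v ≤ c + r ∧ 4 * (T.filter (fun h => ¬ v ≤ u h)).card < T.card ∧
      4 * (T.filter (fun h => ¬ u h ≤ v)).card < T.card := by
  classical
  have hex : ∃ k : ℕ, 4 * (T.filter (fun h => c - r + (k : ℤ) ≤ u h)).card ≤ 3 * T.card := by
    refine ⟨(2 * r + 1).toNat, ?_⟩
    rw [Finset.filter_false_of_mem]
    · simp
    · intro h hh
      have := abs_le.mp (hbox h hh)
      omega
  have hspec := Nat.find_spec hex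
  obtain ⟨k, hk⟩ : ∃ k, Nat.find hex = k + 1 := by
    refine Nat.exists_eq_succ_of_ne_zero fun h0 => ?_
    rw [h0, Finset.filter_true_of_mem] at hspec
    · omega
    · intro h hh
      have := abs_le.mp (hbox h hh)
      push_cast
      omega
  have hmin := Nat.find_min hex (m := k) (by omega)
  rw [hk] at hspec
  have hg := hgap (c - r + ((k + 1 : ℕ) : ℤ)) (by omega)
  refine ⟨c - r + k, by omega, ?_, ?_, ?_⟩
  · have hpos : 0 < (T.filter (fun h => c - r + (k : ℤ) ≤ u h)).card := by omega
    obtain ⟨h, hh⟩ := Finset.card_pos.mp hpos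
    rw [Finset.mem_filter] at hh
    have := abs_le.mp (hbox h hh.1)
    omega
  · have := T.card_filter_add_card_filter_not (fun h => c - r + (k : ℤ) ≤ u h)
    omega
  · have he : T.filter (fun h => ¬ u h ≤ c - r + (k : ℤ)) =
        T.filter (fun h => c - r + ((k + 1 : ℕ) : ℤ) ≤ u h) := by
      apply Finset.filter_congr
      intro h _
      push_cast
      omega
    rw [he]
    omega

/-- Any family of at least two distinct points inside a single box is split with constant `1/4` by
some translate of that box. -/
lemma exists_split_s9 {α : Type*} {d : ℕ} (a : Fin d → ℕ) (T : Finset α) (hT : 2 ≤ T.card)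
    (z : α → Fin d → ℤ) (hz : Set.InjOn z T) (c : Fin d → ℤ)
    (hbox : ∀ h ∈ T, ∀ i, |c i - z h i| ≤ (a i : ℤ)) :
    ∃ x : Fin d → ℤ,
      T.card ≤ 4 * (T.filter (fun h => ∀ i, |x i - z h i| ≤ (a i : ℤ))).card ∧
      4 * (T.filter (fun h => ∀ i, |x i - z h i| ≤ (a i : ℤ))).card ≤ 3 * T.card := by
  classical
  by_contra! hno
  have hbox' : ∀ h ∈ T, ∀ i, -(a i : ℤ) ≤ c i - z h i ∧ c i - z h i ≤ a i :=
    fun h hh i => abs_le.mp (hbox h hh i)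
  have hup : ∀ (w : Fin d → ℤ), (∀ i, c i - a i ≤ w i) → ∀ s : Finset (Fin d),
      T.card ≤ 4 * (T.filter (fun h => ∀ i ∈ s, w i ≤ z h i)).card →
      3 * T.card < 4 * (T.filter (fun h => ∀ i ∈ s, w i ≤ z h i)).card := by
    intro w hw s
    have he : T.filter (fun h => ∀ i ∈ s, w i ≤ z h i) = T.filter (fun h => ∀ i,
        |(if i ∈ s then w i + a i else c i) - z h i| ≤ (a i : ℤ)) := by
      apply Finset.filter_congr
      intro h hh
      refine forall_congr' fun i => ?_
      have h1 := hbox' h hh i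
      have h2 := hw i
      rw [abs_le]
      split_ifs with hi
      · simp only [hi, true_imp_iff]; omega
      · simp only [hi, false_imp_iff, true_iff]; exact h1
    rw [he]
    exact hno _
  have hdown : ∀ (w : Fin d → ℤ), (∀ i, w i ≤ c i + a i) → ∀ s : Finset (Fin d),
      T.card ≤ 4 * (T.filter (fun h => ∀ i ∈ s, z h i ≤ w i)).card →
      3 * T.card < 4 * (T.filter (fun h => ∀ i ∈ s, z h i ≤ w i)).card := by
    intro w hw s
    have he : T.filter (fun h => ∀ i ∈ s, z h i ≤ w i) = T.filter (fun h => ∀ i,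
        |(if i ∈ s then w i - a i else c i) - z h i| ≤ (a i : ℤ)) := by
      apply Finset.filter_congr
      intro h hh
      refine forall_congr' fun i => ?_
      have h1 := hbox' h hh i
      have h2 := hw i
      rw [abs_le]
      split_ifs with hi
      · simp only [hi, true_imp_iff]; omega
      · simp only [hi, false_imp_iff, true_iff]; exact h1
    rw [he]
    exact hno _
  have hv : ∀ i, ∃ v : ℤ, c i - a i ≤ v ∧ v ≤ c i + a i ∧
      4 * (T.filter (fun h => ¬ v ≤ z h i)).card < T.card ∧
      4 * (T.filter (fun h => ¬ z h i ≤ v)).card < T.card := by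
    intro i
    refine exists_heavy_value T (by omega) (fun h => z h i) (c i) (a i)
      (fun h hh => hbox h hh i) ?_
    intro t ht
    -- Only coordinate `i` is constrained, so the other entries of the threshold are irrelevant.
    have := hup (Function.update (fun j => c j - a j) i t) (by
      intro j
      by_cases hj : j = i
      · subst hj; simpa using ht
      · simp [hj]) {i}
    simpa using this
  choose v hv1 hv2 hv3 hv4 using hv
  have hU := card_filter_forall_gt T (by omega) (fun i h => v i ≤ z h i) hv3 (hup v hv1)
    Finset.univ
  have hL := card_filter_forall_gt T (by omega) (fun i h => z h i ≤ v i) hv4 (hdown v hv2)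
    Finset.univ
  set U := T.filter (fun h => ∀ i ∈ Finset.univ, v i ≤ z h i) with hUdef
  set L := T.filter (fun h => ∀ i ∈ Finset.univ, z h i ≤ v i) with hLdef
  have hunion : (U ∪ L).card ≤ T.card :=
    Finset.card_le_card (Finset.union_subset (Finset.filter_subset _ _) (Finset.filter_subset _ _))
  have hsum := Finset.card_union_add_card_inter U L
  have hone : (U ∩ L).card ≤ 1 := by
    have hloc : ∀ h ∈ U ∩ L, h ∈ T ∧ z h = v := by
      intro h hh
      simp only [hUdef, hLdef, Finset.mem_inter, Finset.mem_filter, Finset.mem_univ,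
        true_imp_iff] at hh
      exact ⟨hh.1.1, funext fun i => le_antisymm (hh.2.2 i) (hh.1.2 i)⟩
    refine Finset.card_le_one.mpr fun p hp q hq => ?_
    exact hz (hloc p hp).1 (hloc q hq).1 ((hloc p hp).2.trans (hloc q hq).2.symm)
  omega

/-- Fix `d ≥ 1` and an axis-symmetric box
`S = {z ∈ ℤ^d : |z i| ≤ a i}`.  Tests are points `x ∈ ℤ^d`, hypotheses are the
functions `h_z(x) = 1[x − z ∈ S]`, and `H` is any finite nonempty subset of
`{h_z : z ∈ ℤ^d}`.  Then the problem `(H, X)` is `4`-split-neighborly: the directed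
graph on `X = ℤ^d` with an edge from `x` to `x'` whenever every finite
`V ⊆ Δ(x,x')` with `|V| ≥ 2` admits a test splitting it with split constant `1/4`
is strongly connected. -/
theorem box_object_localization_split_neighborly (d : ℕ) (hd : 1 ≤ d) (a : Fin d → ℕ)
    (H : Set ((Fin d → ℤ) → Bool))
    (hH : H ⊆ {h | ∃ z : Fin d → ℤ,
      h = fun x : Fin d → ℤ => decide (∀ i : Fin d, |x i - z i| ≤ (a i : ℤ))})
    (hfin : H.Finite) (hne : H.Nonempty) :
    let Delta : (Fin d → ℤ) → (Fin d → ℤ) → Set ((Fin d → ℤ) → Bool) :=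
      fun x x' => {h ∈ H | h x = false ∧ h x' = true}
    let edge : (Fin d → ℤ) → (Fin d → ℤ) → Prop := fun x x' =>
      ∀ V : Set ((Fin d → ℤ) → Bool), V ⊆ Delta x x' → V.Finite → 2 ≤ V.ncard →
        ∃ x'' : Fin d → ℤ,
          (1 : ℝ) / 4 ≤ ({h ∈ V | h x'' = true}.ncard : ℝ) / V.ncard ∧
          ({h ∈ V | h x'' = true}.ncard : ℝ) / V.ncard ≤ 1 - 1 / 4
    ∀ x x' : Fin d → ℤ, Relation.ReflTransGen edge x x' := by
  classical
  intro Delta edge x x'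
  refine Relation.ReflTransGen.single ?_
  intro V hV hVfin hcard
  have hloc : ∀ h : (Fin d → ℤ) → Bool, ∃ z : Fin d → ℤ, h ∈ V →
      h = fun x : Fin d → ℤ => decide (∀ i : Fin d, |x i - z i| ≤ (a i : ℤ)) := by
    intro h
    by_cases hh : h ∈ V
    · obtain ⟨z, hz⟩ := hH (hV hh).1
      exact ⟨z, fun _ => hz⟩
    · exact ⟨0, fun hh' => absurd hh' hh⟩
  choose z hz using hloc
  have hiff : ∀ h ∈ V, ∀ y, h y = true ↔ ∀ i, |y i - z h i| ≤ (a i : ℤ) := by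
    intro h hh y
    have := congrFun (hz h hh) y
    rw [this, decide_eq_true_iff]
  have hTcard : hVfin.toFinset.card = V.ncard := (Set.ncard_eq_toFinset_card V hVfin).symm
  obtain ⟨y, hy1, hy2⟩ := exists_split_s9 a hVfin.toFinset (by omega) z
    (by
      intro p hp q hq hpq
      rw [hz p (by simpa using hp), hz q (by simpa using hq), hpq])
    x'
    (by
      intro h hh
      have hh' : h ∈ V := by simpa using hh
      exact (hiff h hh' x').mp (hV hh').2.2)
  have hcount : {h ∈ V | h y = true}.ncard =
      (hVfin.toFinset.filter (fun h => ∀ i, |y i - z h i| ≤ (a i : ℤ))).card := by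
    rw [← Set.ncard_coe_finset]
    congr 1
    ext h
    simp only [Set.mem_ofPred_eq, Finset.coe_filter, Set.Finite.mem_toFinset]
    exact and_congr_right fun hh => hiff h hh y
  rw [← hcount, hTcard] at hy1 hy2
  have hpos : (0 : ℝ) < V.ncard := by exact_mod_cast (by omega : 0 < V.ncard)
  have hy1' : (V.ncard : ℝ) ≤ 4 * ({h ∈ V | h y = true}.ncard : ℝ) := by exact_mod_cast hy1
  have hy2' : 4 * ({h ∈ V | h y = true}.ncard : ℝ) ≤ 3 * (V.ncard : ℝ) := by exact_mod_cast hy2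
  refine ⟨y, ?_, ?_⟩
  · rw [le_div_iff₀ hpos]; linarith
  · rw [div_le_iff₀ hpos]; linarith
end

section
/- Fix d ≥ 1 and let S ⊆ ℤ^d be a finite set that is axis-symmetric (for each coordinate i, if z ∈ S then the point obtained from z by negating its i-th coordinate is also in S) and axis-convex (if z, z' ∈ S differ in only one coordinate, then every integer point on the segment between z and z' is also in S). Let X = ℤ^d, for z ∈ ℤ^d define h_z : X → {0,1} by h_z(x) = 1 iff x − z ∈ S, and let H be any finite nonempty subset of {h_z : z ∈ ℤ^d}. Then the problem (H, X) is (4d + 1)-split-neighborly. -/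
/-!
Only the fact that every hypothesis in `Δ(x, x')` is positive at `x'` is needed, so every ordered
pair `(x, x')` is an edge. Write `K = 4d + 1`, `N = |V|`, and attach to `h = h_z ∈ V` the point
`u = x' - z ∈ S`; distinct hypotheses give distinct points. The test `x' + w` asks whether
`u + w ∈ S`.

Suppose no test splits `V`. Move the test from `x'` along a direction `v = ± e_i`. The number of
positive hypotheses falls from `N` to `0` (as `S` is finite) and never takes a value in
`[N / K, (1 - 1 / K) N]`, so it jumps across this range at some step `t`
(`exists_exit_step`): all but fewer than `N / K` hypotheses satisfy `u + t v ∈ S`, and all but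
fewer than `N / K` satisfy `u + (t + 1) v ∉ S`. Away from these exceptions, the `i`-th axis line
through `u` leaves `S` exactly `t` steps ahead of `u` and `s` steps behind it; since `S` meets this
line in a symmetric interval, `u_i = (s - t) / 2` is determined (`coord_determined`).

There are `4d` exceptional sets, each of size at most `(N - 1) / K`, and all remaining hypotheses
share the same `u`, so there is at most one of them. Hence `K N ≤ K + 4d (N - 1)`, that is
`N ≤ 1`, contradicting `N ≥ 2`.
-/

/-- If no translate `w` yields a balanced split of `V`, then along a nonzero direction `v` the
points `u a` leave `S` almost simultaneously, at a common step `t`. -/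
lemma exists_exit_step {α : Type*} {d : ℕ} (S : Set (Fin d → ℤ)) (hSfin : S.Finite)
    [DecidablePred (· ∈ S)] (V : Finset α) (u : α → Fin d → ℤ) (hu : ∀ a ∈ V, u a ∈ S)
    (hV : 1 ≤ V.card)
    (hfail : ∀ w : Fin d → ℤ,
      V.card ≤ (4 * d + 1) * (V.filter (fun a => u a + w ∈ S)).card →
      4 * d * V.card < (4 * d + 1) * (V.filter (fun a => u a + w ∈ S)).card)
    (v : Fin d → ℤ) (hv : v ≠ 0) :
    ∃ t : ℕ, (4 * d + 1) * (V.filter (fun a => ¬ u a + t • v ∈ S)).card + 1 ≤ V.card ∧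
      (4 * d + 1) * (V.filter (fun a => u a + (t + 1) • v ∈ S)).card + 1 ≤ V.card := by
  classical
  have hfinite : {t : ℕ | ∃ a ∈ V, u a + t • v ∈ S}.Finite := by
    have : {t : ℕ | ∃ a ∈ V, u a + t • v ∈ S} =
        ⋃ a ∈ V, (fun t : ℕ => u a + t • v) ⁻¹' S := by
      ext t; simp
    rw [this]
    refine V.finite_toSet.biUnion fun a _ => hSfin.preimage ?_
    intro t₁ _ t₂ _ h
    obtain ⟨k, hk⟩ := Function.ne_iff.mp hv
    have h2 := congrFun h k
    simp only [Pi.add_apply, Pi.smul_apply, add_right_inj] at h2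
    rw [nsmul_eq_mul, nsmul_eq_mul] at h2
    exact_mod_cast mul_right_cancel₀ hk h2
  obtain ⟨T, hT⟩ := hfinite.exists_notMem
  have hex : ∃ t : ℕ, (4 * d + 1) * (V.filter (fun a => u a + t • v ∈ S)).card + 1 ≤ V.card := by
    refine ⟨T, ?_⟩
    rw [Finset.filter_false_of_mem]
    · simpa using hV
    · intro a ha h
      exact hT ⟨a, ha, h⟩
  -- The first step at which the positive hypotheses form a small minority; it is not step `0`.
  have hspec := Nat.find_spec hex
  have hmin := fun m => Nat.find_min hex (m := m)
  generalize Nat.find hex = n at hspec hmin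
  cases n with
  | zero =>
    rw [Finset.filter_true_of_mem (by intro a ha; simpa using hu a ha)] at hspec
    nlinarith
  | succ t =>
    refine ⟨t, ?_, hspec⟩
    have h1 := hmin t (Nat.lt_succ_self t)
    have h2 := hfail (t • v) (by omega)
    have h3 := Finset.card_filter_add_card_filter_not (s := V) (fun a => u a + t • v ∈ S)
    nlinarith

lemma add_smul_single {d : ℕ} (u : Fin d → ℤ) (i : Fin d) (n : ℕ) (e : ℤ) :
    u + n • (Pi.single i e : Fin d → ℤ) = Function.update u i (u i + n * e) := by
  ext k
  by_cases hk : k = i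
  · subst hk; simp
  · simp [hk]

/-- A point `u` whose axis line in direction `i` leaves `S` after exactly `t` steps forwards and
`s` steps backwards has `2 u_i = s - t`, because the line meets `S` in a symmetric interval. -/
lemma coord_determined {d : ℕ} (S : Set (Fin d → ℤ))
    (hsym : ∀ z ∈ S, ∀ i : Fin d, Function.update z i (-(z i)) ∈ S)
    (hconv : ∀ z ∈ S, ∀ z' ∈ S, ∀ i : Fin d, (∀ k : Fin d, k ≠ i → z k = z' k) →
      ∀ t : ℤ, min (z i) (z' i) ≤ t → t ≤ max (z i) (z' i) → Function.update z i t ∈ S)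
    (u : Fin d → ℤ) (i : Fin d) (t s : ℕ)
    (h1 : u + t • (Pi.single i 1 : Fin d → ℤ) ∈ S)
    (h2 : u + (t + 1) • (Pi.single i 1 : Fin d → ℤ) ∉ S)
    (h3 : u + s • (Pi.single i (-1) : Fin d → ℤ) ∈ S)
    (h4 : u + (s + 1) • (Pi.single i (-1) : Fin d → ℤ) ∉ S) :
    2 * u i = s - t := by
  rw [add_smul_single] at h1 h2 h3 h4
  have key : ∀ a b : ℤ, Function.update u i a ∈ S → -|a| ≤ b → b ≤ |a| →
      Function.update u i b ∈ S := by
    intro a b ha hb1 hb2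
    have h := hconv _ ha _ (hsym _ ha i) i (by intro k hk; simp [hk]) b
    simp only [Function.update_self, Function.update_idem] at h
    apply h
    · rcases abs_cases a with h | h <;> simp only [min_le_iff] <;> omega
    · rcases abs_cases a with h | h <;> simp only [le_max_iff] <;> omega
  have n1 := fun hb1 hb2 => h4 (key _ _ h1 hb1 hb2)
  have n2 := fun hb1 hb2 => h2 (key _ _ h3 hb1 hb2)
  push_cast at n1 n2
  have a1 := abs_cases (u i + t * 1)
  have a2 := abs_cases (u i + s * (-1))
  have c1 : ¬ (-|u i + t * 1| ≤ u i + (s + 1) * (-1)) := by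
    intro h; exact n1 h (by omega)
  have c2 : ¬ (u i + (t + 1) * 1 ≤ |u i + s * (-1)|) := by
    intro h; exact n2 (by omega) h
  omega

/-- A family of at least two distinct points of `S` is split by some translate, with split constant
`1 / (4d + 1)`. -/
lemma exists_split_s10 {α : Type*} {d : ℕ} (S : Set (Fin d → ℤ)) (hSfin : S.Finite)
    (hsym : ∀ z ∈ S, ∀ i : Fin d, Function.update z i (-(z i)) ∈ S)
    (hconv : ∀ z ∈ S, ∀ z' ∈ S, ∀ i : Fin d, (∀ k : Fin d, k ≠ i → z k = z' k) →
      ∀ t : ℤ, min (z i) (z' i) ≤ t → t ≤ max (z i) (z' i) → Function.update z i t ∈ S)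
    [DecidablePred (· ∈ S)] (V : Finset α) (u : α → Fin d → ℤ) (hu : ∀ a ∈ V, u a ∈ S)
    (hinj : Set.InjOn u V) (hV : 2 ≤ V.card) :
    ∃ w : Fin d → ℤ,
      V.card ≤ (4 * d + 1) * (V.filter (fun a => u a + w ∈ S)).card ∧
      (4 * d + 1) * (V.filter (fun a => u a + w ∈ S)).card ≤ 4 * d * V.card := by
  classical
  by_contra! hfail
  have hstep := exists_exit_step S hSfin V u hu (by omega) hfail
  choose t ht1 ht2 using fun i : Fin d => hstep (Pi.single i 1) (by simp)
  choose s hs1 hs2 using fun i : Fin d => hstep (Pi.single i (-1)) (by simp)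
  set B : Fin d → Finset α := fun i =>
    (V.filter (fun a => ¬ u a + t i • (Pi.single i 1 : Fin d → ℤ) ∈ S) ∪
      V.filter (fun a => u a + (t i + 1) • (Pi.single i 1 : Fin d → ℤ) ∈ S)) ∪
    (V.filter (fun a => ¬ u a + s i • (Pi.single i (-1) : Fin d → ℤ) ∈ S) ∪
      V.filter (fun a => u a + (s i + 1) • (Pi.single i (-1) : Fin d → ℤ) ∈ S)) with hB
  have hBcard : ∀ i, (4 * d + 1) * (B i).card ≤ 4 * (V.card - 1) := by
    intro i
    have e := (Finset.card_union_le _ _).trans (add_le_add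
      (Finset.card_union_le
        (V.filter (fun a => ¬ u a + t i • (Pi.single i 1 : Fin d → ℤ) ∈ S))
        (V.filter (fun a => u a + (t i + 1) • (Pi.single i 1 : Fin d → ℤ) ∈ S)))
      (Finset.card_union_le
        (V.filter (fun a => ¬ u a + s i • (Pi.single i (-1) : Fin d → ℤ) ∈ S))
        (V.filter (fun a => u a + (s i + 1) • (Pi.single i (-1) : Fin d → ℤ) ∈ S))))
    have e' := Nat.mul_le_mul_left (4 * d + 1) e
    have := ht1 i
    have := ht2 i
    have := hs1 i
    have := hs2 i
    simp only [mul_add] at e'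
    refine e'.trans ?_
    omega
  have hgood : (V \ Finset.univ.biUnion B).card ≤ 1 := by
    rw [Finset.card_le_one]
    have hval : ∀ a ∈ V \ Finset.univ.biUnion B, a ∈ V ∧ ∀ i, 2 * u a i = s i - t i := by
      intro a ha
      rw [Finset.mem_sdiff] at ha
      obtain ⟨haV, ha⟩ := ha
      refine ⟨haV, fun i => ?_⟩
      have hai : a ∉ B i := fun h => ha (Finset.mem_biUnion.mpr ⟨i, Finset.mem_univ i, h⟩)
      simp only [hB, Finset.mem_union, Finset.mem_filter, haV, true_and, not_or, not_not] at hai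
      exact coord_determined S hsym hconv (u a) i (t i) (s i) hai.1.1 hai.1.2 hai.2.1 hai.2.2
    intro a ha b hb
    obtain ⟨haV, ha⟩ := hval a ha
    obtain ⟨hbV, hb⟩ := hval b hb
    refine hinj haV hbV (funext fun i => ?_)
    have := ha i
    have := hb i
    omega
  have hbad : (4 * d + 1) * (Finset.univ.biUnion B).card ≤ d * (4 * (V.card - 1)) := by
    calc (4 * d + 1) * (Finset.univ.biUnion B).card
        ≤ (4 * d + 1) * ∑ i, (B i).card := Nat.mul_le_mul_left _ Finset.card_biUnion_le
      _ = ∑ i, (4 * d + 1) * (B i).card := Finset.mul_sum _ _ _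
      _ ≤ ∑ _i : Fin d, 4 * (V.card - 1) := Finset.sum_le_sum fun i _ => hBcard i
      _ = d * (4 * (V.card - 1)) := by simp
  have htot := Finset.le_card_sdiff (Finset.univ.biUnion B) V
  have hN : V.card - 1 ≤ (Finset.univ.biUnion B).card := by omega
  obtain ⟨m, hm⟩ : ∃ m, V.card = m + 1 := ⟨V.card - 1, by omega⟩
  rw [hm] at hN hbad hV
  simp only [Nat.add_sub_cancel] at hN hbad
  nlinarith


/-- Fix `d ≥ 1` and a finite sensing field `S ⊆ ℤ^d` that is
axis-symmetric (closed under negating any single coordinate) and axis-convex (if two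
points of `S` differ in only one coordinate, all integer points between them are in
`S`).  Tests are points `x ∈ ℤ^d`, hypotheses are the functions
`h_z(x) = 1[x − z ∈ S]`, and `H` is any finite nonempty subset of `{h_z : z ∈ ℤ^d}`.
Then the problem `(H, X)` is `(4d + 1)`-split-neighborly: the directed graph on
`X = ℤ^d` with an edge from `x` to `x'` whenever every finite `V ⊆ Δ(x,x')` with
`|V| ≥ 2` admits a test splitting it with split constant `1/(4d + 1)` is strongly
connected. -/
theorem axis_convex_object_localization_split_neighborly (d : ℕ) (hd : 1 ≤ d)
    (S : Set (Fin d → ℤ)) (hSfin : S.Finite)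
    (hsym : ∀ z ∈ S, ∀ i : Fin d, Function.update z i (-(z i)) ∈ S)
    (hconv : ∀ z ∈ S, ∀ z' ∈ S, ∀ i : Fin d, (∀ k : Fin d, k ≠ i → z k = z' k) →
      ∀ t : ℤ, min (z i) (z' i) ≤ t → t ≤ max (z i) (z' i) → Function.update z i t ∈ S)
    (H : Set ((Fin d → ℤ) → Bool))
    (hH : ∀ h ∈ H, ∃ z : Fin d → ℤ,
      ∀ x : Fin d → ℤ, h x = true ↔ (fun i => x i - z i) ∈ S)
    (hfin : H.Finite) (hne : H.Nonempty) :
    let Delta : (Fin d → ℤ) → (Fin d → ℤ) → Set ((Fin d → ℤ) → Bool) :=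
      fun x x' => {h ∈ H | h x = false ∧ h x' = true}
    let edge : (Fin d → ℤ) → (Fin d → ℤ) → Prop := fun x x' =>
      ∀ V : Set ((Fin d → ℤ) → Bool), V ⊆ Delta x x' → V.Finite → 2 ≤ V.ncard →
        ∃ x'' : Fin d → ℤ,
          (1 : ℝ) / (4 * d + 1) ≤ ({h ∈ V | h x'' = true}.ncard : ℝ) / V.ncard ∧
          ({h ∈ V | h x'' = true}.ncard : ℝ) / V.ncard ≤ 1 - 1 / (4 * d + 1)
    ∀ x x' : Fin d → ℤ, Relation.ReflTransGen edge x x' := by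
  classical
  intro Delta edge x x'
  refine Relation.ReflTransGen.single ?_
  intro V hVD hVfin hV
  choose! z hz using hH
  lift V to Finset ((Fin d → ℤ) → Bool) using hVfin
  rw [Set.ncard_coe_finset] at hV
  have htest : ∀ h ∈ V, ∀ w : Fin d → ℤ, h (x' + w) = true ↔ (x' - z h) + w ∈ S := by
    intro h hh w
    rw [hz h (hVD hh).1]
    have : (fun i => (x' + w) i - z h i) = (x' - z h) + w := by
      ext i; simp only [Pi.add_apply, Pi.sub_apply]; ring
    rw [this]
  obtain ⟨w, hw1, hw2⟩ := exists_split_s10 S hSfin hsym hconv V (fun h => x' - z h)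
    (by
      intro h hh
      have := (htest h hh 0).mp (by simpa using (hVD hh).2.2)
      simpa using this)
    (by
      intro h hh h' hh' e
      have e' : z h = z h' := by simpa using e
      funext y
      rw [Bool.eq_iff_iff, hz h (hVD hh).1, hz h' (hVD hh').1, e'])
    hV
  refine ⟨x' + w, ?_⟩
  have hset : {h ∈ (V : Set ((Fin d → ℤ) → Bool)) | h (x' + w) = true} =
      ((V.filter (fun h => (x' - z h) + w ∈ S) : Finset _) : Set ((Fin d → ℤ) → Bool)) := by
    ext h
    simp only [Set.mem_ofPred_eq, Finset.coe_filter, Finset.mem_coe]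
    exact and_congr_right fun hh => htest h hh w
  rw [hset, Set.ncard_coe_finset, Set.ncard_coe_finset]
  have hNpos : (0 : ℝ) < V.card := by exact_mod_cast (by omega : 0 < V.card)
  have hK : (0 : ℝ) < 4 * d + 1 := by positivity
  have hw1' : (V.card : ℝ) ≤
      (4 * d + 1) * (V.filter (fun h => (x' - z h) + w ∈ S)).card := by exact_mod_cast hw1
  have hw2' : (4 * d + 1) * ((V.filter (fun h => (x' - z h) + w ∈ S)).card : ℝ) ≤
      4 * d * V.card := by exact_mod_cast hw2
  constructor
  · rw [div_le_div_iff₀ hK hNpos]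
    linarith
  · have : (1 : ℝ) - 1 / (4 * d + 1) = 4 * d / (4 * d + 1) := by field_simp; ring
    rw [this, div_le_div_iff₀ hNpos hK]
    linarith
end

section
/- Fix an integer d ≥ 1 and a real r ≥ 1. Let X = {0,1}^d, and for b ∈ ℤ and w ∈ {−1, 0, 1}^d define h_{b,w} : X → {0,1} by h_{b,w}(x) = 1 iff w·x > b. Let H be any set of functions of the form h_{b,w} such that every h_{b,w} ∈ H satisfies w⁺ − b ≤ r·(w⁻ + b) − d/8 and w⁻ + b ≤ r·(w⁺ − b − 1) − d/8, where w⁺ = |{i : w_i = 1}| and w⁻ = |{i : w_i = −1}|. Then the problem (H, X) is K-split-neighborly with K = max(16, 8r). -/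
/-!
It suffices to show that points `x`, `x'` of the cube differing in one coordinate `i` are joined by
an edge. If `h(x) = 0` and `h(x') = 1`, then `w · x = b` and `w · x' = b + 1`. Let `s_j ∈ {-1,0,1}`
be the change of `w · x` when coordinate `j` is flipped. Then `h` is determined by `s`, flipping
`S` at `x` gives label `1` iff `∑_{j ∈ S} s_j > 0`, and at `x'` (with `i ∉ S`) iff
`∑_{j ∈ S} s_j ≥ 0`. The constraints say that, up to the factor `r` and an additive `d/8`, the
coordinates with `s_j = 1` and those with `s_j = -1` are equally numerous (`exists_change`).

Suppose that no test splits `V`, `|V| ≥ 2`, with constant `1/K`. Flipping single coordinates shows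
that each `j ≠ i` has a majority value: it lies in `U` (nearly all `s_j = 1`), in `D` (nearly all
`s_j = -1`) or in the rest `Z` (nearly all `s_j = 0`). Averaging the constraints over `V` gives
`8|U| < K|D|` and `8|D| < K|U|` (`eight_card_lt`). Call points of `Z` and pairs from `U × D`
blocks. Adding blocks one at a time, `∑_{j ∈ S} s_j = 0` for all but a proportion `2/K` of `V`
whenever `S` is a disjoint union of blocks, because the absence of splits forbids intermediate
proportions (`few_ne_zero_of_blocks`).

On the other hand, match the smaller of `U`, `D` into the larger one by a random cyclic shift and
take a random union of the resulting blocks. Unless `s` is one of the three multiples of the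
majority vector, some block has nonzero sum with probability at least `8/K` (`exists_matchings`),
so that the union has nonzero sum with probability at least `4/K`
(`two_pow_card_le_of_ne_zero`). Comparing both bounds gives `|V| < 7` (`card_lt_of_extreme`); but
then any test separating two elements of `V` is a split.
-/

namespace SplitNeighborly

open Finset

/-! ### Subset sums and matchings -/

/-- A nonzero linear form is nonzero on at least half of all subset sums: of `T` and `insert y T`,
where `y ∉ T` and `c y ≠ 0`, at most one has sum zero. -/
lemma two_pow_card_le_of_ne_zero {ι : Type*} [DecidableEq ι] (Y : Finset ι) (c : ι → ℤ)
    {y : ι} (hy : y ∈ Y) (hc : c y ≠ 0) :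
    2 ^ #Y ≤ 2 * #{T ∈ Y.powerset | ∑ j ∈ T, c j ≠ 0} := by
  obtain ⟨Y', hyY', rfl⟩ : ∃ Y', y ∉ Y' ∧ insert y Y' = Y :=
    ⟨Y.erase y, notMem_erase _ _, insert_erase hy⟩
  rw [card_insert_of_notMem hyY', pow_succ, mul_comm, card_filter,
    sum_powerset_insert hyY', ← sum_add_distrib, ← card_powerset, card_eq_sum_ones]
  refine Nat.mul_le_mul_left 2 (sum_le_sum fun T hT => ?_)
  have hyT : y ∉ T := fun h => hyY' (mem_powerset.1 hT h)
  rw [sum_insert hyT]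
  split_ifs <;> omega

lemma sum_card_filter_comm {α β : Type*} (V : Finset α) (W : Finset β) (p : α → β → Prop)
    [∀ a b, Decidable (p a b)] :
    ∑ a ∈ V, (#{b ∈ W | p a b} : ℝ) = ∑ b ∈ W, (#{a ∈ V | p a b} : ℝ) := by
  simp only [card_filter, Nat.cast_sum]
  rw [sum_comm]

/-- Lay a word `a` of length `v` along a cyclic word `b` of length `u ≥ v`. Unless `a` is constant
with value `c` and `b` is constant with value `-c`, a proportion of at least `8 / K` of the
shifts has a position `k` at which `a k` and `b (k + t)` do not cancel. -/
lemma card_shift_mismatch {u v : ℕ} [NeZero u] (hvu : v ≤ u) (K : ℝ) (hK : 16 ≤ K)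
    (hKv : 8 * (u : ℝ) ≤ K * v) (a : ℕ → ℤ) (b : ZMod u → ℤ)
    (hne : ¬ ∃ c : ℤ, (∀ k < v, a k = c) ∧ ∀ j, b j = -c) :
    8 * (u : ℝ) ≤ K * #{t : ZMod u | ∃ k < v, a k + b (k + t) ≠ 0} := by
  have hu : (0 : ℝ) < u := by exact_mod_cast Nat.pos_of_ne_zero (NeZero.ne u)
  set B : Finset (ZMod u) := {t : ZMod u | ∃ k < v, a k + b (k + t) ≠ 0} with hB
  by_cases hcon : ∃ k, k + 1 < v ∧ a k ≠ a (k + 1)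
  · obtain ⟨k, hk, hak⟩ := hcon
    -- Two consecutive shifts cannot both match, since they would give `a k = a (k + 1)`.
    have h1 : #(Bᶜ) ≤ #B := by
      refine card_le_card_of_injOn (fun t => t + 1) (fun t ht => ?_)
        (fun t _ t' _ h => add_right_cancel h)
      simp only [hB, coe_compl, Set.mem_compl_iff, mem_coe, mem_filter, mem_univ, true_and,
        not_exists, not_and, not_not] at ht ⊢
      refine ⟨k, by omega, fun h => hak ?_⟩
      have h2 := ht (k + 1) hk
      have h3 : ((k + 1 : ℕ) : ZMod u) + t = k + (t + 1) := by push_cast; ring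
      rw [h3] at h2
      omega
    have h2 : #B + #(Bᶜ) = u := by rw [card_add_card_compl, ZMod.card]
    have h3 : (u : ℝ) ≤ 2 * #B := by exact_mod_cast (by omega : u ≤ 2 * #B)
    nlinarith
  · push Not at hcon
    have hconst : ∀ k < v, a k = a 0 := by
      intro k
      induction k with
      | zero => simp
      | succ k ih => intro hk; rw [← hcon k hk, ih (by omega)]
    obtain ⟨j, hj⟩ : ∃ j, b j ≠ - a 0 := by
      by_contra! h
      exact hne ⟨a 0, hconst, h⟩
    -- The position `j` of a mismatch is covered by `v` different shifts.
    have h1 : v ≤ #B := by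
      rw [← card_range v]
      refine card_le_card_of_injOn (fun k => j - (k : ZMod u)) (fun k hk => ?_)
        (fun k hk k' hk' h => ?_)
      · simp only [coe_range, Set.mem_Iio] at hk
        simp only [hB, coe_filter, mem_univ, true_and, Set.mem_ofPred_eq]
        refine ⟨k, hk, ?_⟩
        rw [add_sub_cancel, hconst k hk]
        omega
      · simp only [coe_range, Set.mem_Iio] at hk hk'
        have h2 : (k : ZMod u) = k' := sub_right_injective h
        rw [ZMod.natCast_eq_natCast_iff', Nat.mod_eq_of_lt (by omega),
          Nat.mod_eq_of_lt (by omega)] at h2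
        exact h2
    have h2 : (v : ℝ) ≤ #B := by exact_mod_cast h1
    nlinarith

/-- There is a family of injections `φ t` of `P` into the larger set `Q` (cyclic shifts of an
enumeration) such that every `s` which is not `c` on `P` and `-c` on `Q` fails to cancel along
a proportion of at least `8 / K` of these injections. -/
lemma exists_matchings {ι : Type*} [DecidableEq ι] (P Q : Finset ι) (hPQ : #P ≤ #Q)
    (hQ : 0 < #Q) (K : ℝ) (hK : 16 ≤ K) (hKP : 8 * (#Q : ℝ) ≤ K * #P) :
    ∃ (τ : Type) (_ : Fintype τ) (φ : τ → ι → ι), 0 < Fintype.card τ ∧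
      (∀ t, Set.InjOn (φ t) P) ∧ (∀ t, ∀ p ∈ P, φ t p ∈ Q) ∧
      ∀ s : ι → ℤ, (¬ ∃ c : ℤ, (∀ p ∈ P, s p = c) ∧ ∀ q ∈ Q, s q = -c) →
        8 * (Fintype.card τ : ℝ) ≤ K * #{t | ∃ p ∈ P, s p + s (φ t p) ≠ 0} := by
  have : NeZero #Q := ⟨hQ.ne'⟩
  let e : ZMod #Q ≃ Q := Fintype.equivOfCardEq (by simp)
  let f := P.equivFin
  refine ⟨ZMod #Q, inferInstance,
    fun t p => if h : p ∈ P then e (((f ⟨p, h⟩ : ℕ) : ZMod #Q) + t) else p, ?_, ?_, ?_, ?_⟩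
  · simpa using hQ
  · intro t p hp p' hp' h
    simp only [mem_coe] at hp hp'
    simp only [hp, hp', dite_true] at h
    have h1 := add_right_cancel (e.injective (Subtype.ext h))
    rw [ZMod.natCast_eq_natCast_iff', Nat.mod_eq_of_lt (by omega),
          Nat.mod_eq_of_lt (by omega)] at h1
    simpa using f.injective (Fin.ext h1)
  · intro t p hp
    simp [hp]
  · intro s hs
    have key := card_shift_mismatch (u := #Q) hPQ K hK hKP
      (fun k => if h : k < #P then s (f.symm ⟨k, h⟩) else 0) (fun t => s (e t)) ?_
    · rw [ZMod.card]
      refine key.trans (mul_le_mul_of_nonneg_left ?_ (by linarith))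
      refine Nat.cast_le.2 (card_le_card fun t ht => ?_)
      simp only [mem_filter, mem_univ, true_and] at ht ⊢
      obtain ⟨k, hk, h⟩ := ht
      refine ⟨f.symm ⟨k, hk⟩, (f.symm ⟨k, hk⟩).2, ?_⟩
      simpa [hk] using h
    · rintro ⟨c, h1, h2⟩
      refine hs ⟨c, fun p hp => ?_, fun q hq => ?_⟩
      · simpa using h1 (f ⟨p, hp⟩) (f ⟨p, hp⟩).2
      · simpa using h2 (e.symm ⟨q, hq⟩)

/-! ### Families of sign vectors without splits -/

/-- Here `s h j` is the change of the linear form of `h` when coordinate `j` of the base point is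
flipped. Flipping `S` gives label `1` iff `0 < ∑ j ∈ S, s h j`; flipping the distinguished
coordinate `i ∉ S` as well gives label `1` iff `0 ≤ ∑ j ∈ S, s h j`. `Extreme` says that neither of
these two tests splits `V` with constant `1 / K`. -/
def Extreme {α ι : Type*} (V : Finset α) (s : α → ι → ℤ) (K : ℝ) (S : Finset ι) : Prop :=
  (K * #{h ∈ V | 0 < ∑ j ∈ S, s h j} < #V ∨ K * #{h ∈ V | ∑ j ∈ S, s h j ≤ 0} < #V) ∧
  (K * #{h ∈ V | ∑ j ∈ S, s h j < 0} < #V ∨ K * #{h ∈ V | 0 ≤ ∑ j ∈ S, s h j} < #V)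

lemma card_le_add {α : Type*} (V : Finset α) (p q r : α → Prop) [DecidablePred p]
    [DecidablePred q] [DecidablePred r] (h : ∀ a ∈ V, p a → q a ∨ r a) :
    (#{a ∈ V | p a} : ℝ) ≤ #{a ∈ V | q a} + #{a ∈ V | r a} := by
  classical
  have : #{a ∈ V | p a} ≤ #({a ∈ V | q a} ∪ {a ∈ V | r a}) := by
    refine card_le_card fun a ha => ?_
    simp only [mem_union, mem_filter] at ha ⊢
    have := h a ha.1 ha.2
    tauto
  exact_mod_cast this.trans (card_union_le _ _)

lemma mul_card_mono {α : Type*} (V : Finset α) {K : ℝ} (hK : 0 ≤ K) (p q : α → Prop)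
    [DecidablePred p] [DecidablePred q] (h : ∀ a ∈ V, p a → q a) :
    K * #{a ∈ V | p a} ≤ K * #{a ∈ V | q a} := by
  have := card_le_add V p q (fun _ => False) (fun a ha hp => Or.inl (h a ha hp))
  exact mul_le_mul_of_nonneg_left (by simpa using this) hK

lemma card_le_card_add {α : Type*} (V : Finset α) (q r : α → Prop)
    [DecidablePred q] [DecidablePred r] (h : ∀ a ∈ V, q a ∨ r a) :
    (#V : ℝ) ≤ #{a ∈ V | q a} + #{a ∈ V | r a} := by
  simpa using card_le_add V (fun _ => True) q r (fun a ha _ => h a ha)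

/-- The gap step: an extreme test set leaves no room between `2 / K` and `4 / K` for the proportion
of hypotheses with nonzero sum. -/
lemma Extreme.few_ne_zero {α ι : Type*} {V : Finset α} {s : α → ι → ℤ} {K : ℝ} {S : Finset ι}
    (hE : Extreme V s K S) (hK : 16 ≤ K)
    (h4 : K * #{h ∈ V | ∑ j ∈ S, s h j ≠ 0} < 4 * #V) :
    K * #{h ∈ V | ∑ j ∈ S, s h j ≠ 0} < 2 * #V := by
  have hV : (0 : ℝ) ≤ #V := by positivity
  have h0 := card_le_add V (fun h => ∑ j ∈ S, s h j ≠ 0) (fun h => 0 < ∑ j ∈ S, s h j)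
    (fun h => ∑ j ∈ S, s h j < 0) (by intro a _ h; omega)
  have h1 := card_le_card_add V (fun h => ∑ j ∈ S, s h j ≠ 0) (fun h => ∑ j ∈ S, s h j ≤ 0)
    (by intro a _; omega)
  have h2 := card_le_card_add V (fun h => ∑ j ∈ S, s h j ≠ 0) (fun h => 0 ≤ ∑ j ∈ S, s h j)
    (by intro a _; omega)
  rcases hE.1 with h3 | h3
  · rcases hE.2 with h5 | h5
    · nlinarith
    · nlinarith
  · nlinarith

/-- If almost every hypothesis has `c h y = 0` for each single block `y`, then almost every
hypothesis has sum zero over each union of blocks, with no loss in the bound: the loss incurred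
by adding one block is undone by `Extreme.few_ne_zero`. -/
lemma few_ne_zero_of_blocks {α ι : Type*} [DecidableEq ι] (V : Finset α) (s : α → ι → ℤ)
    (K : ℝ) (hK : 16 ≤ K) (hV : 0 < #V) (J Y : Finset ι) (hE : ∀ S ⊆ J, Extreme V s K S)
    (c : α → ι → ℤ)
    (hblock : ∀ T ⊆ Y, ∃ S ⊆ J, ∀ h, ∑ y ∈ T, c h y = ∑ j ∈ S, s h j)
    (hc : ∀ y ∈ Y, K * #{h ∈ V | c h y ≠ 0} < 2 * #V) (T : Finset ι) (hT : T ⊆ Y) :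
    K * #{h ∈ V | ∑ y ∈ T, c h y ≠ 0} < 2 * #V := by
  induction T using Finset.induction_on with
  | empty => simpa using hV
  | insert y T hy ih =>
    have h1 := ih ((subset_insert _ _).trans hT)
    have h2 := hc y (hT (mem_insert_self _ _))
    obtain ⟨S, hS, hsum⟩ := hblock _ hT
    have h3 := card_le_add V (fun h => ∑ j ∈ insert y T, c h j ≠ 0)
      (fun h => ∑ j ∈ T, c h j ≠ 0) (fun h => c h y ≠ 0)
      (by intro a _ h; rw [sum_insert hy] at h; omega)
    simp only [hsum] at h3 ⊢
    exact (hE S hS).few_ne_zero hK (by nlinarith)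

/-- `P` and `Q` are sets of coordinates on which the majority of `V` has opposite nonzero signs, `Z`
the set on which the majority is zero. The blocks are the points of `Z` and the pairs of a
matching of `P` into `Q`. A random union of blocks of a random matching has nonzero sum with
probability at least `4 / K` for all but three hypotheses, whereas for each union of blocks this
holds for a proportion of less than `2 / K` of the hypotheses. -/
lemma card_lt_of_balanced {α ι : Type*} [DecidableEq ι] (V : Finset α) (s : α → ι → ℤ)
    (K : ℝ) (hK : 16 ≤ K) (P Q Z J : Finset ι) (hJ : J = P ∪ Q ∪ Z)
    (hdPQ : Disjoint P Q) (hdPZ : Disjoint P Z) (hdQZ : Disjoint Q Z)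
    (hE : ∀ S ⊆ J, Extreme V s K S)
    (hs : ∀ h ∈ V, ∀ j ∈ J, s h j = -1 ∨ s h j = 0 ∨ s h j = 1)
    (hinj : ∀ h ∈ V, ∀ h' ∈ V, (∀ j ∈ J, s h j = s h' j) → h = h')
    (hPQ : #P ≤ #Q) (hQ : 0 < #Q) (hKP : 8 * (#Q : ℝ) ≤ K * #P)
    (hpq : ∀ p ∈ P, ∀ q ∈ Q, K * #{h ∈ V | s h p + s h q ≠ 0} < 2 * #V)
    (hz : ∀ z ∈ Z, K * #{h ∈ V | s h z ≠ 0} < 2 * #V) :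
    #V < 7 := by
  classical
  by_contra! hV
  obtain ⟨τ, _, φ, hτ, hφinj, hφQ, hφ⟩ := exists_matchings P Q hPQ hQ K hK hKP
  set Y := P ∪ Z with hY
  let c : τ → α → ι → ℤ := fun t h y => s h y + if y ∈ P then s h (φ t y) else 0
  have hPne : P.Nonempty := by
    rw [nonempty_iff_ne_empty]
    rintro rfl
    have : (0 : ℝ) < #Q := by exact_mod_cast hQ
    rw [card_empty, Nat.cast_zero, mul_zero] at hKP
    linarith
  have hfew : ∀ t, ∀ T ∈ Y.powerset, K * #{h ∈ V | ∑ y ∈ T, c t h y ≠ 0} < 2 * #V := by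
    intro t T hT
    refine few_ne_zero_of_blocks V s K hK (by omega) J Y hE (c t) ?_ ?_ T (mem_powerset.1 hT)
    · intro T hT
      have hsub : (T ∩ P).image (φ t) ⊆ Q := by
        intro j hj
        obtain ⟨p, hp, rfl⟩ := mem_image.1 hj
        exact hφQ t p (mem_inter.1 hp).2
      refine ⟨T ∪ (T ∩ P).image (φ t), ?_, fun h => ?_⟩
      · rw [hJ]
        intro j hj
        rcases mem_union.1 hj with hj | hj
        · have := hT hj
          simp only [hY, mem_union] at this ⊢
          tauto
        · have := hsub hj
          simp only [mem_union]
          tauto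
      · rw [sum_union, sum_image, sum_add_distrib, sum_ite_mem]
        · exact (hφinj t).mono (by simp)
        · refine disjoint_of_subset_right hsub (disjoint_of_subset_left hT ?_)
          exact disjoint_union_left.2 ⟨hdPQ, hdQZ.symm⟩
    · intro y hy
      by_cases hyP : y ∈ P
      · simpa [c, hyP] using hpq y hyP _ (hφQ t y hyP)
      · have hyZ : y ∈ Z := by
          rcases mem_union.1 hy with h | h
          · exact absurd h hyP
          · exact h
        simpa [c, hyP] using hz y hyZ
  -- The multiples `0, ±1` of the majority vector, on which every block sum vanishes.
  let bad : α → Prop := fun h =>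
    (∃ a : ℤ, (∀ p ∈ P, s h p = a) ∧ ∀ q ∈ Q, s h q = -a) ∧ ∀ z ∈ Z, s h z = 0
  have hbad : #{h ∈ V | bad h} ≤ 3 := by
    obtain ⟨p, hp⟩ := hPne
    have : #{h ∈ V | bad h} ≤ #({-1, 0, 1} : Finset ℤ) := by
      refine card_le_card_of_injOn (fun h => s h p) (fun h hh => ?_) (fun h hh h' hh' heq => ?_)
      · have hh := (mem_filter.1 (mem_coe.1 hh)).1
        have := hs h hh p (by rw [hJ]; simp [hp])
        simpa using this
      · obtain ⟨hV1, ⟨a, ha1, ha2⟩, ha3⟩ := mem_filter.1 (mem_coe.1 hh)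
        obtain ⟨hV2, ⟨a', hb1, hb2⟩, hb3⟩ := mem_filter.1 (mem_coe.1 hh')
        have haa : a = a' := by rw [← ha1 p hp, ← hb1 p hp]; exact heq
        subst haa
        refine hinj h hV1 h' hV2 fun j hj => ?_
        rw [hJ, mem_union, mem_union] at hj
        rcases hj with (hj | hj) | hj
        · rw [ha1 j hj, hb1 j hj]
        · rw [ha2 j hj, hb2 j hj]
        · rw [ha3 j hj, hb3 j hj]
    simpa using this
  have hgood : ∀ h, ¬ bad h → 4 * (Fintype.card τ : ℝ) * 2 ^ #Y ≤
      K * ∑ t : τ, (#{T ∈ Y.powerset | ∑ y ∈ T, c t h y ≠ 0} : ℝ) := by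
    intro h hh
    have h1 : 8 * (Fintype.card τ : ℝ) ≤ K * #{t : τ | ∃ y ∈ Y, c t h y ≠ 0} := by
      by_cases hZ : ∀ z ∈ Z, s h z = 0
      · refine (hφ (s h) fun h' => hh ⟨h', hZ⟩).trans
          (mul_le_mul_of_nonneg_left (Nat.cast_le.2 (card_le_card fun t ht => ?_)) (by linarith))
        simp only [mem_filter, mem_univ, true_and] at ht ⊢
        obtain ⟨p, hp, hne⟩ := ht
        exact ⟨p, by simp [hY, hp], by simpa [c, hp] using hne⟩
      · push Not at hZ
        obtain ⟨z, hz, hne⟩ := hZ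
        have hzP : z ∉ P := fun hp => (disjoint_left.1 hdPZ hp) hz
        have : ({t : τ | ∃ y ∈ Y, c t h y ≠ 0} : Finset τ) = univ := by
          rw [filter_eq_self]
          intro t _
          exact ⟨z, by simp [hY, hz], by simpa [c, hzP] using hne⟩
        rw [this, card_univ]
        exact mul_le_mul_of_nonneg_right (by linarith) (by positivity)
    have h2 : (#{t : τ | ∃ y ∈ Y, c t h y ≠ 0} : ℝ) * 2 ^ #Y ≤
        2 * ∑ t : τ, (#{T ∈ Y.powerset | ∑ y ∈ T, c t h y ≠ 0} : ℝ) := by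
      rw [card_filter, Nat.cast_sum, sum_mul, mul_sum]
      refine sum_le_sum fun t _ => ?_
      split_ifs with ht
      · obtain ⟨y, hy, hne⟩ := ht
        have := two_pow_card_le_of_ne_zero Y (c t h) hy hne
        simpa using (by exact_mod_cast this :
          (2 : ℝ) ^ #Y ≤ 2 * #{T ∈ Y.powerset | ∑ y ∈ T, c t h y ≠ 0})
      · simp
    have h3 := mul_le_mul_of_nonneg_left h2 (by linarith : 0 ≤ K)
    have h4 := mul_le_mul_of_nonneg_right h1 (by positivity : (0 : ℝ) ≤ 2 ^ #Y)
    nlinarith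
  have hswap : ∑ h ∈ V, ∑ t : τ, (#{T ∈ Y.powerset | ∑ y ∈ T, c t h y ≠ 0} : ℝ) =
      ∑ t : τ, ∑ T ∈ Y.powerset, (#{h ∈ V | ∑ y ∈ T, c t h y ≠ 0} : ℝ) := by
    rw [sum_comm]
    refine sum_congr rfl fun t _ => ?_
    exact sum_card_filter_comm V Y.powerset fun h T => ∑ y ∈ T, c t h y ≠ 0
  have hupper : K * ∑ t : τ, ∑ T ∈ Y.powerset, (#{h ∈ V | ∑ y ∈ T, c t h y ≠ 0} : ℝ) ≤
      (Fintype.card τ : ℝ) * 2 ^ #Y * (2 * #V) := by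
    rw [mul_sum]
    have : ∀ t ∈ (univ : Finset τ),
        K * ∑ T ∈ Y.powerset, (#{h ∈ V | ∑ y ∈ T, c t h y ≠ 0} : ℝ) ≤ 2 ^ #Y * (2 * #V) := by
      intro t _
      rw [mul_sum]
      refine (sum_le_card_nsmul _ _ (2 * (#V : ℝ)) fun T hT => (hfew t T hT).le).trans_eq ?_
      rw [card_powerset, nsmul_eq_mul, Nat.cast_pow, Nat.cast_ofNat]
    refine (sum_le_card_nsmul _ _ _ this).trans_eq ?_
    rw [card_univ, nsmul_eq_mul, mul_assoc]
  have hlower : (#{h ∈ V | ¬ bad h} : ℝ) * (4 * (Fintype.card τ : ℝ) * 2 ^ #Y) ≤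
      K * ∑ h ∈ V, ∑ t : τ, (#{T ∈ Y.powerset | ∑ y ∈ T, c t h y ≠ 0} : ℝ) := by
    rw [mul_sum, ← nsmul_eq_mul]
    refine (card_nsmul_le_sum _ _ _ fun h hh => hgood h (mem_filter.1 hh).2).trans
      (sum_le_sum_of_subset_of_nonneg (filter_subset _ _) fun h _ _ => ?_)
    exact mul_nonneg (by linarith) (sum_nonneg fun t _ => Nat.cast_nonneg _)
  rw [hswap] at hlower
  have hcard : (#V : ℝ) ≤ 3 + #{h ∈ V | ¬ bad h} := by
    rw [← card_filter_add_card_filter_not (s := V) bad]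
    push_cast
    have : (#{h ∈ V | bad h} : ℝ) ≤ 3 := by exact_mod_cast hbad
    linarith
  have hpos : 0 < (Fintype.card τ : ℝ) * 2 ^ #Y := by
    have : (0 : ℝ) < Fintype.card τ := by exact_mod_cast hτ
    positivity
  have hV' : (7 : ℝ) ≤ #V := by exact_mod_cast hV
  have hfinal : (Fintype.card τ : ℝ) * 2 ^ #Y * (4 * #{h ∈ V | ¬ bad h}) ≤
      (Fintype.card τ : ℝ) * 2 ^ #Y * (2 * #V) := by
    linarith only [hlower, hupper]
  have := le_of_mul_le_mul_left hfinal hpos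
  linarith only [this, hcard, hV']

/-- Averaging `hcount` over `V`. The term `#J` in `hcount` absorbs the minority contributions, of
proportion at most `1 / K` each, of the coordinates outside `D`. -/
lemma eight_card_lt {α ι : Type*} [DecidableEq ι] (V : Finset α) (s : α → ι → ℤ)
    (K : ℝ) (hK : 16 ≤ K) (hV : 0 < #V) (J U D : Finset ι) (hU : U ⊆ J) (hD : D ⊆ J) (a a' : ℤ)
    (hUs : ∀ j ∈ U, K * #{h ∈ V | s h j ≠ a} ≤ #V)
    (hDs : ∀ j ∈ J \ D, K * #{h ∈ V | s h j = a'} ≤ #V)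
    (hcount : ∀ h ∈ V, 8 * (#{j ∈ J | s h j = a} : ℝ) + #J + 1 ≤ K * #{j ∈ J | s h j = a'}) :
    8 * (#U : ℝ) < K * #D := by
  have hswap : ∀ e : ℤ, ∑ h ∈ V, (#{j ∈ J | s h j = e} : ℝ) =
      ∑ j ∈ J, (#{h ∈ V | s h j = e} : ℝ) := fun e =>
    sum_card_filter_comm V J fun h j => s h j = e
  have hN : (0 : ℝ) < #V := by exact_mod_cast hV
  have hK0 : 0 < K := by linarith
  have h1 : 8 * (∑ j ∈ J, (#{h ∈ V | s h j = a} : ℝ)) + #V * ((#J : ℝ) + 1) ≤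
      K * ∑ j ∈ J, (#{h ∈ V | s h j = a'} : ℝ) := by
    rw [← hswap, ← hswap, mul_sum, mul_sum, ← nsmul_eq_mul, ← sum_const, ← sum_add_distrib]
    refine sum_le_sum fun h hh => ?_
    have := hcount h hh
    linarith
  have h2 : (#U : ℝ) * (K * #V - #V) ≤ K * ∑ j ∈ J, (#{h ∈ V | s h j = a} : ℝ) := by
    rw [mul_sum, ← nsmul_eq_mul]
    refine (card_nsmul_le_sum U (fun j => K * (#{h ∈ V | s h j = a} : ℝ)) _ fun j hj => ?_).trans
      (sum_le_sum_of_subset_of_nonneg hU fun j _ _ => by positivity)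
    have h3 := card_le_card_add V (fun h => s h j = a) (fun h => s h j ≠ a)
      (fun h _ => em _)
    have h4 := hUs j hj
    nlinarith
  have h3 : K * ∑ j ∈ J, (#{h ∈ V | s h j = a'} : ℝ) ≤
      (#D : ℝ) * (K * #V) + ((#J : ℝ) - #D) * #V := by
    rw [mul_sum, ← sum_sdiff hD, add_comm]
    have hc : (#(J \ D) : ℝ) = (#J : ℝ) - #D := by
      rw [card_sdiff_of_subset hD, Nat.cast_sub (card_le_card hD)]
    rw [← hc, ← nsmul_eq_mul, ← nsmul_eq_mul]
    refine add_le_add (sum_le_card_nsmul _ _ _ fun j _ => ?_) (sum_le_card_nsmul _ _ _ hDs)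
    exact mul_le_mul_of_nonneg_left (Nat.cast_le.2 (card_filter_le _ _)) hK0.le
  have h4 : #V * (8 * (#U : ℝ) * (K - 1) + K) ≤ #V * (K * #D * (K - 1)) := by
    nlinarith
  have h5 := le_of_mul_le_mul_left h4 hN
  by_contra! h6
  have := mul_le_mul_of_nonneg_right h6 (by linarith : 0 ≤ K - 1)
  linarith

/-- A family `V` for which every set of coordinates is extreme has fewer than seven members. The
coordinates are classified by the majority value of `s h j`, and `card_lt_of_balanced` is applied
with the smaller of `U` and `D` in the role of `P`. -/
lemma card_lt_of_extreme {α ι : Type*} [DecidableEq ι] (V : Finset α) (s : α → ι → ℤ)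
    (K : ℝ) (hK : 16 ≤ K) (J : Finset ι) (hE : ∀ S ⊆ J, Extreme V s K S)
    (hs : ∀ h ∈ V, ∀ j ∈ J, s h j = -1 ∨ s h j = 0 ∨ s h j = 1)
    (hinj : ∀ h ∈ V, ∀ h' ∈ V, (∀ j ∈ J, s h j = s h' j) → h = h')
    (hup : ∀ h ∈ V, 8 * (#{j ∈ J | s h j = 1} : ℝ) + #J + 1 ≤ K * #{j ∈ J | s h j = -1})
    (hdown : ∀ h ∈ V, 8 * (#{j ∈ J | s h j = -1} : ℝ) + #J + 1 ≤ K * #{j ∈ J | s h j = 1}) :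
    #V < 7 := by
  classical
  by_contra! hV
  have hN : (0 : ℝ) < #V := by exact_mod_cast (by omega : 0 < #V)
  have hK0 : 0 ≤ K := by linarith
  let U : Finset ι := {j ∈ J | K * #{h ∈ V | s h j ≠ 1} < #V}
  let D : Finset ι := {j ∈ J | K * #{h ∈ V | s h j ≠ -1} < #V}
  have hU' : ∀ j ∈ J \ U, K * #{h ∈ V | s h j = 1} ≤ #V := by
    intro j hj
    simp only [U, mem_sdiff, mem_filter, not_and] at hj
    rcases (hE {j} (by simpa using hj.1)).1 with h | h
    · simp only [sum_singleton] at h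
      exact (mul_card_mono V hK0 _ _ fun _ _ h => by omega).trans h.le
    · simp only [sum_singleton] at h
      refine absurd ((mul_card_mono V hK0 _ _ fun a ha h => ?_).trans_lt h) (hj.2 hj.1)
      have := hs a ha j hj.1
      omega
  have hD' : ∀ j ∈ J \ D, K * #{h ∈ V | s h j = -1} ≤ #V := by
    intro j hj
    simp only [D, mem_sdiff, mem_filter, not_and] at hj
    rcases (hE {j} (by simpa using hj.1)).2 with h | h
    · simp only [sum_singleton] at h
      exact (mul_card_mono V hK0 _ _ fun _ _ h => by omega).trans h.le
    · simp only [sum_singleton] at h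
      refine absurd ((mul_card_mono V hK0 _ _ fun a ha h => ?_).trans_lt h) (hj.2 hj.1)
      have := hs a ha j hj.1
      omega
  have hUJ : U ⊆ J := filter_subset _ _
  have hDJ : D ⊆ J := filter_subset _ _
  have h1 : 8 * (#U : ℝ) < K * #D := eight_card_lt V s K hK (by omega) J U D hUJ hDJ 1 (-1)
    (fun j hj => (mem_filter.1 hj).2.le) hD' hup
  have h2 : 8 * (#D : ℝ) < K * #U := eight_card_lt V s K hK (by omega) J D U hDJ hUJ (-1) 1
    (fun j hj => (mem_filter.1 hj).2.le) hU' hdown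
  have hUD : Disjoint U D := by
    rw [disjoint_left]
    intro j hjU hjD
    have h3 := (mem_filter.1 hjU).2
    have h4 := (mem_filter.1 hjD).2
    have h5 := card_le_card_add V (fun h => s h j ≠ 1) (fun h => s h j ≠ -1)
      (by intro a _; omega)
    nlinarith
  have hpq : ∀ p ∈ U, ∀ q ∈ D, K * #{h ∈ V | s h p + s h q ≠ 0} < 2 * #V := by
    intro p hp q hq
    have h3 := (mem_filter.1 hp).2
    have h4 := (mem_filter.1 hq).2
    have h5 := card_le_add V (fun h => s h p + s h q ≠ 0) (fun h => s h p ≠ 1)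
      (fun h => s h q ≠ -1) (by intro a _; omega)
    nlinarith
  have hz : ∀ z ∈ J \ (U ∪ D), K * #{h ∈ V | s h z ≠ 0} < 2 * #V := by
    intro z hz
    simp only [mem_sdiff, mem_union, not_or] at hz
    refine (hE {z} (by simpa using hz.1)).few_ne_zero hK ?_ |> fun h => by simpa using h
    have h3 := hU' z (mem_sdiff.2 ⟨hz.1, hz.2.1⟩)
    have h4 := hD' z (mem_sdiff.2 ⟨hz.1, hz.2.2⟩)
    have h5 := card_le_add V (fun h => s h z ≠ 0) (fun h => s h z = 1)
      (fun h => s h z = -1) (by intro a ha _; have := hs a ha z hz.1; omega)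
    simp only [sum_singleton]
    nlinarith
  have hUpos : 0 < #U := by
    rcases Nat.eq_zero_or_pos #U with h | h
    · rw [h] at h2
      have : (0 : ℝ) ≤ #D := by positivity
      push_cast at h2
      linarith
    · exact h
  have hDpos : 0 < #D := by
    rcases Nat.eq_zero_or_pos #D with h | h
    · rw [h] at h1
      have : (0 : ℝ) ≤ #U := by positivity
      push_cast at h1
      linarith
    · exact h
  have hJ : J = U ∪ D ∪ (J \ (U ∪ D)) :=
    (union_sdiff_of_subset (union_subset hUJ hDJ)).symm
  have hdU : Disjoint U (J \ (U ∪ D)) := disjoint_sdiff.mono_left subset_union_left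
  have hdD : Disjoint D (J \ (U ∪ D)) := disjoint_sdiff.mono_left subset_union_right
  rcases le_total #U #D with hle | hle
  · exact hV.not_gt (card_lt_of_balanced V s K hK U D _ J hJ hUD hdU hdD hE hs hinj hle hDpos
      h2.le hpq hz)
  · refine hV.not_gt (card_lt_of_balanced V s K hK D U _ J (by rw [union_comm D U]; exact hJ)
      hUD.symm hdD hdU hE hs hinj hle hUpos h1.le (fun p hp q hq => ?_) hz)
    simpa only [add_comm] using hpq q hq p hp

/-! ### Linear classifiers on the cube -/

/-- The point of the cube obtained from `x` by flipping the coordinates in `S`. -/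
def flip {d : ℕ} (x : Fin d → Bool) (S : Finset (Fin d)) : Fin d → Bool :=
  fun j => if j ∈ S then !x j else x j

/-- The change of `w · x` when the coordinate `j` of `x` is flipped. -/
def change {d : ℕ} (x : Fin d → Bool) (w : Fin d → ℤ) (j : Fin d) : ℤ :=
  w j * if x j then -1 else 1

lemma sum_flip {d : ℕ} (x : Fin d → Bool) (w : Fin d → ℤ) (S : Finset (Fin d)) :
    ∑ j, w j * (if flip x S j then 1 else 0) =
      ∑ j, w j * (if x j then 1 else 0) + ∑ j ∈ S, change x w j := by
  rw [← sum_filter_add_sum_filter_not univ (· ∈ S),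
    ← sum_filter_add_sum_filter_not univ (· ∈ S) (fun j => w j * (if x j then 1 else 0)),
    filter_mem_eq_inter, univ_inter, add_right_comm, ← sum_add_distrib]
  congr 1
  · refine sum_congr rfl fun j hj => ?_
    cases hx : x j <;> simp [flip, change, hj, hx]
  · refine sum_congr rfl fun j hj => ?_
    simp only [mem_filter, mem_univ, true_and] at hj
    simp [flip, hj]

lemma card_change_one {d : ℕ} (x : Fin d → Bool) (w : Fin d → ℤ)
    (hw : ∀ i, w i = -1 ∨ w i = 0 ∨ w i = 1) :
    (#{j | change x w j = 1} : ℤ) = #{j | w j = 1} - ∑ j, w j * (if x j then 1 else 0) := by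
  simp only [card_filter, Nat.cast_sum]
  rw [← sum_sub_distrib]
  refine sum_congr rfl fun j _ => ?_
  rcases hw j with h | h | h <;> cases hx : x j <;> simp [change, h, hx]

lemma card_change_neg_one {d : ℕ} (x : Fin d → Bool) (w : Fin d → ℤ)
    (hw : ∀ i, w i = -1 ∨ w i = 0 ∨ w i = 1) :
    (#{j | change x w j = -1} : ℤ) = #{j | w j = -1} + ∑ j, w j * (if x j then 1 else 0) := by
  simp only [card_filter, Nat.cast_sum]
  rw [← sum_add_distrib]
  refine sum_congr rfl fun j _ => ?_
  rcases hw j with h | h | h <;> cases hx : x j <;> simp [change, h, hx]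

lemma flip_surjective {d : ℕ} (x y : Fin d → Bool) : ∃ S, flip x S = y := by
  refine ⟨univ.filter fun j => x j ≠ y j, funext fun j => ?_⟩
  cases hx : x j <;> cases hy : y j <;> simp [flip, hx, hy]

/-- Description of a classifier `h` with `h x = 0` and label `1` after flipping coordinate `i`:
necessarily `w · x = b`, so that `h` is expressed by the changes `s`. The numbers of `s j = 1` and
`s j = -1` over all `j` are `w⁺ - b` and `w⁻ + b`; the coordinate `i` itself counts among the
former and is removed. -/
lemma exists_change {d : ℕ} (r : ℝ) (x : Fin d → Bool) (i : Fin d)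
    (h : (Fin d → Bool) → Bool) (hx : h x = false) (hx' : h (flip x {i}) = true)
    (hh : ∃ (b : ℤ) (w : Fin d → ℤ),
      (∀ i : Fin d, w i = -1 ∨ w i = 0 ∨ w i = 1) ∧
      (h = fun x : Fin d → Bool => decide (b < ∑ i : Fin d, w i * (if x i then 1 else 0))) ∧
      (((Finset.univ.filter fun i => w i = 1).card : ℝ) - (b : ℝ) ≤
        r * (((Finset.univ.filter fun i => w i = -1).card : ℝ) + (b : ℝ)) - (d : ℝ) / 8) ∧
      (((Finset.univ.filter fun i => w i = -1).card : ℝ) + (b : ℝ) ≤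
        r * (((Finset.univ.filter fun i => w i = 1).card : ℝ) - (b : ℝ) - 1) - (d : ℝ) / 8)) :
    ∃ s : Fin d → ℤ, (∀ j, s j = -1 ∨ s j = 0 ∨ s j = 1) ∧ s i = 1 ∧
      (∀ S, h (flip x S) = decide (0 < ∑ j ∈ S, s j)) ∧
      8 * (#{j ∈ univ.erase i | s j = 1} : ℝ) + d ≤ 8 * r * #{j ∈ univ.erase i | s j = -1} ∧
      8 * (#{j ∈ univ.erase i | s j = -1} : ℝ) + d ≤ 8 * r * #{j ∈ univ.erase i | s j = 1} := by
  obtain ⟨b, w, hw, rfl, h1, h2⟩ := hh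
  have hs : ∀ j, change x w j = -1 ∨ change x w j = 0 ∨ change x w j = 1 := by
    intro j
    rcases hw j with h | h | h <;> cases hx : x j <;> simp [change, h, hx]
  simp only [decide_eq_false_iff_not, not_lt] at hx
  simp only [sum_flip, sum_singleton, decide_eq_true_eq] at hx'
  have hsi : change x w i = 1 := by have := hs i; omega
  have hb : ∑ j, w j * (if x j then 1 else 0) = b := by omega
  have hup := card_change_one x w hw
  have hdown := card_change_neg_one x w hw
  rw [hb] at hup hdown
  have e1 : #{j ∈ univ.erase i | change x w j = 1} + 1 = #{j | change x w j = 1} := by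
    rw [filter_erase, card_erase_add_one (by simp [hsi])]
  have e2 : #{j ∈ univ.erase i | change x w j = -1} = #{j | change x w j = -1} := by
    rw [filter_erase, erase_eq_of_notMem (by simp [hsi])]
  have e1' : (#{j ∈ univ.erase i | change x w j = 1} : ℝ) + 1 = #{j | w j = 1} - b := by
    rw [← e1] at hup
    exact_mod_cast hup
  have e2' : (#{j ∈ univ.erase i | change x w j = -1} : ℝ) = #{j | w j = -1} + b := by
    rw [← e2] at hdown
    exact_mod_cast hdown
  refine ⟨change x w, hs, hsi, fun S => ?_, ?_, ?_⟩
  · simp only [sum_flip, hb, decide_eq_decide]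
    omega
  · rw [← e1', ← e2'] at h1
    linarith
  · rw [← e1', ← e2'] at h2
    linarith

/-- The edge condition for a single coordinate flip, with the two bounds on the proportion cleared
of denominators. -/
lemma exists_split {d : ℕ} (r : ℝ) (H : Set ((Fin d → Bool) → Bool))
    (hH : ∀ h ∈ H, ∃ (b : ℤ) (w : Fin d → ℤ),
      (∀ i : Fin d, w i = -1 ∨ w i = 0 ∨ w i = 1) ∧
      (h = fun x : Fin d → Bool => decide (b < ∑ i : Fin d, w i * (if x i then 1 else 0))) ∧
      (((Finset.univ.filter fun i => w i = 1).card : ℝ) - (b : ℝ) ≤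
        r * (((Finset.univ.filter fun i => w i = -1).card : ℝ) + (b : ℝ)) - (d : ℝ) / 8) ∧
      (((Finset.univ.filter fun i => w i = -1).card : ℝ) + (b : ℝ) ≤
        r * (((Finset.univ.filter fun i => w i = 1).card : ℝ) - (b : ℝ) - 1) - (d : ℝ) / 8))
    (x : Fin d → Bool) (i : Fin d) (V : Finset ((Fin d → Bool) → Bool))
    (hVH : ∀ h ∈ V, h ∈ H ∧ h x = false ∧ h (flip x {i}) = true) (hV : 2 ≤ #V)
    (K : ℝ) (hK : 16 ≤ K) (hKr : 8 * r ≤ K) :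
    ∃ y, (#V : ℝ) ≤ K * #{h ∈ V | h y = true} ∧ (#V : ℝ) ≤ K * #{h ∈ V | h y = false} := by
  by_contra! hno
  have hrep := fun h (hh : h ∈ V) =>
    exists_change r x i h (hVH h hh).2.1 (hVH h hh).2.2 (hH h (hVH h hh).1)
  choose! s hs hsi hflip hup hdown using hrep
  have hext : ∀ y, K * #{h ∈ V | h y = true} < #V ∨ K * #{h ∈ V | h y = false} < #V := by
    intro y
    by_cases h : (#V : ℝ) ≤ K * #{h ∈ V | h y = true}
    · exact Or.inr (hno y h)
    · exact Or.inl (not_le.1 h)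
  have hJ : (#((univ : Finset (Fin d)).erase i) : ℝ) + 1 = d := by
    have := card_erase_add_one (mem_univ i)
    rw [card_univ, Fintype.card_fin] at this
    exact_mod_cast this
  have hlt : #V < 7 := by
    refine card_lt_of_extreme V s K hK (univ.erase i) (fun S hS => ⟨?_, ?_⟩)
      (fun h hh j _ => hs h hh j) (fun h hh h' hh' heq => ?_) (fun h hh => ?_) (fun h hh => ?_)
    · have := hext (flip x S)
      rwa [filter_congr (p := fun h => h (flip x S) = true) (q := fun h => 0 < ∑ j ∈ S, s h j)
          (fun h hh => by rw [hflip h hh]; simp),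
        filter_congr (p := fun h => h (flip x S) = false) (q := fun h => ∑ j ∈ S, s h j ≤ 0)
          (fun h hh => by rw [hflip h hh]; simp)] at this
    · have hiS : i ∉ S := fun h => by simpa using hS h
      have := (hext (flip x (insert i S))).symm
      rwa [filter_congr (p := fun h => h (flip x (insert i S)) = true)
          (q := fun h => 0 ≤ ∑ j ∈ S, s h j)
          (fun h hh => by
            rw [hflip h hh, sum_insert hiS, hsi h hh, decide_eq_true_eq]; omega),
        filter_congr (p := fun h => h (flip x (insert i S)) = false)
          (q := fun h => ∑ j ∈ S, s h j < 0)
          (fun h hh => by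
            rw [hflip h hh, sum_insert hiS, hsi h hh, decide_eq_false_iff_not]; omega)] at this
    · have hall : s h = s h' := by
        funext j
        by_cases hj : j = i
        · rw [hj, hsi h hh, hsi h' hh']
        · exact heq j (by simpa using hj)
      funext y
      obtain ⟨S, rfl⟩ := flip_surjective x y
      rw [hflip h hh, hflip h' hh', hall]
    · rw [add_assoc, hJ]
      exact (hup h hh).trans (mul_le_mul_of_nonneg_right hKr (by positivity))
    · rw [add_assoc, hJ]
      exact (hdown h hh).trans (mul_le_mul_of_nonneg_right hKr (by positivity))
  obtain ⟨h, hh, h', hh', hne⟩ := one_lt_card.1 hV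
  obtain ⟨y, hy⟩ := Function.ne_iff.1 hne
  have hNlt : (#V : ℝ) < 7 := by exact_mod_cast hlt
  -- With fewer than `K` hypotheses a test separating two of them is a split.
  have h1 : ∀ e : Bool, (1 : ℝ) ≤ #{h ∈ V | h y = e} := by
    intro e
    have : 0 < #{h ∈ V | h y = e} := by
      rw [card_pos]
      by_cases he : h y = e
      · exact ⟨h, by simp [hh, he]⟩
      · exact ⟨h', mem_filter.2 ⟨hh', by
          cases e <;> cases h1 : h y <;> cases h2 : h' y <;> simp_all⟩⟩
    exact_mod_cast this
  have ht := h1 true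
  have hf := h1 false
  rcases hext y with h2 | h2 <;> nlinarith

lemma flip_chain {d : ℕ} (edge : (Fin d → Bool) → (Fin d → Bool) → Prop)
    (hedge : ∀ x i, edge x (flip x {i})) (x : Fin d → Bool) (S : Finset (Fin d)) :
    Relation.ReflTransGen edge x (flip x S) := by
  induction S using Finset.induction_on with
  | empty =>
    have : flip x ∅ = x := by funext j; simp [flip]
    rw [this]
  | insert i S hi ih =>
    refine ih.tail ?_
    have : flip x (insert i S) = flip (flip x S) {i} := by
      funext j
      by_cases hj : j = i
      · subst hj; simp [flip, hi]
      · simp [flip, hj]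
    rw [this]
    exact hedge _ _

end SplitNeighborly

/-- Fix `d ≥ 1` and a real `r ≥ 1`.  Tests are points
`x ∈ {0,1}^d`; hypotheses are discrete linear classifiers `h_{b,w}(x) = 1[w·x > b]`
with `b ∈ ℤ` and `w ∈ {−1,0,1}^d`.  Let `H` be any set of such classifiers where
every `h_{b,w} ∈ H` satisfies `w⁺ − b ≤ r·(w⁻ + b) − d/8` and
`w⁻ + b ≤ r·(w⁺ − b − 1) − d/8`, with `w⁺ = |{i : w i = 1}|` and
`w⁻ = |{i : w i = −1}|`.  Then the problem `(H, X)` is `max(16, 8r)`-split-neighborly: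
the directed graph on `X` with an edge from `x` to `x'` whenever every `V ⊆ Δ(x,x')`
with `|V| ≥ 2` admits a test splitting it with split constant `1/max(16, 8r)` is
strongly connected. -/
theorem discrete_linear_classifier_split_neighborly (d : ℕ) (hd : 1 ≤ d)
    (r : ℝ) (hr : 1 ≤ r)
    (H : Set ((Fin d → Bool) → Bool))
    (hH : ∀ h ∈ H, ∃ (b : ℤ) (w : Fin d → ℤ),
      (∀ i : Fin d, w i = -1 ∨ w i = 0 ∨ w i = 1) ∧
      (h = fun x : Fin d → Bool => decide (b < ∑ i : Fin d, w i * (if x i then 1 else 0))) ∧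
      (((Finset.univ.filter fun i => w i = 1).card : ℝ) - (b : ℝ) ≤
        r * (((Finset.univ.filter fun i => w i = -1).card : ℝ) + (b : ℝ)) - (d : ℝ) / 8) ∧
      (((Finset.univ.filter fun i => w i = -1).card : ℝ) + (b : ℝ) ≤
        r * (((Finset.univ.filter fun i => w i = 1).card : ℝ) - (b : ℝ) - 1) - (d : ℝ) / 8)) :
    let K : ℝ := max 16 (8 * r)
    let Delta : (Fin d → Bool) → (Fin d → Bool) → Set ((Fin d → Bool) → Bool) :=
      fun x x' => {h ∈ H | h x = false ∧ h x' = true}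
    let edge : (Fin d → Bool) → (Fin d → Bool) → Prop := fun x x' =>
      ∀ V : Set ((Fin d → Bool) → Bool), V ⊆ Delta x x' → 2 ≤ V.ncard →
        ∃ x'' : Fin d → Bool,
          1 / K ≤ ({h ∈ V | h x'' = true}.ncard : ℝ) / V.ncard ∧
          ({h ∈ V | h x'' = true}.ncard : ℝ) / V.ncard ≤ 1 - 1 / K
    ∀ x x' : Fin d → Bool, Relation.ReflTransGen edge x x' := by
  intro K Delta edge x x'
  have hK : 16 ≤ K := le_max_left _ _
  have hKr : 8 * r ≤ K := le_max_right _ _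
  obtain ⟨S, rfl⟩ := SplitNeighborly.flip_surjective x x'
  refine SplitNeighborly.flip_chain edge (fun x i V hVD hV => ?_) x S
  classical
  obtain ⟨F, rfl⟩ : ∃ F : Finset ((Fin d → Bool) → Bool), (F : Set _) = V :=
    ⟨V.toFinite.toFinset, by simp⟩
  rw [Set.ncard_coe_finset] at hV ⊢
  obtain ⟨y, h1, h2⟩ := SplitNeighborly.exists_split r H hH x i F
    (fun h hh => hVD hh) hV K hK hKr
  refine ⟨y, ?_⟩
  have hset : {h ∈ (F : Set ((Fin d → Bool) → Bool)) | h y = true} =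
      ((F.filter fun h => h y = true : Finset _) : Set _) := by
    ext h; simp
  rw [hset, Set.ncard_coe_finset]
  have hN : (0 : ℝ) < F.card := by exact_mod_cast (by omega : 0 < F.card)
  have hK0 : 0 < K := by linarith
  have hsum : ((F.filter fun h => h y = true).card : ℝ) +
      (F.filter fun h => h y = false).card = F.card := by
    have := Finset.card_filter_add_card_filter_not (s := F) (fun h => h y = true)
    simp only [Bool.not_eq_true] at this
    exact_mod_cast this
  constructor
  · rw [div_le_div_iff₀ hK0 hN]
    linarith
  · rw [div_le_iff₀ hN, sub_mul, one_mul, ← hsum, div_mul_eq_mul_div, one_mul, hsum]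
    have : (F.card : ℝ) / K ≤ (F.filter fun h => h y = false).card := by
      rw [div_le_iff₀ hK0]
      linarith
    linarith
end
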